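/- Let G be a 2-connected claw-free simple graph of order n. If every endvertex of each induced net of G has degree at least (n-2)/3 in G, then G is hamiltonian. -/

import Mathlib

open SimpleGraph

/-- The net: vertices 0,1,2 form a triangle, and 3,4,5 are pendant vertices
attached to 0,1,2 respectively.  Its endvertices are 3,4,5. -/
def netGraph : SimpleGraph (Fin 6) :=
  SimpleGraph.fromEdgeSet {s(0, 1), s(1, 2), s(0, 2), s(0, 3), s(1, 4), s(2, 5)}

/-- `f` is an induced copy of `G'` in `G`: an injective map which preserves and
reflects adjacency. -/
def IsInducedCopy {W V : Type*} (G' : SimpleGraph W) (G : SimpleGraph V) (f : W → V) : Prop :=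
  Function.Injective f ∧ ∀ a b : W, G'.Adj a b ↔ G.Adj (f a) (f b)

/-- A graph is claw-free if it has no induced subgraph isomorphic to `K_{1,3}`. -/
def ClawFree {V : Type*} (G : SimpleGraph V) : Prop :=
  ¬ ∃ f : (Fin 1 ⊕ Fin 3) → V, IsInducedCopy (completeBipartiteGraph (Fin 1) (Fin 3)) G f

/-- A graph is 2-connected if it has at least 3 vertices and deleting any single
vertex leaves a connected graph. -/
def TwoConnected {V : Type*} [Fintype V] (G : SimpleGraph V) : Prop :=
  3 ≤ Fintype.card V ∧ ∀ v : V, (G.induce {w | w ≠ v}).Connected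

/-!
If `G` is not hamiltonian, repeated local completion in the manner of Ryjáček's closure yields a
claw-free supergraph without induced diamonds that is still not hamiltonian. Such a graph is the
line graph of a triangle-free graph `H`. A spider in `H`, three legs of length two at a common
centre, gives three pendant vertices in a connected claw-free part of `G`, hence an induced net
whose endvertices have disjoint closed neighbourhoods there; the degree condition then bounds the
number of edges of `H` that miss the spider. For a cycle of `H` meeting as many edges as possible,
this bound forces every component of the rest to be attached to the cycle at a single vertex.
Going round the cycle and, recursively, round each component lists all edges of `H` cyclically
with consecutive edges sharing an endpoint: a hamiltonian cycle of the line graph.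
-/

/-- `WalkOn G a b m`: some walk of `G` from `a` to `b` has `m` as its multiset of visited vertices.
Splicing and reversing walks only adds such multisets, so that the question whether a rearranged
walk is still spanning is one of commutative-monoid arithmetic. -/
def WalkOn {V : Type*} (G : SimpleGraph V) (a b : V) (m : Multiset V) : Prop :=
  ∃ p : G.Walk a b, (p.support : Multiset V) = m

namespace WalkOn

variable {V : Type*} {G : SimpleGraph V} {a b c d x : V} {m m' : Multiset V}

theorem nil (a : V) : WalkOn G a a {a} := ⟨.nil, rfl⟩

theorem append (h : WalkOn G a b m) (hbc : G.Adj b c) (h' : WalkOn G c d m') :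
    WalkOn G a d (m + m') := by
  obtain ⟨p, rfl⟩ := h
  obtain ⟨q, rfl⟩ := h'
  exact ⟨p.append (.cons hbc q), by simp [Walk.support_append]⟩

theorem cons (hab : G.Adj a b) (h : WalkOn G b c m) : WalkOn G a c ({a} + m) :=
  (nil a).append hab h

theorem concat (h : WalkOn G a b m) (hbc : G.Adj b c) : WalkOn G a c (m + {c}) :=
  h.append hbc (nil c)

theorem reverse (h : WalkOn G a b m) : WalkOn G b a m := by
  obtain ⟨p, rfl⟩ := h
  exact ⟨p.reverse, by simp⟩

theorem left_mem (h : WalkOn G a b m) : a ∈ m := by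
  obtain ⟨p, rfl⟩ := h
  simp

theorem right_mem (h : WalkOn G a b m) : b ∈ m := h.reverse.left_mem

theorem exists_split (h : WalkOn G a b m) (hx : x ∈ m) : ∃ m₁ m₂, m = m₁ + {x} + m₂ ∧
    (m₁ = 0 ∧ x = a ∨ ∃ p, WalkOn G a p m₁ ∧ G.Adj p x) ∧
    (m₂ = 0 ∧ x = b ∨ ∃ q, G.Adj x q ∧ WalkOn G q b m₂) := by
  obtain ⟨p, rfl⟩ := h
  induction p with
  | nil =>
    obtain rfl : x = _ := by simpa using hx
    exact ⟨0, 0, by simp, .inl ⟨rfl, rfl⟩, .inl ⟨rfl, rfl⟩⟩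
  | @cons a c b hac p ih =>
    rcases List.mem_cons.1 (Multiset.mem_coe.1 hx) with rfl | hxp
    · exact ⟨0, p.support, by simp, .inl ⟨rfl, rfl⟩, .inr ⟨c, hac, p, rfl⟩⟩
    obtain ⟨m₁, m₂, hm, hl, hr⟩ := ih (Multiset.mem_coe.2 hxp)
    refine ⟨{a} + m₁, m₂, ?_, .inr ?_, hr⟩
    · rw [Walk.support_cons, ← Multiset.cons_coe, hm, ← Multiset.singleton_add]
      simp only [add_assoc]
    · rcases hl with ⟨rfl, rfl⟩ | ⟨q, hq, hqx⟩
      · exact ⟨a, by simpa using nil a, hac⟩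
      · exact ⟨q, hq.cons hac, hqx⟩

theorem exists_split_of_ne (h : WalkOn G a b m) (hx : x ∈ m) (hxa : x ≠ a) (hxb : x ≠ b) :
    ∃ m₁ m₂ p q, m = m₁ + {x} + m₂ ∧ WalkOn G a p m₁ ∧ G.Adj p x ∧ G.Adj x q ∧ WalkOn G q b m₂ := by
  obtain ⟨m₁, m₂, hm, ⟨-, h'⟩ | ⟨p, hp, hpx⟩, hr⟩ := h.exists_split hx
  · exact absurd h' hxa
  obtain ⟨-, h'⟩ | ⟨q, hxq, hq⟩ := hr
  · exact absurd h' hxb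
  exact ⟨m₁, m₂, p, q, hm, hp, hpx, hxq, hq⟩

end WalkOn

/-- `G` has a spanning path whose two ends are adjacent: a hamiltonian cycle, or the single edge
when `G` has two vertices. -/
def HasSpanningCycle {V : Type*} [Fintype V] (G : SimpleGraph V) : Prop :=
  ∃ a b, G.Adj a b ∧ WalkOn G a b Finset.univ.val

section SpanningCycle

variable {V : Type*} [Fintype V] {G : SimpleGraph V} {a b p q : V} {m m' k : Multiset V}

theorem WalkOn.hasSpanningCycle (h : WalkOn G a b m) (hm : m = Finset.univ.val)
    (hba : G.Adj b a) : HasSpanningCycle G :=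
  ⟨a, b, hba.symm, hm ▸ h⟩

theorem HasSpanningCycle.isHamiltonian [DecidableEq V] (h3 : 3 ≤ Fintype.card V)
    (h : HasSpanningCycle G) : G.IsHamiltonian := by
  intro _
  obtain ⟨a, b, hab, p, hp⟩ := h
  have hp_path : p.IsPath := Walk.IsPath.mk' <| by
    rw [← Multiset.coe_nodup, hp]
    exact Finset.univ.nodup
  have hp_mem (v : V) : v ∈ p.support := by
    rw [← Multiset.mem_coe, hp]
    exact Finset.mem_univ v
  have hp_ham := hp_path.isHamiltonian_of_mem hp_mem
  refine ⟨b, .cons hab.symm p,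
    Walk.isHamiltonianCycle_iff_isCycle_and_support_count_tail_eq_one.2 ⟨?_, hp_ham⟩⟩
  refine (Walk.cons_isCycle_iff ..).2 ⟨hp_path, fun hba ↦ ?_⟩
  have := hp_path.length_eq_one_of_mem_edges (Sym2.eq_swap ▸ hba)
  have := hp_ham.length_support
  rw [Walk.length_support] at this
  omega

theorem ne_of_add_eq_univ (hU : m + m' + k = Finset.univ.val) (hp : p ∈ m) (hq : q ∈ m') :
    p ≠ q := by
  have hnd : (m + m' + k).Nodup := hU ▸ Finset.univ.nodup
  have hdisj := (Multiset.nodup_add.1 (Multiset.nodup_add.1 hnd).1).2.2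
  rintro rfl
  exact Multiset.disjoint_left.1 hdisj hp hq

theorem exists_append_cons_of_mem_edges {V : Type*} {G : SimpleGraph V} {u v : V} {p : G.Walk u v}
    {e : Sym2 V} (he : e ∈ p.edges) : ∃ (c d : V) (p₁ : G.Walk u c) (hcd : G.Adj c d)
      (p₂ : G.Walk d v), e = s(c, d) ∧ p = p₁.append (.cons hcd p₂) := by
  induction p with
  | nil => simp at he
  | @cons u w v huw p ih =>
    rcases List.mem_cons.1 he with rfl | he
    · exact ⟨u, w, .nil, huw, p, rfl, rfl⟩
    obtain ⟨c, d, p₁, hcd, p₂, rfl, rfl⟩ := ih he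
    exact ⟨c, d, .cons huw p₁, hcd, p₂, rfl, rfl⟩

theorem WalkOn.of_hasSpanningCycle_sup_edge (h3 : 3 ≤ Fintype.card V)
    (hn : ¬ HasSpanningCycle G) (h : HasSpanningCycle (G ⊔ edge a b)) :
    WalkOn G a b Finset.univ.val := by
  obtain ⟨u, v, huv, p, hp⟩ := h
  have hp_path : p.IsPath := Walk.IsPath.mk' <| by
    rw [← Multiset.coe_nodup, hp]
    exact Finset.univ.nodup
  have hlen : p.length + 1 = Fintype.card V := by
    rw [← Walk.length_support, ← Multiset.coe_card, hp, Finset.card_val, Finset.card_univ]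
  have adj_or {c d : V} (hcd : (G ⊔ edge a b).Adj c d) : G.Adj c d ∨ s(c, d) = s(a, b) := by
    rw [sup_adj, edge_adj] at hcd
    grind
  have of_edges {c d : V} {q : (G ⊔ edge a b).Walk c d} (hq : s(a, b) ∉ q.edges) :
      WalkOn G c d q.support :=
    ⟨q.transfer G fun e he ↦ by
      induction e with | _ c' d' =>
      exact (adj_or (q.adj_of_mem_edges he)).resolve_right fun h ↦ hq (h ▸ he), by simp⟩
  have of_ends {c d : V} (hw : WalkOn G c d Finset.univ.val) (hcd : s(c, d) = s(a, b)) :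
      WalkOn G a b Finset.univ.val := by
    rcases Sym2.eq_iff.1 hcd with ⟨rfl, rfl⟩ | ⟨rfl, rfl⟩
    exacts [hw, hw.reverse]
  by_cases hab : s(a, b) ∈ p.edges
  · obtain ⟨c, d, p₁, hcd, p₂, heq, rfl⟩ := exists_append_cons_of_mem_edges hab
    have hnd := hp_path.isTrail.edges_nodup
    rw [Walk.edges_append, Walk.edges_cons, ← heq, List.nodup_middle, List.nodup_cons,
      List.mem_append, not_or] at hnd
    rcases adj_or huv with h | h
    · refine of_ends (c := c) (d := d) ?_ heq.symm
      convert (of_edges hnd.1.1).reverse.append h (of_edges hnd.1.2).reverse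
      rw [← hp]
      simp [Walk.support_append]
    · have := hp_path.length_eq_one_of_mem_edges (h ▸ hab)
      omega
  · have hw : WalkOn G u v Finset.univ.val := hp ▸ of_edges hab
    exact (adj_or huv).elim (fun h ↦ (hn ⟨u, v, h, hw⟩).elim) (of_ends hw)

end SpanningCycle

section ClawsAndNets

variable {V : Type*} {G : SimpleGraph V} {a b c a' b' c' : V}

theorem clawFree_iff : ClawFree G ↔ ∀ ⦃c x y z : V⦄, G.Adj c x → G.Adj c y → G.Adj c z →
    x ≠ y → x ≠ z → y ≠ z → G.Adj x y ∨ G.Adj x z ∨ G.Adj y z := by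
  refine ⟨fun h c x y z hx hy hz hxy hxz hyz ↦ ?_, ?_⟩
  · by_contra! hind
    obtain ⟨hxy', hxz', hyz'⟩ := hind
    refine h ⟨Sum.elim (fun _ ↦ c) ![x, y, z], ?_, ?_⟩
    · have := hx.ne
      have := hy.ne
      have := hz.ne
      rintro (i | i) (j | j) hij <;> fin_cases i <;> fin_cases j <;> simp_all
    · rintro (i | i) (j | j) <;> fin_cases i <;> fin_cases j <;> simp_all [G.adj_comm]
  · rintro h ⟨f, hf, hadj⟩
    have := h (c := f (.inl 0)) (x := f (.inr 0)) (y := f (.inr 1)) (z := f (.inr 2))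
      ((hadj _ _).1 (by simp)) ((hadj _ _).1 (by simp)) ((hadj _ _).1 (by simp))
      (hf.ne (by simp)) (hf.ne (by simp)) (hf.ne (by simp))
    simp [← hadj] at this

theorem ClawFree.adj_or_adj_or_adj (h : ClawFree G) {c x y z : V} (hx : G.Adj c x) (hy : G.Adj c y)
    (hz : G.Adj c z) (hxy : x ≠ y) (hxz : x ≠ z) (hyz : y ≠ z) :
    G.Adj x y ∨ G.Adj x z ∨ G.Adj y z :=
  clawFree_iff.1 h hx hy hz hxy hxz hyz

/-- The triangle `a b c` together with the pendant edges `aa'`, `bb'`, `cc'` is an induced net. -/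
structure IsInducedNet (G : SimpleGraph V) (a b c a' b' c' : V) : Prop where
  adj_ab : G.Adj a b
  adj_bc : G.Adj b c
  adj_ac : G.Adj a c
  adj_a : G.Adj a a'
  adj_b : G.Adj b b'
  adj_c : G.Adj c c'
  not_adj_ab' : ¬ G.Adj a b'
  not_adj_ac' : ¬ G.Adj a c'
  not_adj_ba' : ¬ G.Adj b a'
  not_adj_bc' : ¬ G.Adj b c'
  not_adj_ca' : ¬ G.Adj c a'
  not_adj_cb' : ¬ G.Adj c b'
  not_adj_a'b' : ¬ G.Adj a' b'
  not_adj_a'c' : ¬ G.Adj a' c'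
  not_adj_b'c' : ¬ G.Adj b' c'

theorem IsInducedNet.isInducedCopy (h : IsInducedNet G a b c a' b' c') :
    IsInducedCopy netGraph G ![a, b, c, a', b', c'] := by
  have hadj (i j : Fin 6) : netGraph.Adj i j ↔
      G.Adj (![a, b, c, a', b', c'] i) (![a, b, c, a', b', c'] j) := by
    have := h.adj_ab
    cases h
    fin_cases i <;> fin_cases j <;> simp_all [netGraph, G.adj_comm]
  have eq_of_nbrs : ∀ i j : Fin 6, (∀ k, netGraph.Adj k i ↔ netGraph.Adj k j) → i = j := by
    simp only [netGraph, fromEdgeSet_adj]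
    decide
  exact ⟨fun i j hij ↦ eq_of_nbrs i j fun k ↦ by rw [hadj, hadj, hij], hadj⟩

/-- Every endvertex of every induced net of `G` satisfies `Q`. -/
def NetEndsSatisfy (G : SimpleGraph V) (Q : V → Prop) : Prop :=
  ∀ ⦃a b c a' b' c' : V⦄, IsInducedNet G a b c a' b' c' → Q a' ∧ Q b' ∧ Q c'

theorem netEndsSatisfy_of_isInducedCopy {Q : V → Prop}
    (h : ∀ f : Fin 6 → V, IsInducedCopy netGraph G f → ∀ i : Fin 6, 3 ≤ (i : ℕ) → Q (f i)) :
    NetEndsSatisfy G Q := fun _ _ _ _ _ _ hN ↦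
  ⟨h _ hN.isInducedCopy 3 (by decide), h _ hN.isInducedCopy 4 (by decide),
    h _ hN.isInducedCopy 5 (by decide)⟩

end ClawsAndNets

section TameVertices

variable {V : Type*} {G : SimpleGraph V} {a b x y : V} {Z : Set V}

/-- `x` is a common neighbour of `a` and `b`, and each of its neighbours outside `Z` coincides with
or is adjacent to `a` or `b`. Tame vertices are those around which a spanning path from `a` to `b`
can be rerouted. -/
structure IsTame (G : SimpleGraph V) (a b : V) (Z : Set V) (x : V) : Prop where
  adj_left : G.Adj x a
  adj_right : G.Adj x b
  near : ∀ z, G.Adj x z → z ∈ Z ∨ z = a ∨ z = b ∨ G.Adj z a ∨ G.Adj z b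

theorem IsTame.symm (hx : IsTame G a b Z x) : IsTame G b a Z x where
  adj_left := hx.adj_right
  adj_right := hx.adj_left
  near z hz := by grind [hx.near z hz]

theorem IsTame.near_of_empty (hx : IsTame G a b ∅ x) {z : V} (hz : G.Adj x z) :
    z = a ∨ z = b ∨ G.Adj z a ∨ G.Adj z b :=
  (hx.near z hz).resolve_left (Set.notMem_empty z)

variable [Fintype V] {p q r s t u y₁ y₂ : V} {m₁ m₂ m₃ m₄ : Multiset V}

theorem hasSpanningCycle_of_crossing (h₁ : WalkOn G a p m₁) (h₂ : WalkOn G q b m₂)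
    (hU : m₁ + m₂ = Finset.univ.val) (hpb : G.Adj p b) (hqa : G.Adj q a) : HasSpanningCycle G :=
  (h₁.append hpb h₂.reverse).hasSpanningCycle hU hqa

theorem hasSpanningCycle_of_adj_of_crossing (h₁ : WalkOn G a p m₁) (hpx : G.Adj p x)
    (h₂ : WalkOn G q r m₂) (hys : G.Adj y s) (h₃ : WalkOn G s b m₃)
    (hU : m₁ + {x} + m₂ + {y} + m₃ = Finset.univ.val) (hxy : G.Adj x y) (hqb : G.Adj q b)
    (hra : G.Adj r a) : HasSpanningCycle G := by
  have hwalk := (((WalkOn.nil x).concat hxy).append hys h₃).append hqb.symm h₂ |>.append hra h₁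
  exact hwalk.hasSpanningCycle (by rw [← hU]; abel) hpx

theorem adj_right_of_near (hn : ¬ HasSpanningCycle G) (h₁ : WalkOn G a x m₁)
    (h₂ : WalkOn G q r m₂) (hrs : G.Adj r s) (h₃ : WalkOn G s b m₃)
    (hU : m₁ + m₂ + m₃ = Finset.univ.val) (hxb : G.Adj x b)
    (hq : q = a ∨ q = b ∨ G.Adj q a ∨ G.Adj q b) : G.Adj q b := by
  rcases hq with h | h | h | h
  · exact absurd h.symm (ne_of_add_eq_univ hU h₁.left_mem h₂.left_mem)
  · exact absurd h (ne_of_add_eq_univ (k := m₁) (by rw [← hU]; abel) h₂.left_mem h₃.right_mem)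
  · exact absurd (hasSpanningCycle_of_crossing h₁ (h₂.append hrs h₃) (by rw [← hU]; abel) hxb h) hn
  · exact h

theorem adj_left_of_near (hn : ¬ HasSpanningCycle G) (h₁ : WalkOn G a s m₁) (hsq : G.Adj s q)
    (h₂ : WalkOn G q r m₂) (h₃ : WalkOn G y b m₃) (hU : m₁ + m₂ + m₃ = Finset.univ.val)
    (hya : G.Adj y a) (hr : r = a ∨ r = b ∨ G.Adj r a ∨ G.Adj r b) : G.Adj r a :=
  adj_right_of_near hn h₃.reverse h₂.reverse hsq.symm h₁.reverse (by rw [← hU]; abel) hya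
    (by grind)

theorem exists_split_tail_of_isTame (hn : ¬ HasSpanningCycle G) (h₁ : WalkOn G a x m₁)
    (h₂ : WalkOn G q b m₂) (hU : m₁ + m₂ = Finset.univ.val) (hxb : G.Adj x b)
    (hy : IsTame G a b Z y) (hym : y ∈ m₂) : ∃ k₁ k₂ r s, m₂ = k₁ + {y} + k₂ ∧
      WalkOn G q r k₁ ∧ G.Adj r y ∧ G.Adj y s ∧ WalkOn G s b k₂ := by
  refine h₂.exists_split_of_ne hym ?_ hy.adj_right.ne
  rintro rfl
  exact hn (hasSpanningCycle_of_crossing h₁ h₂ hU hxb hy.adj_left)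

theorem exists_split_of_isTame (h : WalkOn G a b Finset.univ.val) (hx : IsTame G a b Z x) :
    ∃ m₁ m₂ p q, m₁ + {x} + m₂ = Finset.univ.val ∧ WalkOn G a p m₁ ∧ G.Adj p x ∧ G.Adj x q ∧
      WalkOn G q b m₂ := by
  obtain ⟨m₁, m₂, p, q, hm, hsplit⟩ :=
    h.exists_split_of_ne (Finset.mem_univ x) hx.adj_left.ne hx.adj_right.ne
  exact ⟨m₁, m₂, p, q, hm.symm, hsplit⟩

theorem not_mem_tail_of_isTame_of_adj (hn : ¬ HasSpanningCycle G) (hx : IsTame G a b ∅ x)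
    (hy : IsTame G a b ∅ y) (hxy : G.Adj x y) (h₁ : WalkOn G a p m₁) (hpx : G.Adj p x)
    (hxq : G.Adj x q) (h₂ : WalkOn G q b m₂) (hU : m₁ + {x} + m₂ = Finset.univ.val) : y ∉ m₂ := by
  intro hym
  have hax := h₁.concat hpx
  obtain ⟨k₁, k₂, r, s, rfl, hqr, hry, hys, hsb⟩ :=
    exists_split_tail_of_isTame hn hax h₂ hU hx.adj_right hy hym
  have hyb := hsb.cons hys
  have hqb := adj_right_of_near hn hax hqr hry hyb (by rw [← hU]; abel) hx.adj_right
    (hx.near_of_empty hxq)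
  have hra := adj_left_of_near hn hax hxq hqr hyb (by rw [← hU]; abel) hy.adj_left
    (hy.near_of_empty hry.symm)
  exact hn (hasSpanningCycle_of_adj_of_crossing h₁ hpx hqr hys hsb (by rw [← hU]; abel) hxy hqb hra)

theorem hasSpanningCycle_of_two_isTame (h : WalkOn G a b Finset.univ.val)
    (hx : IsTame G a b ∅ x) (hy : IsTame G a b ∅ y) (hxy : G.Adj x y) : HasSpanningCycle G := by
  by_contra hn
  obtain ⟨m₁, m₂, p, q, hU, hap, hpx, hxq, hqb⟩ := exists_split_of_isTame h hx
  have hy₂ := not_mem_tail_of_isTame_of_adj hn hx hy hxy hap hpx hxq hqb hU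
  have hy₁ := not_mem_tail_of_isTame_of_adj hn hx.symm hy.symm hxy hqb.reverse hxq.symm hpx.symm
    hap.reverse (by rw [← hU]; abel)
  have hym : y ∈ m₁ + {x} + m₂ := hU ▸ Finset.mem_univ y
  simp only [Multiset.mem_add, Multiset.mem_singleton, hy₁, hy₂, hxy.ne', or_self] at hym

theorem hasSpanningCycle_of_order_xyy (hx : IsTame G a b ∅ x) (hy₁ : IsTame G a b Z y₁)
    (hy₂ : IsTame G a b Z y₂) (hxy₁ : G.Adj x y₁) (hxy₂ : G.Adj x y₂) (hZ : G.IsClique Z)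
    (h₁ : WalkOn G a p m₁) (hpx : G.Adj p x) (hxq : G.Adj x q) (h₂ : WalkOn G q r m₂)
    (hry₁ : G.Adj r y₁) (hy₁s : G.Adj y₁ s) (h₃ : WalkOn G s t m₃) (hty₂ : G.Adj t y₂)
    (hy₂u : G.Adj y₂ u) (h₄ : WalkOn G u b m₄)
    (hU : m₁ + {x} + m₂ + {y₁} + m₃ + {y₂} + m₄ = Finset.univ.val) : HasSpanningCycle G := by
  by_contra hn
  have hax := h₁.concat hpx
  have hay₁ := (hax.append hxq h₂).concat hry₁
  have hy₂b := h₄.cons hy₂u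
  have hsb := h₃.append hty₂ hy₂b
  have hqb : G.Adj q b := adj_right_of_near hn hax h₂ hry₁ (hsb.cons hy₁s) (by rw [← hU]; abel)
    hx.adj_right (hx.near_of_empty hxq)
  have hrZ : r ∈ Z := (hy₁.near r hry₁.symm).resolve_right fun hr ↦ hn <| by
    have hra := adj_left_of_near hn hax hxq h₂ (hsb.cons hy₁s) (by rw [← hU]; abel) hy₁.adj_left hr
    exact hasSpanningCycle_of_adj_of_crossing h₁ hpx h₂ hy₁s hsb (by rw [← hU]; abel) hxy₁ hqb hra
  have htZ : t ∈ Z := (hy₂.near t hty₂.symm).resolve_right fun ht ↦ hn <| by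
    have hta := adj_left_of_near hn hay₁ hy₁s h₃ hy₂b (by rw [← hU]; abel) hy₂.adj_left ht
    exact hasSpanningCycle_of_adj_of_crossing h₁ hpx ((h₂.concat hry₁).append hy₁s h₃) hy₂u h₄
      (by rw [← hU]; abel) hxy₂ hqb hta
  have hrt : r ≠ t := ne_of_add_eq_univ (k := m₁ + {x} + {y₁} + {y₂} + m₄) (by rw [← hU]; abel)
    h₂.right_mem h₃.right_mem
  have hwalk := ((((hax.append hxq h₂).append (hZ hrZ htZ hrt) h₃.reverse).concat hy₁s.symm).append
    hy₁.adj_right h₄.reverse).concat hy₂u.symm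
  exact hn (hwalk.hasSpanningCycle (by rw [← hU]; abel) hy₂.adj_left)

theorem hasSpanningCycle_of_order_yxy (hx : IsTame G a b ∅ x) (hy₁ : IsTame G a b Z y₁)
    (hy₂ : IsTame G a b Z y₂) (hxy₁ : G.Adj x y₁) (hxy₂ : G.Adj x y₂)
    (hZ₁ : ∀ z ∈ Z, G.Adj y₁ z) (hZ₂ : ∀ z ∈ Z, G.Adj y₂ z)
    (h₁ : WalkOn G a p m₁) (hpy₁ : G.Adj p y₁) (hy₁q : G.Adj y₁ q) (h₂ : WalkOn G q r m₂)
    (hrx : G.Adj r x) (hxs : G.Adj x s) (h₃ : WalkOn G s t m₃) (hty₂ : G.Adj t y₂)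
    (hy₂u : G.Adj y₂ u) (h₄ : WalkOn G u b m₄)
    (hU : m₁ + {y₁} + m₂ + {x} + m₃ + {y₂} + m₄ = Finset.univ.val) : HasSpanningCycle G := by
  by_contra hn
  have hay₁ := h₁.concat hpy₁
  have har := hay₁.append hy₁q h₂
  have hax := har.concat hrx
  have hy₂b := h₄.cons hy₂u
  have hsb := h₃.append hty₂ hy₂b
  have hxb := hsb.cons hxs
  have hra : G.Adj r a := adj_left_of_near hn hay₁ hy₁q h₂ hxb (by rw [← hU]; abel) hx.adj_left
    (hx.near_of_empty hrx.symm)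
  have hsb' : G.Adj s b := adj_right_of_near hn hax h₃ hty₂ hy₂b (by rw [← hU]; abel) hx.adj_right
    (hx.near_of_empty hxs)
  have hqZ : q ∈ Z := (hy₁.near q hy₁q).resolve_right fun hq ↦ hn <| by
    have hqb := adj_right_of_near hn hay₁ h₂ hrx hxb (by rw [← hU]; abel) hy₁.adj_right hq
    exact hasSpanningCycle_of_adj_of_crossing h₁ hpy₁ h₂ hxs hsb (by rw [← hU]; abel) hxy₁.symm
      hqb hra
  have htZ : t ∈ Z := (hy₂.near t hty₂.symm).resolve_right fun ht ↦ hn <| by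
    have hta := adj_left_of_near hn hax hxs h₃ hy₂b (by rw [← hU]; abel) hy₂.adj_left ht
    exact hasSpanningCycle_of_adj_of_crossing har hrx h₃ hy₂u h₄ hU hxy₂ hsb' hta
  have hwalk := ((((hay₁.append (hZ₁ t htZ) h₃.reverse).append hsb' h₄.reverse).concat
    hy₂u.symm).append (hZ₂ q hqZ) h₂).concat hrx
  exact hn (hwalk.hasSpanningCycle (by rw [← hU]; abel) hx.adj_left)

theorem not_both_mem_tail_of_isTame (hn : ¬ HasSpanningCycle G) (hx : IsTame G a b ∅ x)
    (hy₁ : IsTame G a b Z y₁) (hy₂ : IsTame G a b Z y₂) (hxy₁ : G.Adj x y₁) (hxy₂ : G.Adj x y₂)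
    (hy₁₂ : G.Adj y₁ y₂) (hZ : G.IsClique Z) (h₁ : WalkOn G a p m₁) (hpx : G.Adj p x)
    (hxq : G.Adj x q) (h₂ : WalkOn G q b m₂) (hU : m₁ + {x} + m₂ = Finset.univ.val) :
    ¬ (y₁ ∈ m₂ ∧ y₂ ∈ m₂) := by
  rintro ⟨hy₁m, hy₂m⟩
  have hax := h₁.concat hpx
  obtain ⟨k₁, k₂, r, s, rfl, hqr, hry₁, hy₁s, hsb⟩ :=
    exists_split_tail_of_isTame hn hax h₂ hU hx.adj_right hy₁ hy₁m
  simp only [Multiset.mem_add, Multiset.mem_singleton, hy₁₂.ne', or_false] at hy₂m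
  rcases hy₂m with hy₂m | hy₂m
  · have hy₂q : y₂ ≠ q := by
      rintro rfl
      exact hn (hasSpanningCycle_of_crossing hax h₂ hU hx.adj_right hy₂.adj_left)
    have hy₂r : y₂ ≠ r := by
      rintro rfl
      exact hn (hasSpanningCycle_of_crossing (hax.append hxq hqr) (hsb.cons hy₁s)
        (by rw [← hU]; abel) hy₂.adj_right hy₁.adj_left)
    obtain ⟨k₃, k₄, t, u, rfl, hqt, hty₂, hy₂u, hur⟩ := hqr.exists_split_of_ne hy₂m hy₂q hy₂r
    exact hn (hasSpanningCycle_of_order_xyy hx hy₂ hy₁ hxy₂ hxy₁ hZ h₁ hpx hxq hqt hty₂ hy₂u hur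
      hry₁ hy₁s hsb (by rw [← hU]; abel))
  · obtain ⟨k₃, k₄, t, u, rfl, hst, hty₂, hy₂u, hub⟩ :=
      exists_split_tail_of_isTame hn ((hax.append hxq hqr).concat hry₁) hsb (by rw [← hU]; abel)
        hy₁.adj_right hy₂ hy₂m
    exact hn (hasSpanningCycle_of_order_xyy hx hy₁ hy₂ hxy₁ hxy₂ hZ h₁ hpx hxq hqr hry₁ hy₁s hst
      hty₂ hy₂u hub (by rw [← hU]; abel))

theorem not_mem_head_and_mem_tail_of_isTame (hn : ¬ HasSpanningCycle G) (hx : IsTame G a b ∅ x)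
    (hy₁ : IsTame G a b Z y₁) (hy₂ : IsTame G a b Z y₂) (hxy₁ : G.Adj x y₁) (hxy₂ : G.Adj x y₂)
    (hZ₁ : ∀ z ∈ Z, G.Adj y₁ z) (hZ₂ : ∀ z ∈ Z, G.Adj y₂ z)
    (h₁ : WalkOn G a p m₁) (hpx : G.Adj p x) (hxq : G.Adj x q) (h₂ : WalkOn G q b m₂)
    (hU : m₁ + {x} + m₂ = Finset.univ.val) : ¬ (y₁ ∈ m₁ ∧ y₂ ∈ m₂) := by
  rintro ⟨hy₁m, hy₂m⟩
  obtain ⟨k₁, k₂, r, s, rfl, hqr, hry₂, hy₂s, hsb⟩ :=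
    exists_split_tail_of_isTame hn (h₁.concat hpx) h₂ hU hx.adj_right hy₂ hy₂m
  obtain ⟨k₃, k₄, t, u, rfl, hpt, hty₁, hy₁u, hua⟩ :=
    exists_split_tail_of_isTame hn (h₂.cons hxq).reverse h₁.reverse (by rw [← hU]; abel)
      hx.adj_left hy₁.symm hy₁m
  exact hn (hasSpanningCycle_of_order_yxy hx hy₁ hy₂ hxy₁ hxy₂ hZ₁ hZ₂ hua.reverse hy₁u.symm
    hty₁.symm hpt.reverse hpx hxq hqr hry₂ hy₂s hsb (by rw [← hU]; abel))

theorem hasSpanningCycle_of_three_isTame (h : WalkOn G a b Finset.univ.val)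
    (hx : IsTame G a b ∅ x) (hy₁ : IsTame G a b Z y₁) (hy₂ : IsTame G a b Z y₂)
    (hxy₁ : G.Adj x y₁) (hxy₂ : G.Adj x y₂) (hy₁₂ : G.Adj y₁ y₂) (hZ : G.IsClique Z)
    (hZ₁ : ∀ z ∈ Z, G.Adj y₁ z) (hZ₂ : ∀ z ∈ Z, G.Adj y₂ z) : HasSpanningCycle G := by
  by_contra hn
  obtain ⟨m₁, m₂, p, q, hU, hap, hpx, hxq, hqb⟩ := exists_split_of_isTame h hx
  have htail := not_both_mem_tail_of_isTame hn hx hy₁ hy₂ hxy₁ hxy₂ hy₁₂ hZ hap hpx hxq hqb hU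
  have hhead := not_both_mem_tail_of_isTame hn hx.symm hy₁.symm hy₂.symm hxy₁ hxy₂ hy₁₂ hZ
    hqb.reverse hxq.symm hpx.symm hap.reverse (by rw [← hU]; abel)
  have h₁₂ := not_mem_head_and_mem_tail_of_isTame hn hx hy₁ hy₂ hxy₁ hxy₂ hZ₁ hZ₂ hap hpx hxq hqb hU
  have h₂₁ := not_mem_head_and_mem_tail_of_isTame hn hx hy₂ hy₁ hxy₂ hxy₁ hZ₂ hZ₁ hap hpx hxq hqb hU
  have hm {y : V} (hxy : G.Adj x y) : y ∈ m₁ ∨ y ∈ m₂ := by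
    have : y ∈ m₁ + {x} + m₂ := hU ▸ Finset.mem_univ y
    simpa only [Multiset.mem_add, Multiset.mem_singleton, hxy.ne', or_false] using this
  grind [hm hxy₁, hm hxy₂]

end TameVertices

section Completion

variable {V : Type*} {L M : SimpleGraph V} {x y z a b c d : V}

/-- The local completion of `L` at `x`: the graph obtained by turning the neighbourhood of `x` into
a clique. -/
def completion (L : SimpleGraph V) (x : V) : SimpleGraph V :=
  L ⊔ fromRel fun u v ↦ L.Adj x u ∧ L.Adj x v

theorem completion_adj : (completion L x).Adj a b ↔
    L.Adj a b ∨ a ≠ b ∧ L.Adj x a ∧ L.Adj x b := by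
  simp only [completion, sup_adj, fromRel_adj]
  tauto

theorem le_completion : L ≤ completion L x := le_sup_left

theorem ClawFree.adj_of_completion_claw (hL : ClawFree L) (ha : (completion L x).Adj z a)
    (hb : (completion L x).Adj z b) (hc : (completion L x).Adj z c) (hbc : b ≠ c)
    (hab' : ¬ (completion L x).Adj a b) (hac' : ¬ (completion L x).Adj a c)
    (hbc' : ¬ (completion L x).Adj b c) (hab : a ≠ b) (hac : a ≠ c) : L.Adj z a := by
  rw [completion_adj] at ha hb hc hab' hac' hbc'
  by_contra hza
  have hx : L.Adj x z ∧ L.Adj x a := by tauto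
  have hxb : x ≠ b := by
    rintro rfl
    exact hab' (.inl hx.2.symm)
  have hxc : x ≠ c := by
    rintro rfl
    exact hac' (.inl hx.2.symm)
  have := hL.adj_or_adj_or_adj hx.1.symm (y := b) (z := c) (by tauto) (by tauto) hxb hxc hbc
  tauto

theorem ClawFree.completion (hL : ClawFree L) (x : V) : ClawFree (completion L x) := by
  refine clawFree_iff.2 fun z a b c ha hb hc hab hac hbc ↦ ?_
  by_contra! hcon
  obtain ⟨hab', hac', hbc'⟩ := hcon
  have hza := hL.adj_of_completion_claw ha hb hc hbc hab' hac' hbc' hab hac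
  have hzb := hL.adj_of_completion_claw hb ha hc hac (by rwa [adj_comm]) hbc' hac' hab.symm hbc
  have hzc := hL.adj_of_completion_claw hc ha hb hab (by rwa [adj_comm]) (by rwa [adj_comm]) hab'
    hac.symm hbc.symm
  rcases hL.adj_or_adj_or_adj hza hzb hzc hab hac hbc with h | h | h
  exacts [hab' (le_completion h), hac' (le_completion h), hbc' (le_completion h)]

theorem ClawFree.near_of_adj (hL : ClawFree L) (ha : L.Adj x a) (hb : L.Adj x b) (hab : a ≠ b)
    (hnab : ¬ L.Adj a b) (hz : L.Adj x z) : z = a ∨ z = b ∨ L.Adj z a ∨ L.Adj z b := by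
  by_contra! hcon
  obtain ⟨hza, hzb, hza', hzb'⟩ := hcon
  rcases hL.adj_or_adj_or_adj hz ha hb hza hzb hab with h | h | h <;> contradiction

/-- If the neighbourhood of `x` falls apart into the closed neighbourhoods of `a` and of `b`, then
the vertex `y`, adjacent to the two ends of the missing edge `cd`, provides a link between them. -/
theorem ClawFree.exists_link (hL : ClawFree L) (ha : L.Adj x a) (hb : L.Adj x b) (hab : a ≠ b)
    (hnab : ¬ L.Adj a b) (hcommon : ∀ y, L.Adj x y → L.Adj y a → ¬ L.Adj y b) (hy : L.Adj x y)
    (hc : L.Adj x c) (hd : L.Adj x d) (hyc : L.Adj y c) (hyd : L.Adj y d) (hcd : c ≠ d)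
    (hncd : ¬ L.Adj c d) :
    ∃ u v, L.Adj x u ∧ L.Adj x v ∧ L.Adj u a ∧ L.Adj v b ∧ L.Adj u v := by
  have hclique_a {u v : V} (hu : L.Adj x u) (hv : L.Adj x v) (huv : u ≠ v) (hua : L.Adj u a)
      (hva : L.Adj v a) : L.Adj u v := by
    rcases hL.adj_or_adj_or_adj hu hv hb huv (by grind [adj_comm]) (by grind [adj_comm])
      with h | h | h
    exacts [h, absurd h (hcommon u hu hua), absurd h (hcommon v hv hva)]
  have hclique_b {u v : V} (hu : L.Adj x u) (hv : L.Adj x v) (huv : u ≠ v) (hub : L.Adj u b)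
      (hvb : L.Adj v b) : L.Adj u v := by
    rcases hL.adj_or_adj_or_adj hu hv ha huv (by grind [adj_comm]) (by grind [adj_comm])
      with h | h | h
    exacts [h, absurd hub (hcommon u hu h), absurd hvb (hcommon v hv h)]
  have hy' := hL.near_of_adj ha hb hab hnab hy
  have hc' := hL.near_of_adj ha hb hab hnab hc
  have hd' := hL.near_of_adj ha hb hab hnab hd
  have := hclique_a hc hd hcd
  have := hclique_b hc hd hcd
  have := hcommon c hc
  have := hcommon d hd
  by_contra! hno
  have := hno y c hy hc
  have := hno y d hy hd
  have := hno c y hc hy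
  have := hno d y hd hy
  grind [adj_comm]

theorem isTame_of_le_completion (hL : ClawFree L) (hLM : L ≤ M) (hM : M ≤ completion L x)
    (ha : L.Adj x a) (hb : L.Adj x b) (hab : a ≠ b) (hnab : ¬ L.Adj a b) {Z : Set V}
    (hya : M.Adj y a) (hyb : M.Adj y b) (hy : ∀ z, L.Adj y z → ¬ L.Adj x z →
      z ∈ Z ∨ z = a ∨ z = b ∨ L.Adj z a ∨ L.Adj z b) : IsTame M a b Z y := by
  refine ⟨hya, hyb, fun z hyz ↦ ?_⟩
  have hz : z ∈ Z ∨ z = a ∨ z = b ∨ L.Adj z a ∨ L.Adj z b := by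
    by_cases hxz : L.Adj x z
    · exact .inr (hL.near_of_adj ha hb hab hnab hxz)
    · exact hy z ((completion_adj.1 (hM hyz)).resolve_right fun h ↦ hxz h.2.2) hxz
  exact hz.imp_right (.imp_right (.imp_right (.imp (hLM ·) (hLM ·))))

theorem isTame_center (hL : ClawFree L) (hLM : L ≤ M) (hM : M ≤ completion L x)
    (ha : L.Adj x a) (hb : L.Adj x b) (hab : a ≠ b) (hnab : ¬ L.Adj a b) : IsTame M a b ∅ x :=
  isTame_of_le_completion hL hLM hM ha hb hab hnab (hLM ha) (hLM hb) fun _ h h' ↦ absurd h h'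

variable [Fintype V]

theorem walkOn_of_maximal (h3 : 3 ≤ Fintype.card V)
    (hM : Maximal (fun M ↦ M ≤ completion L x ∧ ¬ HasSpanningCycle M) M)
    (ha : L.Adj x a) (hb : L.Adj x b) (hab : a ≠ b) (hnab : ¬ M.Adj a b) :
    WalkOn M a b Finset.univ.val := by
  refine .of_hasSpanningCycle_sup_edge h3 hM.prop.2 ?_
  by_contra hcycle
  have hedge : edge a b ≤ completion L x :=
    (edge_le_iff _).2 <| .inr <| completion_adj.2 (.inr ⟨hab, ha, hb⟩)
  have hle := hM.le_of_ge ⟨sup_le hM.prop.1 hedge, hcycle⟩ le_sup_left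
  exact hnab (hle (.inr (by simp [edge_adj, hab])))

theorem adj_of_common_neighbor (h3 : 3 ≤ Fintype.card V) (hL : ClawFree L) (hLM : L ≤ M)
    (hM : Maximal (fun M ↦ M ≤ completion L x ∧ ¬ HasSpanningCycle M) M)
    (ha : L.Adj x a) (hb : L.Adj x b) (hab : a ≠ b) (hy : L.Adj x y) (hya : L.Adj y a)
    (hyb : L.Adj y b) : M.Adj a b := by
  by_contra hMab
  have hnab : ¬ L.Adj a b := fun h ↦ hMab (hLM h)
  refine hM.prop.2 (hasSpanningCycle_of_two_isTame (walkOn_of_maximal h3 hM ha hb hab hMab)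
    (isTame_center hL hLM hM.prop.1 ha hb hab hnab) ?_ (hLM hy))
  exact isTame_of_le_completion hL hLM hM.prop.1 ha hb hab hnab (hLM hya) (hLM hyb)
    fun z hyz _ ↦ .inr (hL.near_of_adj hya hyb hab hnab hyz)

theorem adj_of_link {u v : V} (h3 : 3 ≤ Fintype.card V) (hL : ClawFree L) (hLM : L ≤ M)
    (hM : Maximal (fun M ↦ M ≤ completion L x ∧ ¬ HasSpanningCycle M) M)
    (ha : L.Adj x a) (hb : L.Adj x b) (hab : a ≠ b) (hu : L.Adj x u) (hv : L.Adj x v)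
    (hua : L.Adj u a) (hvb : L.Adj v b) (huv : L.Adj u v) : M.Adj a b := by
  by_contra hMab
  have hnab : ¬ L.Adj a b := fun h ↦ hMab (hLM h)
  have hcommon {y : V} (hy : L.Adj x y) (hya : L.Adj y a) : ¬ L.Adj y b :=
    fun hyb ↦ hMab (adj_of_common_neighbor h3 hL hLM hM ha hb hab hy hya hyb)
  have hub : u ≠ b := by
    rintro rfl
    exact hnab hua.symm
  have hva : v ≠ a := by
    rintro rfl
    exact hnab hvb
  have hMub := adj_of_common_neighbor h3 hL hLM hM hu hb hub hv huv.symm hvb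
  have hMva := adj_of_common_neighbor h3 hL hLM hM hv ha hva hu huv hua
  let Z : Set V := {z | L.Adj u z ∧ L.Adj v z ∧ ¬ L.Adj x z ∧ ¬ L.Adj z a}
  have hZ : M.IsClique Z := by
    rintro z ⟨huz, -, hxz, hza⟩ z' ⟨huz', -, hxz', hza'⟩ hzz'
    rcases hL.adj_or_adj_or_adj huz huz' hua hzz' (by grind) (by grind) with h | h | h
    exacts [hLM h, absurd h hza, absurd h hza']
  have hu_tame : IsTame M a b Z u := by
    refine isTame_of_le_completion hL hLM hM.prop.1 ha hb hab hnab (hLM hua) hMub ?_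
    intro z huz hxz
    have := hL.adj_or_adj_or_adj huz hua huv (by grind) (by grind) hva.symm
    grind [adj_comm]
  have hv_tame : IsTame M a b Z v := by
    refine isTame_of_le_completion hL hLM hM.prop.1 ha hb hab hnab hMva (hLM hvb) ?_
    intro z hvz hxz
    have := hL.adj_or_adj_or_adj hvz hvb huv.symm (by grind) (by grind) hub.symm
    grind [adj_comm]
  exact hM.prop.2 <| hasSpanningCycle_of_three_isTame (walkOn_of_maximal h3 hM ha hb hab hMab)
    (isTame_center hL hLM hM.prop.1 ha hb hab hnab) hu_tame hv_tame (hLM hu) (hLM hv) (hLM huv) hZ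
    (fun z hz ↦ hLM hz.1) (fun z hz ↦ hLM hz.2.1)

theorem not_hasSpanningCycle_completion (h3 : 3 ≤ Fintype.card V) (hL : ClawFree L)
    (hn : ¬ HasSpanningCycle L) (hy : L.Adj x y) (hc : L.Adj x c) (hd : L.Adj x d)
    (hyc : L.Adj y c) (hyd : L.Adj y d) (hcd : c ≠ d) (hncd : ¬ L.Adj c d) :
    ¬ HasSpanningCycle (completion L x) := by
  intro hham
  obtain ⟨M, hLM, hM⟩ := (Set.toFinite {M | M ≤ completion L x ∧
    ¬ HasSpanningCycle M}).exists_le_maximal (a := L) ⟨le_completion, hn⟩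
  have hadj {a b : V} (hab : a ≠ b) (ha : L.Adj x a) (hb : L.Adj x b) : M.Adj a b := by
    by_contra hMab
    obtain ⟨u, v, hu, hv, hua, hvb, huv⟩ := hL.exists_link ha hb hab (fun h ↦ hMab (hLM h))
      (fun y hy hya hyb ↦ hMab (adj_of_common_neighbor h3 hL hLM hM ha hb hab hy hya hyb))
      hy hc hd hyc hyd hcd hncd
    exact hMab (adj_of_link h3 hL hLM hM ha hb hab hu hv hua hvb huv)
  have hle : completion L x ≤ M := fun a b hab ↦
    (completion_adj.1 hab).elim (hLM ·) fun h ↦ hadj h.1 h.2.1 h.2.2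
  exact hM.prop.2 (hle.antisymm hM.prop.1 ▸ hham)

end Completion

section Closure

variable {V : Type*} {G L : SimpleGraph V}

/-- No two adjacent vertices have two distinct nonadjacent common neighbours. -/
def DiamondFree (L : SimpleGraph V) : Prop :=
  ∀ ⦃x b c d : V⦄, L.Adj x b → L.Adj x c → L.Adj x d → L.Adj b c → L.Adj b d → c ≠ d → L.Adj c d

/-- Every edge of `L` lies in a clique of `L` that induces a connected subgraph of `G`. This
property of a supergraph `L` of `G` survives local completions. -/
def EdgesInConnectedCliques (G L : SimpleGraph V) : Prop :=
  ∀ ⦃a b : V⦄, L.Adj a b →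
    ∃ S : Set V, a ∈ S ∧ b ∈ S ∧ L.IsClique S ∧ (G.induce S).Preconnected

theorem EdgesInConnectedCliques.refl (G : SimpleGraph V) : EdgesInConnectedCliques G G :=
  fun a b hab ↦ ⟨{a, b}, by simp, by simp, isClique_pair.2 fun _ ↦ hab,
    (induce_pair_connected_of_adj hab).preconnected⟩

theorem EdgesInConnectedCliques.completion (h : EdgesInConnectedCliques G L) (x : V) :
    EdgesInConnectedCliques G (completion L x) := by
  intro a b hab
  rcases completion_adj.1 hab with hab | ⟨-, hxa, hxb⟩
  · obtain ⟨S, haS, hbS, hS, hGS⟩ := h hab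
    exact ⟨S, haS, hbS, hS.mono le_completion, hGS⟩
  obtain ⟨S, hxS, haS, hS, hGS⟩ := h hxa
  obtain ⟨T, hxT, hbT, hT, hGT⟩ := h hxb
  refine ⟨S ∪ T, .inl haS, .inr hbT, ?_,
    (induce_union_connected hGS hGT ⟨x, hxS, hxT⟩).preconnected⟩
  have hadj {u : V} (hu : u ∈ S ∪ T) (hux : u ≠ x) : L.Adj x u :=
    hu.elim (hS hxS · hux.symm) (hT hxT · hux.symm)
  intro u hu v hv huv
  rw [completion_adj]
  by_cases hux : u = x
  · exact .inl (hux ▸ hadj hv (hux ▸ huv.symm))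
  by_cases hvx : v = x
  · exact .inl (hvx ▸ (hadj hu hux).symm)
  exact .inr ⟨huv, hadj hu hux, hadj hv hvx⟩

theorem exists_diamondFree_closure [Fintype V] (h3 : 3 ≤ Fintype.card V) (hG : ClawFree G)
    (hn : ¬ HasSpanningCycle G) : ∃ L, G ≤ L ∧ ClawFree L ∧ ¬ HasSpanningCycle L ∧
      EdgesInConnectedCliques G L ∧ DiamondFree L := by
  obtain ⟨L, hGL, hL⟩ := (Set.toFinite {L : SimpleGraph V | ClawFree L ∧ ¬ HasSpanningCycle L ∧
    EdgesInConnectedCliques G L}).exists_le_maximal (a := G) ⟨hG, hn, .refl G⟩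
  obtain ⟨hclaw, hLn, hconn⟩ := hL.prop
  refine ⟨L, hGL, hclaw, hLn, hconn, fun x b c d hxb hxc hxd hbc hbd hcd ↦ ?_⟩
  by_contra hncd
  have hle := hL.le_of_ge ⟨hclaw.completion x, not_hasSpanningCycle_completion h3 hclaw hLn hxb hxc
    hxd hbc hbd hcd hncd, hconn.completion x⟩ le_completion
  exact hncd (hle (completion_adj.2 (.inr ⟨hcd, hxc, hxd⟩)))

end Closure

section Geodesics

variable {W : Type*} {H : SimpleGraph W} {S : Set W} {u v : W} {p : ℕ → W} {n i j : ℕ}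

/-- The closed neighbourhood of `a` in `G`. -/
def closedNbhd (G : SimpleGraph W) (a : W) : Set W := {v | v = a ∨ G.Adj a v}

/-- The distance in `H` from the set `S` to `v`. -/
noncomputable def setDist (H : SimpleGraph W) (S : Set W) (v : W) : ℕ :=
  sInf ((H.dist · v) '' S)

theorem setDist_le_dist (hu : u ∈ S) : setDist H S v ≤ H.dist u v := Nat.sInf_le ⟨u, hu, rfl⟩

theorem exists_dist_eq_setDist (H : SimpleGraph W) (hS : S.Nonempty) (v : W) :
    ∃ s ∈ S, H.dist s v = setDist H S v := Nat.sInf_mem (hS.image _)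

theorem setDist_le_add_one_of_adj (S : Set W) (huv : H.Adj u v) :
    setDist H S v ≤ setDist H S u + 1 := by
  rcases S.eq_empty_or_nonempty with rfl | hS
  · simp [setDist]
  obtain ⟨s, hs, hsu⟩ := exists_dist_eq_setDist H hS u
  have := setDist_le_dist (H := H) (v := v) hs
  have := huv.diff_dist_adj (u := s)
  omega

theorem setDist_eq_zero_of_mem (H : SimpleGraph W) (hv : v ∈ S) : setDist H S v = 0 := by
  simpa using setDist_le_dist (H := H) (v := v) hv

theorem setDist_eq_zero_iff (hH : H.Connected) (hS : S.Nonempty) :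
    setDist H S v = 0 ↔ v ∈ S := by
  refine ⟨fun h ↦ ?_, setDist_eq_zero_of_mem H⟩
  obtain ⟨s, hs, hsv⟩ := exists_dist_eq_setDist H hS v
  exact hH.dist_eq_zero_iff.1 (hsv.trans h) ▸ hs

theorem setDist_le_add_one_of_mem_closedNbhd (S : Set W) (h : v ∈ closedNbhd H u) :
    setDist H S v ≤ setDist H S u + 1 ∧ setDist H S u ≤ setDist H S v + 1 := by
  rcases h with rfl | h
  · simp
  · exact ⟨setDist_le_add_one_of_adj S h, setDist_le_add_one_of_adj S h.symm⟩

theorem disjoint_closedNbhd_of_setDist (h : setDist H S u + 3 ≤ setDist H S v) :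
    Disjoint (closedNbhd H u) (closedNbhd H v) :=
  Set.disjoint_left.2 fun z hu hv ↦ by
    have := setDist_le_add_one_of_mem_closedNbhd S hu
    have := setDist_le_add_one_of_mem_closedNbhd S hv
    omega

theorem exists_adj_of_setDist_eq_one (h : setDist H S v = 1) : ∃ s ∈ S, H.Adj v s := by
  have hS : S.Nonempty := Set.nonempty_iff_ne_empty.2 fun hS ↦ by simp [setDist, hS] at h
  obtain ⟨s, hs, hsv⟩ := exists_dist_eq_setDist H hS v
  exact ⟨s, hs, (dist_eq_one_iff_adj.1 (hsv.trans h)).symm⟩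

theorem not_adj_of_mem (hu : u ∈ S) (hv : 2 ≤ setDist H S v) : ¬ H.Adj u v := fun h ↦ by
  have := setDist_le_add_one_of_adj S h
  rw [setDist_eq_zero_of_mem H hu] at this
  omega

/-- `p 0, …, p n` is a shortest path from the set `S` to the vertex `p n`. -/
structure IsGeodesicFrom (H : SimpleGraph W) (S : Set W) (n : ℕ) (p : ℕ → W) : Prop where
  setDist_eq : ∀ ⦃i⦄, i ≤ n → setDist H S (p i) = i
  adj : ∀ ⦃i⦄, i < n → H.Adj (p i) (p (i + 1))

theorem exists_isGeodesicFrom (hH : H.Connected) (hS : S.Nonempty) (v : W) :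
    ∃ p, IsGeodesicFrom H S (setDist H S v) p ∧ p (setDist H S v) = v := by
  obtain ⟨s, hs, hsv⟩ := exists_dist_eq_setDist H hS v
  obtain ⟨w, hw⟩ := hH.exists_walk_length_eq_dist s v
  rw [hsv] at hw
  refine ⟨w.getVert, ⟨fun i hi ↦ le_antisymm ?_ ?_, fun i hi ↦
    w.adj_getVert_succ (hw ▸ hi)⟩, hw ▸ w.getVert_length⟩
  · exact (setDist_le_dist hs).trans ((dist_le (w.take i)).trans (by simp [Walk.take_length]))
  · obtain ⟨t, ht, hti⟩ := exists_dist_eq_setDist H hS (w.getVert i)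
    have := hH.dist_triangle (u := t) (v := w.getVert i) (w := v)
    have := setDist_le_dist (H := H) (v := v) ht
    have := dist_le (w.drop i)
    rw [Walk.drop_length] at this
    omega

namespace IsGeodesicFrom

theorem zero_mem (hp : IsGeodesicFrom H S n p) (hH : H.Connected) (hS : S.Nonempty) : p 0 ∈ S :=
  (setDist_eq_zero_iff hH hS).1 (hp.setDist_eq n.zero_le)

theorem ne (hp : IsGeodesicFrom H S n p) (hij : i < j) (hj : j ≤ n) : p i ≠ p j := fun h ↦ by
  have hi := hp.setDist_eq (hij.le.trans hj)
  rw [h, hp.setDist_eq hj] at hi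
  omega

theorem not_adj (hp : IsGeodesicFrom H S n p) (hij : i + 2 ≤ j) (hj : j ≤ n) :
    ¬ H.Adj (p i) (p j) := fun h ↦ by
  have := setDist_le_add_one_of_adj S h
  rw [hp.setDist_eq hj, hp.setDist_eq (by omega)] at this
  omega

theorem adj_pred (hp : IsGeodesicFrom H S n p) (hi : 0 < i) (hin : i ≤ n) :
    H.Adj (p i) (p (i - 1)) := by
  have := hp.adj (i := i - 1) (by omega)
  rw [Nat.sub_add_cancel hi] at this
  exact this.symm

theorem not_pendant (hp : IsGeodesicFrom H S n p) (hi : 0 < i) (hin : i < n) :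
    ¬ (H.neighborSet (p i)).Subsingleton := fun h ↦
  hp.ne (i := i - 1) (j := i + 1) (by omega) hin (h (hp.adj_pred hi hin.le) (hp.adj hin))

end IsGeodesicFrom

/-- The vertex `e` lies in the closed neighbourhood of `g` or has two nonadjacent nonpendant
neighbours. -/
def NearOrBranching (H : SimpleGraph W) (g e : W) : Prop :=
  e ∈ closedNbhd H g ∨ ∃ u v, H.Adj e u ∧ H.Adj e v ∧ u ≠ v ∧ ¬ H.Adj u v ∧
    ¬ (H.neighborSet u).Subsingleton ∧ ¬ (H.neighborSet v).Subsingleton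

namespace IsGeodesicFrom

theorem branching (hp : IsGeodesicFrom H S n p) (hi : 2 ≤ i) (hin : i + 2 ≤ n) (g : W) :
    NearOrBranching H g (p i) :=
  .inr ⟨p (i - 1), p (i + 1), hp.adj_pred (by omega) (by omega), hp.adj (by omega),
    hp.ne (by omega) (by omega), hp.not_adj (by omega) (by omega),
    hp.not_pendant (by omega) (by omega), hp.not_pendant (by omega) (by omega)⟩

theorem nearOrBranching_last (hp : IsGeodesicFrom H S n p) (hi : 2 ≤ i) (hin : i ≤ n) :
    NearOrBranching H (p n) (p i) := by
  obtain rfl | rfl | hin : i = n ∨ n = i + 1 ∨ i + 2 ≤ n := by omega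
  · exact .inl (.inl rfl)
  · exact .inl (.inr (hp.adj (by omega)).symm)
  · exact hp.branching hi hin _

theorem nearOrBranching_zero (hp : IsGeodesicFrom H S n p) (hin : i + 2 ≤ n) :
    NearOrBranching H (p 0) (p i) := by
  obtain rfl | rfl | hi : i = 0 ∨ i = 1 ∨ 2 ≤ i := by omega
  · exact .inl (.inl rfl)
  · exact .inl (.inr (hp.adj (by omega)))
  · exact hp.branching hi hin _

theorem exists_adj_succ (hp : IsGeodesicFrom H S n p) (hcl : ClawFree H) (hn : 0 < n)
    (h0 : (H.neighborSet (p 0)).Subsingleton) (hpn : (H.neighborSet (p n)).Subsingleton) {y : W}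
    (hy : ∀ j ≤ n, p j ≠ y) (hex : ∃ j, j ≤ n ∧ H.Adj y (p j)) :
    ∃ i, i + 3 ≤ n ∧ H.Adj y (p (i + 1)) ∧ H.Adj y (p (i + 2)) ∧
      ∀ j, j ≤ n → H.Adj y (p j) → i < j := by
  classical
  obtain ⟨hi, hyi⟩ := Nat.find_spec hex
  have hmin {j} (hj : j < Nat.find hex) (hyj : H.Adj y (p j)) : False :=
    Nat.find_min hex hj ⟨by omega, hyj⟩
  generalize Nat.find hex = i at hi hyi hmin
  have hy0 (h : H.Adj y (p 0)) : False := hy _ hn (h0 (hp.adj hn) h.symm)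
  have hyn (h : H.Adj y (p n)) : False :=
    hy _ (Nat.sub_le n 1) (hpn (hp.adj_pred hn le_rfl) h.symm)
  have hi0 : 0 < i := Nat.pos_of_ne_zero fun h ↦ hy0 (h ▸ hyi)
  have hin : i < n := lt_of_le_of_ne hi fun h ↦ hyn (h ▸ hyi)
  have hyi' : H.Adj y (p (i + 1)) := by
    rcases hcl.adj_or_adj_or_adj (hp.adj_pred hi0 hi) (hp.adj hin) hyi.symm
      (hp.ne (by omega) hin) (hy _ (by omega)) (hy _ hin) with h | h | h
    · exact absurd h (hp.not_adj (by omega) hin)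
    · exact (hmin (by omega) h.symm).elim
    · exact h.symm
  have hin' : i + 1 < n := lt_of_le_of_ne hin fun h ↦ hyn (h ▸ hyi')
  obtain ⟨i, rfl⟩ := Nat.exists_eq_add_of_lt hi0
  simp only [zero_add] at *
  refine ⟨i, by omega, hyi, hyi', fun j _ hyj ↦ ?_⟩
  by_contra! hij
  exact hmin (by omega) hyj

theorem exists_forall_adj_iff (hp : IsGeodesicFrom H S n p) (hcl : ClawFree H) (hn : 0 < n)
    (h0 : (H.neighborSet (p 0)).Subsingleton) (hpn : (H.neighborSet (p n)).Subsingleton)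
    {y y' : W} (hyy' : H.Adj y y') (hy : setDist H (p '' Set.Iic n) y = 1)
    (hy' : setDist H (p '' Set.Iic n) y' = 2) :
    ∃ i, i + 3 ≤ n ∧ ∀ j ≤ n, H.Adj y (p j) ↔ j = i + 1 ∨ j = i + 2 := by
  have hmem {j} (hj : j ≤ n) : p j ∈ p '' Set.Iic n := Set.mem_image_of_mem p hj
  have hne {z k} (hz : setDist H (p '' Set.Iic n) z = k) (hk : k ≠ 0) (j) (hj : j ≤ n) :
      p j ≠ z := by
    rintro rfl
    exact hk (hz.symm.trans (setDist_eq_zero_of_mem H (hmem hj)))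
  have hy'p {j} (hj : j ≤ n) : ¬ H.Adj (p j) y' := not_adj_of_mem (hmem hj) hy'.ge
  obtain ⟨_, ⟨j, hj, rfl⟩, hyj⟩ := exists_adj_of_setDist_eq_one hy
  obtain ⟨i, hin, hy₁, hy₂, hi⟩ :=
    hp.exists_adj_succ hcl hn h0 hpn (hne hy one_ne_zero) ⟨j, hj, hyj⟩
  refine ⟨i, hin, fun j hj ↦ ⟨fun hyj ↦ ?_, ?_⟩⟩
  · by_contra hij
    have := hi j hj hyj
    rcases hcl.adj_or_adj_or_adj hy₁ hyj hyy' (hp.ne (by omega) hj)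
      (hne hy' two_ne_zero _ (by omega)) (hne hy' two_ne_zero _ hj) with h | h | h
    · exact hp.not_adj (by omega) hj h
    · exact hy'p (by omega) h
    · exact hy'p hj h
  · rintro (rfl | rfl)
    exacts [hy₁, hy₂]

end IsGeodesicFrom

end Geodesics

section PendantPaths

variable {W : Type*} {H : SimpleGraph W} {p c : ℕ → W} {E F i j : ℕ}

/-- A shortest path `p 0, …, p E` between two pendant vertices, and a shortest path `c 0, …, c F`
from the first path to a third pendant vertex at distance at least `2` from it. -/
structure IsPendantTripod (H : SimpleGraph W) (E F : ℕ) (p c : ℕ → W) : Prop where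
  geodesic_p : IsGeodesicFrom H {p 0} E p
  geodesic_c : IsGeodesicFrom H (p '' Set.Iic E) F c
  pendant_p_zero : (H.neighborSet (p 0)).Subsingleton
  pendant_p_last : (H.neighborSet (p E)).Subsingleton
  pendant_c_last : (H.neighborSet (c F)).Subsingleton
  pos : 0 < E
  two_le : 2 ≤ F

theorem exists_isPendantTripod (hH : H.Connected) (hcl : ClawFree H) {g₁ g₂ g₃ : W}
    (hg₁ : (H.neighborSet g₁).Subsingleton) (hg₂ : (H.neighborSet g₂).Subsingleton)
    (hg₃ : (H.neighborSet g₃).Subsingleton) (h₁₂ : g₁ ≠ g₂) (h₁₃ : g₁ ≠ g₃) (h₂₃ : g₂ ≠ g₃)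
    (hn₁₃ : ¬ H.Adj g₁ g₃) (hn₂₃ : ¬ H.Adj g₂ g₃) :
    ∃ E F p c, IsPendantTripod H E F p c ∧ p 0 = g₁ ∧ p E = g₂ ∧ c F = g₃ := by
  obtain ⟨p, hp, hpE⟩ := exists_isGeodesicFrom hH (Set.singleton_nonempty g₁) g₂
  have hp0 : p 0 = g₁ := hp.zero_mem hH (Set.singleton_nonempty g₁)
  have hS : (p '' Set.Iic (setDist H {g₁} g₂)).Nonempty := ⟨p 0, 0, Nat.zero_le _, rfl⟩
  obtain ⟨c, hc, hcF⟩ := exists_isGeodesicFrom hH hS g₃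
  generalize setDist H {g₁} g₂ = E at *
  generalize setDist H (p '' Set.Iic E) g₃ = F at *
  obtain ⟨k, hk, hkc⟩ := hc.zero_mem hH hS
  have hpos : 0 < E := Nat.pos_of_ne_zero fun h ↦ h₁₂ (by rw [← hp0, ← hpE, h])
  have hpg {j} (hj : j ≤ E) : p j ≠ g₃ := by
    intro h
    by_cases hj0 : j = 0
    · exact h₁₃ (by rw [← hp0, ← h, hj0])
    by_cases hjE : j = E
    · exact h₂₃ (by rw [← hpE, ← h, hjE])
    exact hp.not_pendant (by omega) (by omega) (h ▸ hg₃)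
  have hF0 : F ≠ 0 := fun h ↦ hpg hk (by rw [hkc, ← hcF, h])
  have hF1 : F ≠ 1 := by
    rintro rfl
    have hkg : H.Adj (p k) g₃ := by simpa [← hkc, hcF] using hc.adj one_pos
    by_cases hk0 : k = 0
    · exact hn₁₃ (by rwa [hk0, hp0] at hkg)
    by_cases hkE : k = E
    · exact hn₂₃ (by rwa [hkE, hpE] at hkg)
    have hk : k < E := lt_of_le_of_ne hk hkE
    rcases hcl.adj_or_adj_or_adj (hp.adj_pred (by omega) hk.le) (hp.adj hk) hkg
      (hp.ne (by omega) hk) (hpg (by omega)) (hpg hk) with h | h | h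
    · exact hp.not_adj (by omega) hk h
    · exact hp.ne (by omega) hk.le (hg₃ h.symm hkg.symm)
    · exact hp.ne (by omega) hk (hg₃ hkg.symm h.symm)
  subst hp0 hpE hcF
  exact ⟨E, F, p, c, ⟨hp, hc, hg₁, hg₂, hg₃, hpos, by omega⟩, rfl, rfl, rfl⟩

namespace IsPendantTripod

theorem setDist_p (p : ℕ → W) (hj : j ≤ E) : setDist H (p '' Set.Iic E) (p j) = 0 :=
  setDist_eq_zero_of_mem H (Set.mem_image_of_mem p hj)

theorem not_adj_p_c (h : IsPendantTripod H E F p c) (hj : j ≤ E) (hi : 2 ≤ i) (hiF : i ≤ F) :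
    ¬ H.Adj (p j) (c i) :=
  not_adj_of_mem (Set.mem_image_of_mem p hj) (h.geodesic_c.setDist_eq hiF ▸ hi)

theorem not_adj_c_p (h : IsPendantTripod H E F p c) (hj : j ≤ E) (hi : 2 ≤ i) (hiF : i ≤ F) :
    ¬ H.Adj (c i) (p j) := fun hcp ↦ h.not_adj_p_c hj hi hiF hcp.symm

theorem exists_forall_adj_iff (h : IsPendantTripod H E F p c) (hcl : ClawFree H) {z : W}
    (hz : H.Adj z (c 2)) (hz1 : setDist H (p '' Set.Iic E) z = 1) :
    ∃ i, i + 3 ≤ E ∧ ∀ j ≤ E, H.Adj z (p j) ↔ j = i + 1 ∨ j = i + 2 :=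
  h.geodesic_p.exists_forall_adj_iff hcl h.pos h.pendant_p_zero h.pendant_p_last hz hz1
    (h.geodesic_c.setDist_eq h.two_le)

theorem isInducedNet (h : IsPendantTripod H E F p c) (hi : i + 3 ≤ E)
    (hc : ∀ j ≤ E, H.Adj (c 1) (p j) ↔ j = i + 1 ∨ j = i + 2) :
    IsInducedNet H (p (i + 1)) (p (i + 2)) (c 1) (p i) (p (i + 3)) (c 2) where
  adj_ab := h.geodesic_p.adj (by omega)
  adj_bc := ((hc _ (by omega)).2 (by omega)).symm
  adj_ac := ((hc _ (by omega)).2 (by omega)).symm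
  adj_a := (h.geodesic_p.adj (by omega)).symm
  adj_b := h.geodesic_p.adj (by omega)
  adj_c := h.geodesic_c.adj h.two_le
  not_adj_ab' := h.geodesic_p.not_adj (by omega) hi
  not_adj_ac' := h.not_adj_p_c (by omega) le_rfl h.two_le
  not_adj_ba' hba := h.geodesic_p.not_adj (by omega) (by omega) hba.symm
  not_adj_bc' := h.not_adj_p_c (by omega) le_rfl h.two_le
  not_adj_ca' := (hc _ (by omega)).not.2 (by omega)
  not_adj_cb' := (hc _ hi).not.2 (by omega)
  not_adj_a'b' := h.geodesic_p.not_adj (by omega) hi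
  not_adj_a'c' := h.not_adj_p_c (by omega) le_rfl h.two_le
  not_adj_b'c' := h.not_adj_p_c hi le_rfl h.two_le

theorem isInducedNet_of_adj (h : IsPendantTripod H E F p c) (hF : 3 ≤ F) {z : W} {k l : ℕ}
    (hk : k ≤ E) (hl : l ≤ E) (hkl : k + 2 ≤ l ∨ l + 2 ≤ k) (hz₁ : H.Adj (c 1) z)
    (hz₂ : H.Adj z (c 2)) (hz₃ : ¬ H.Adj z (c 3)) (hck : H.Adj (c 1) (p k))
    (hcl : ¬ H.Adj (c 1) (p l)) (hzl : H.Adj z (p l)) (hzk : ¬ H.Adj z (p k)) :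
    IsInducedNet H (c 1) (c 2) z (p k) (c 3) (p l) where
  adj_ab := h.geodesic_c.adj (by omega)
  adj_bc := hz₂.symm
  adj_ac := hz₁
  adj_a := hck
  adj_b := h.geodesic_c.adj (by omega)
  adj_c := hzl
  not_adj_ab' := h.geodesic_c.not_adj (by omega) hF
  not_adj_ac' := hcl
  not_adj_ba' := h.not_adj_c_p hk le_rfl h.two_le
  not_adj_bc' := h.not_adj_c_p hl le_rfl h.two_le
  not_adj_ca' := hzk
  not_adj_cb' := hz₃
  not_adj_a'b' := h.not_adj_p_c hk (by omega) hF
  not_adj_a'c' hpp := hkl.elim (h.geodesic_p.not_adj · hl hpp)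
    (h.geodesic_p.not_adj · hk hpp.symm)
  not_adj_b'c' := h.not_adj_c_p hl (by omega) hF

theorem adj_and_not_adj_of_setDist_eq_one (h : IsPendantTripod H E F p c) (hcl : ClawFree H) {z : W}
    (hz : H.Adj z (c 2)) (hz1 : setDist H (p '' Set.Iic E) z = 1) (hne : z ≠ c 1) :
    3 ≤ F ∧ H.Adj (c 1) z ∧ ¬ H.Adj z (c 3) := by
  have hF : 3 ≤ F := by
    by_contra! hF
    obtain rfl : F = 2 := le_antisymm (by omega) h.two_le
    exact hne (h.pendant_c_last hz.symm (h.geodesic_c.adj one_lt_two).symm)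
  have hz₃ : ¬ H.Adj z (c 3) := fun hz₃ ↦ by
    have := setDist_le_add_one_of_adj (p '' Set.Iic E) hz₃
    rw [hz1, h.geodesic_c.setDist_eq hF] at this
    omega
  have hne₃ : z ≠ c 3 := by
    rintro rfl
    rw [h.geodesic_c.setDist_eq hF] at hz1
    omega
  refine ⟨hF, ?_, hz₃⟩
  have hn₁₃ := h.geodesic_c.not_adj le_rfl hF
  rcases hcl.adj_or_adj_or_adj (h.geodesic_c.adj h.two_le).symm hz.symm
    (h.geodesic_c.adj hF) hne.symm (h.geodesic_c.ne (by omega) hF) hne₃ with h | h | h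
  exacts [h, absurd h hn₁₃, absurd h hz₃]

theorem exists_isInducedNet_of_adj (h : IsPendantTripod H E F p c) (hclaw : ClawFree H) {l : ℕ}
    (hi : i + 3 ≤ E) (hc : ∀ j ≤ E, H.Adj (c 1) (p j) ↔ j = i + 1 ∨ j = i + 2) {z : W}
    (hz₂ : H.Adj z (c 2)) (hl : l = i ∨ l = i + 3) (hzl : H.Adj z (p l)) :
    3 ≤ F ∧ ∃ a b d a' d', IsInducedNet H a b d a' (c 3) d' := by
  have hz1 : setDist H (p '' Set.Iic E) z = 1 := by
    have := setDist_le_add_one_of_adj (p '' Set.Iic E) hzl.symm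
    have := setDist_le_add_one_of_adj (p '' Set.Iic E) hz₂
    rw [setDist_p _ (by omega)] at *
    rw [h.geodesic_c.setDist_eq h.two_le] at *
    omega
  have hne : z ≠ c 1 := by
    rintro rfl
    have := (hc l (by omega)).1 hzl
    omega
  obtain ⟨hF, hz₁, hz₃⟩ := h.adj_and_not_adj_of_setDist_eq_one hclaw hz₂ hz1 hne
  obtain ⟨m, hm, hzm⟩ := h.exists_forall_adj_iff hclaw hz₂ hz1
  have hml := (hzm l (by omega)).1 hzl
  have hnet {k l} (hk : k ≤ E) (hl : l ≤ E) (hkl : k + 2 ≤ l ∨ l + 2 ≤ k)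
      (hck : k = i + 1 ∨ k = i + 2) (hcl : ¬ (l = i + 1 ∨ l = i + 2)) (hzl : l = m + 1 ∨ l = m + 2)
      (hzk : ¬ (k = m + 1 ∨ k = m + 2)) : ∃ a b d a' d', IsInducedNet H a b d a' (c 3) d' :=
    ⟨_, _, _, _, _, h.isInducedNet_of_adj hF hk hl hkl hz₁ hz₂ hz₃ ((hc _ hk).2 hck)
      ((hc _ hl).not.2 hcl) ((hzm _ hl).2 hzl) ((hzm _ hk).not.2 hzk)⟩
  refine ⟨hF, ?_⟩
  rcases hl with rfl | rfl
  · exact hnet (k := l + 2) (l := m + 1) (by omega) (by omega) (by omega) (by omega) (by omega)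
      (by omega) (by omega)
  · exact hnet (k := i + 1) (l := m + 2) (by omega) (by omega) (by omega) (by omega) (by omega)
      (by omega) (by omega)

theorem exists_disjoint_netEnd (h : IsPendantTripod H E F p c) (hcl : ClawFree H) (hi : i + 3 ≤ E)
    (hc : ∀ j ≤ E, H.Adj (c 1) (p j) ↔ j = i + 1 ∨ j = i + 2) {Q : W → Prop}
    (hQ : NetEndsSatisfy H Q) : ∃ k, 2 ≤ k ∧ k ≤ F ∧ Q (c k) ∧ ∀ l, l = i ∨ l = i + 3 →
      Disjoint (closedNbhd H (p l)) (closedNbhd H (c k)) := by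
  have hF := h.two_le
  by_cases hz : ∀ l, l = i ∨ l = i + 3 → Disjoint (closedNbhd H (p l)) (closedNbhd H (c 2))
  · exact ⟨2, le_rfl, hF, (hQ (h.isInducedNet hi hc)).2.2, hz⟩
  simp only [not_forall, Set.not_disjoint_iff] at hz
  obtain ⟨l, hl, z, hzl, hz₂⟩ := hz
  have hlevel := h.geodesic_c.setDist_eq hF
  have hzero := setDist_p (H := H) p (j := l) (E := E) (by omega)
  have hzl' : H.Adj (p l) z := hzl.resolve_left fun hzl ↦ by
    have := setDist_le_add_one_of_mem_closedNbhd (p '' Set.Iic E) (hzl ▸ hz₂)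
    omega
  have hz₂' : H.Adj (c 2) z := hz₂.resolve_left fun hz₂ ↦ by
    have := setDist_le_add_one_of_mem_closedNbhd (p '' Set.Iic E) (hz₂ ▸ hzl)
    omega
  obtain ⟨hF, _, _, _, _, _, hnet⟩ :=
    h.exists_isInducedNet_of_adj hcl hi hc hz₂'.symm hl hzl'.symm
  refine ⟨3, by omega, hF, (hQ hnet).2.1, fun l hl ↦ ?_⟩
  apply disjoint_closedNbhd_of_setDist (S := p '' Set.Iic E)
  rw [h.geodesic_c.setDist_eq hF, setDist_p p (by omega)]

end IsPendantTripod

theorem exists_spread_netEnds (hH : H.Connected) (hcl : ClawFree H) {g₁ g₂ g₃ : W}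
    (hg₁ : (H.neighborSet g₁).Subsingleton) (hg₂ : (H.neighborSet g₂).Subsingleton)
    (hg₃ : (H.neighborSet g₃).Subsingleton) (h₁₂ : g₁ ≠ g₂) (h₁₃ : g₁ ≠ g₃) (h₂₃ : g₂ ≠ g₃)
    (hn₁₃ : ¬ H.Adj g₁ g₃) (hn₂₃ : ¬ H.Adj g₂ g₃) {Q : W → Prop} (hQ : NetEndsSatisfy H Q) :
    ∃ e₁ e₂ e₃, Q e₁ ∧ Q e₂ ∧ Q e₃ ∧ NearOrBranching H g₁ e₁ ∧ NearOrBranching H g₂ e₂ ∧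
      NearOrBranching H g₃ e₃ ∧ Disjoint (closedNbhd H e₁) (closedNbhd H e₂) ∧
      Disjoint (closedNbhd H e₁) (closedNbhd H e₃) ∧
      Disjoint (closedNbhd H e₂) (closedNbhd H e₃) := by
  obtain ⟨E, F, p, c, h, rfl, rfl, rfl⟩ :=
    exists_isPendantTripod hH hcl hg₁ hg₂ hg₃ h₁₂ h₁₃ h₂₃ hn₁₃ hn₂₃
  have hF := h.two_le
  obtain ⟨i, hi, hc⟩ := h.exists_forall_adj_iff hcl (h.geodesic_c.adj (i := 1) (by omega))
    (h.geodesic_c.setDist_eq (by omega))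
  obtain ⟨hQ₁, hQ₂, -⟩ := hQ (h.isInducedNet hi hc)
  have hd : Disjoint (closedNbhd H (p i)) (closedNbhd H (p (i + 3))) := by
    apply disjoint_closedNbhd_of_setDist (S := {p 0})
    rw [h.geodesic_p.setDist_eq (by omega), h.geodesic_p.setDist_eq (by omega)]
  obtain ⟨k, hk, hkF, hQk, hdk⟩ := h.exists_disjoint_netEnd hcl hi hc hQ
  exact ⟨p i, p (i + 3), c k, hQ₁, hQ₂, hQk, h.geodesic_p.nearOrBranching_zero (by omega),
    h.geodesic_p.nearOrBranching_last (by omega) hi, h.geodesic_c.nearOrBranching_last hk hkF,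
    hd, hdk _ (.inl rfl), hdk _ (.inr rfl)⟩

end PendantPaths

section Blocks

variable {V : Type*} {G L : SimpleGraph V} {U P : Set V} {a b t t' f f' g g' u v : V}

/-- A clique of `L` that contains every common neighbour of any two of its vertices. In a
diamond-free graph these are the maximal cliques, the singletons and the empty set. -/
structure IsBlock (L : SimpleGraph V) (U : Set V) : Prop where
  isClique : L.IsClique U
  mem : ∀ ⦃c⦄, c ∈ U → ∀ ⦃d⦄, d ∈ U → c ≠ d → ∀ ⦃v⦄, v ∈ closedNbhd L c → v ∈ closedNbhd L d → v ∈ U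

/-- The block of the edge `ab`: the common closed neighbourhood of its ends. -/
def edgeBlock (L : SimpleGraph V) (a b : V) : Set V := closedNbhd L a ∩ closedNbhd L b

theorem left_mem_edgeBlock (h : L.Adj a b) : a ∈ edgeBlock L a b := ⟨.inl rfl, .inr h.symm⟩

theorem right_mem_edgeBlock (h : L.Adj a b) : b ∈ edgeBlock L a b := ⟨.inr h, .inl rfl⟩

theorem DiamondFree.isClique_edgeBlock (hD : DiamondFree L) (hab : L.Adj a b) :
    L.IsClique (edgeBlock L a b) := by
  rintro u ⟨rfl | hau, hbu⟩ v ⟨hav, hbv⟩ huv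
  · exact hav.resolve_left huv.symm
  rcases hbu with rfl | hbu
  · exact hbv.resolve_left huv.symm
  rcases hav with rfl | hav
  · exact hau.symm
  rcases hbv with rfl | hbv
  · exact hbu.symm
  exact hD hab hau hav hbu hbv huv

theorem DiamondFree.isBlock_edgeBlock (hD : DiamondFree L) (hab : L.Adj a b) :
    IsBlock L (edgeBlock L a b) := by
  have hU := hD.isClique_edgeBlock hab
  suffices hmem : ∀ c ∈ edgeBlock L a b, ∀ d ∈ edgeBlock L a b, c ≠ d → ∀ v ∈ closedNbhd L c,
      v ∈ closedNbhd L d → ∀ x ∈ edgeBlock L a b, v ∈ closedNbhd L x from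
    ⟨hU, fun c hc d hd hcd v hvc hvd ↦ ⟨hmem c hc d hd hcd v hvc hvd a (left_mem_edgeBlock hab),
      hmem c hc d hd hcd v hvc hvd b (right_mem_edgeBlock hab)⟩⟩
  intro c hc d hd hcd v hvc hvd x hx
  refine or_iff_not_imp_left.2 fun hvx ↦ ?_
  rcases hvc with rfl | hvc
  · exact hU hx hc (Ne.symm hvx)
  rcases hvd with rfl | hvd
  · exact hU hx hd (Ne.symm hvx)
  by_cases hxc : x = c
  · exact hxc ▸ hvc
  by_cases hxd : x = d
  · exact hxd ▸ hvd
  exact (hD (hU hc hd hcd) hvc (hU hc hx (Ne.symm hxc)) hvd (hU hd hx (Ne.symm hxd)) hvx).symm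

namespace IsBlock

theorem subset_of_isClique (hU : IsBlock L U) (hu : u ∈ U) (hv : v ∈ U) (huv : u ≠ v)
    (huP : u ∈ P) (hvP : v ∈ P) (hP : L.IsClique P) : P ⊆ U := fun _ hw ↦
  have hmem {c : V} (hc : c ∈ P) : _ ∈ closedNbhd L c :=
    or_iff_not_imp_left.2 fun hwc ↦ hP hc hw (Ne.symm hwc)
  hU.mem hu hv huv (hmem huP) (hmem hvP)

theorem eq_of_mem_of_mem (hU : IsBlock L U) (hP : L.IsClique P) (htU : t ∈ U) (htP : t ∈ P)
    (hfP : f ∈ P) (hfU : f ∉ U) (hvU : v ∈ U) (hvP : v ∈ P) : v = t := by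
  by_contra hvt
  exact hfU (hU.subset_of_isClique hvU htU hvt hvP htP hP hfP)

theorem induce_preconnected (hU : IsBlock L U) (hC : EdgesInConnectedCliques G L) :
    (G.induce U).Preconnected := by
  rintro ⟨u, hu⟩ ⟨v, hv⟩
  by_cases huv : u = v
  · subst huv; rfl
  obtain ⟨S, huS, hvS, hS, hGS⟩ := hC (hU.isClique hu hv huv)
  exact (hGS ⟨u, huS⟩ ⟨v, hvS⟩).map
    (induceHomOfLE G (hU.subset_of_isClique hu hv huv huS hvS hS)).toHom

theorem exists_adj_eq_or_forall_mem (hP : IsBlock L P) (hG : ClawFree G) (hGL : G ≤ L)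
    (hC : EdgesInConnectedCliques G L) (ht : t ∈ P) (hf : f ∈ P) (htf : t ≠ f) :
    ∃ g ∈ P, G.Adj t g ∧ (g = f ∨ ∀ w, G.Adj g w → w ∈ P) := by
  by_cases hadj : G.Adj t f
  · exact ⟨f, hf, hadj, .inl rfl⟩
  obtain ⟨p⟩ := hP.induce_preconnected hC ⟨t, ht⟩ ⟨f, hf⟩
  obtain ⟨⟨⟨⟨g, hg⟩, ⟨h, hh⟩⟩, hgh⟩, -, hgt, hht⟩ :=
    p.exists_boundary_dart (Subtype.val ⁻¹' closedNbhd G t) (.inl rfl) (not_or.2 ⟨htf.symm, hadj⟩)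
  obtain ⟨hht, htnh⟩ := not_or.1 hht
  replace hgh : G.Adj g h := hgh
  have htg : G.Adj t g := hgt.resolve_left fun hgt ↦ htnh (hgt ▸ hgh)
  refine ⟨g, hg, htg, .inr fun w hgw ↦ ?_⟩
  by_contra hw
  -- Otherwise `g` and its neighbours `t`, `h`, `w` induce a claw in `G`.
  rcases hG.adj_or_adj_or_adj htg.symm hgh hgw (Ne.symm hht) (fun h ↦ hw (h ▸ ht))
    (fun h ↦ hw (h ▸ hh)) with h | h | h
  · exact htnh h
  · exact hw (hP.mem hg ht htg.ne' (.inr (hGL hgw)) (.inr (hGL h)))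
  · exact hw (hP.mem hg hh hgh.ne (.inr (hGL hgw)) (.inr (hGL h)))

end IsBlock

/-- The vertex `g` outside the block `U` is attached to `t ∈ U` in the block of the edge `tf` of
`L`, and either `g = f` or all neighbours of `g` lie in that block. -/
structure IsSpike (G L : SimpleGraph V) (U : Set V) (t f g : V) : Prop where
  mem : t ∈ U
  notMem : f ∉ U
  adj : L.Adj t f
  mem_edgeBlock : g ∈ edgeBlock L t f
  adj_spike : G.Adj t g
  eq_or_forall_mem : g = f ∨ ∀ w, G.Adj g w → w ∈ edgeBlock L t f

theorem exists_isSpike (hG : ClawFree G) (hGL : G ≤ L) (hD : DiamondFree L)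
    (hC : EdgesInConnectedCliques G L) (ht : t ∈ U) (hf : f ∉ U) (htf : L.Adj t f) :
    ∃ g, IsSpike G L U t f g := by
  obtain ⟨g, hg, htg, hgf⟩ := (hD.isBlock_edgeBlock htf).exists_adj_eq_or_forall_mem hG hGL hC
    (left_mem_edgeBlock htf) (right_mem_edgeBlock htf) htf.ne
  exact ⟨g, ht, hf, htf, hg, htg, hgf⟩

namespace IsSpike

theorem eq_of_mem (hs : IsSpike G L U t f g) (hU : IsBlock L U) (hD : DiamondFree L)
    (hvU : v ∈ U) (hv : v ∈ edgeBlock L t f) : v = t :=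
  hU.eq_of_mem_of_mem (hD.isClique_edgeBlock hs.adj) hs.mem (left_mem_edgeBlock hs.adj)
    (right_mem_edgeBlock hs.adj) hs.notMem hvU hv

theorem spike_notMem (hs : IsSpike G L U t f g) (hU : IsBlock L U) (hD : DiamondFree L) : g ∉ U :=
  fun hg ↦ hs.adj_spike.ne' (hs.eq_of_mem hU hD hg hs.mem_edgeBlock)

theorem eq_of_adj (hs : IsSpike G L U t f g) (hU : IsBlock L U) (hD : DiamondFree L) (hGL : G ≤ L)
    (hu : u ∈ U) (hgu : G.Adj g u) : u = t := by
  by_contra hut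
  exact hs.spike_notMem hU hD
    (hU.mem hu hs.mem hut (.inr (hGL hgu.symm)) (.inr (hGL hs.adj_spike)))

theorem disjoint_edgeBlock (hs : IsSpike G L U t f g) (hs' : IsSpike G L U t' f' g')
    (hU : IsBlock L U) (hD : DiamondFree L) (ht : t ≠ t') :
    Disjoint (edgeBlock L t f) (edgeBlock L t' f') :=
  Set.disjoint_left.2 fun _ hv hv' ↦
    have hvU := hU.mem hs.mem hs'.mem ht hv.1 hv'.1
    ht ((hs.eq_of_mem hU hD hvU hv).symm.trans (hs'.eq_of_mem hU hD hvU hv'))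

theorem not_adj (hs : IsSpike G L U t f g) (hs' : IsSpike G L U t' f' g') (hU : IsBlock L U)
    (hD : DiamondFree L) (hGL : G ≤ L) (ht : t ≠ t') (hf : ¬ L.Adj f f') : ¬ G.Adj g g' := by
  intro hadj
  have hdisj := Set.disjoint_left.1 (hs.disjoint_edgeBlock hs' hU hD ht)
  rcases hs.eq_or_forall_mem with rfl | hg
  · rcases hs'.eq_or_forall_mem with rfl | hg'
    · exact hf (hGL hadj)
    · exact hdisj hs.mem_edgeBlock (hg' _ hadj.symm)
  · exact hdisj (hg _ hadj) hs'.mem_edgeBlock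

theorem closedNbhd_base_subset (hs : IsSpike G L U t f g) (hU : IsBlock L U) (hL : ClawFree L)
    (hu : u ∈ U) (htu : t ≠ u) : closedNbhd L t ⊆ U ∪ closedNbhd L f := by
  rintro w (rfl | htw)
  · exact .inl hs.mem
  by_contra hw
  obtain ⟨hwU, hwf⟩ := not_or.1 hw
  rcases hL.adj_or_adj_or_adj htw hs.adj (hU.isClique hs.mem hu htu) (fun h ↦ hwf (.inl h))
    (fun h ↦ hwU (h ▸ hu)) (fun h ↦ hs.notMem (h ▸ hu)) with h | h | h
  · exact hwf (.inr h.symm)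
  · exact hwU (hU.mem hs.mem hu htu (.inr htw) (.inr h.symm))
  · exact hs.notMem (hU.mem hs.mem hu htu (.inr hs.adj) (.inr h.symm))

theorem closedNbhd_subset (hs : IsSpike G L U t f g) (hGL : G ≤ L) :
    closedNbhd G g ⊆ closedNbhd L f := by
  rcases hs.eq_or_forall_mem with rfl | hg
  · exact fun w hw ↦ hw.imp_right (hGL ·)
  · rintro w (rfl | hgw)
    exacts [hs.mem_edgeBlock.2, (hg w hgw).2]

end IsSpike

theorem IsBlock.closedNbhd_subset (hU : IsBlock L U) (hG : ClawFree G) (hGL : G ≤ L) {e : V}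
    (he : e ∈ U) (hu : u ∈ U) (hv : v ∈ U) (heu : G.Adj e u) (hev : G.Adj e v) (huv : u ≠ v)
    (hnuv : ¬ G.Adj u v) : closedNbhd G e ⊆ U := by
  rintro w (rfl | hew)
  · exact he
  by_contra hw
  rcases hG.adj_or_adj_or_adj heu hev hew huv (fun h ↦ hw (h ▸ hu)) (fun h ↦ hw (h ▸ hv))
    with h | h | h
  · exact hnuv h
  · exact hw (hU.mem he hu heu.ne (.inr (hGL hew)) (.inr (hGL h)))
  · exact hw (hU.mem he hv hev.ne (.inr (hGL hew)) (.inr (hGL h)))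

end Blocks

section SpikedBlocks

variable {V : Type*} {G L : SimpleGraph V} {U : Set V}

theorem ClawFree.induce (hG : ClawFree G) (U : Set V) : ClawFree (G.induce U) :=
  fun ⟨f, hf, hadj⟩ ↦ hG ⟨fun i ↦ f i, Subtype.val_injective.comp hf, hadj⟩

theorem NetEndsSatisfy.induce {Q : V → Prop} (hQ : NetEndsSatisfy G Q) (U : Set V) :
    NetEndsSatisfy (G.induce U) fun v ↦ Q v := by
  rintro a b c a' b' c' h
  refine hQ (a := a) (b := b) (c := c) (a' := a') (b' := b') (c' := c') ?_
  exact ⟨h.1, h.2, h.3, h.4, h.5, h.6, h.7, h.8, h.9, h.10, h.11, h.12, h.13, h.14, h.15⟩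

variable {ι : Type*} {t f g : ι → V}

theorem spike_injective (hU : IsBlock L U) (hD : DiamondFree L) (ht : t.Injective)
    (hs : ∀ i, IsSpike G L U (t i) (f i) (g i)) : g.Injective := fun i j hij ↦ by
  by_contra hne
  exact Set.disjoint_left.1 ((hs i).disjoint_edgeBlock (hs j) hU hD (ht.ne hne))
    (hs i).mem_edgeBlock (hij ▸ (hs j).mem_edgeBlock)

theorem spike_eq_of_adj (hU : IsBlock L U) (hD : DiamondFree L) (hGL : G ≤ L) (ht : t.Injective)
    (hs : ∀ i, IsSpike G L U (t i) (f i) (g i)) (hf : Pairwise fun i j ↦ ¬ L.Adj (f i) (f j))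
    {i : ι} {w : V} (hw : w ∈ U ∪ Set.range g) (hgw : G.Adj (g i) w) : w = t i := by
  rcases hw with hw | ⟨j, rfl⟩
  · exact (hs i).eq_of_adj hU hD hGL hw hgw
  · have hij : i ≠ j := fun h ↦ hgw.ne (h ▸ rfl)
    exact absurd hgw ((hs i).not_adj (hs j) hU hD hGL (ht.ne hij) (hf hij))

theorem subsingleton_neighborSet_spike (hU : IsBlock L U) (hD : DiamondFree L) (hGL : G ≤ L)
    (ht : t.Injective) (hs : ∀ i, IsSpike G L U (t i) (f i) (g i))
    (hf : Pairwise fun i j ↦ ¬ L.Adj (f i) (f j)) (i : ι) (hi : g i ∈ U ∪ Set.range g) :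
    ((G.induce (U ∪ Set.range g)).neighborSet ⟨g i, hi⟩).Subsingleton := fun a ha b hb ↦
  Subtype.ext <| (spike_eq_of_adj hU hD hGL ht hs hf a.2 ha).trans
    (spike_eq_of_adj hU hD hGL ht hs hf b.2 hb).symm

theorem induce_union_range_spike_connected (hU : IsBlock L U) (hC : EdgesInConnectedCliques G L)
    (hne : U.Nonempty) (hs : ∀ i, IsSpike G L U (t i) (f i) (g i)) :
    (G.induce (U ∪ Set.range g)).Connected := by
  obtain ⟨u, hu⟩ := hne
  refine induce_connected_of_patches u (.inl hu) ?_
  rintro _ (hv | ⟨i, rfl⟩)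
  · exact ⟨U, Set.subset_union_left, hu, hv, hU.induce_preconnected hC _ _⟩
  have hconn := induce_union_connected (hU.induce_preconnected hC)
    (induce_pair_connected_of_adj (hs i).adj_spike).preconnected ⟨t i, (hs i).mem, by simp⟩
  exact ⟨_, Set.union_subset Set.subset_union_left
    (Set.pair_subset (.inl (hs i).mem) (.inr ⟨i, rfl⟩)), .inl hu, .inr (.inr rfl), hconn _ _⟩

theorem closedNbhd_subset_of_nearOrBranching (hG : ClawFree G) (hGL : G ≤ L) (hL : ClawFree L)
    (hU : IsBlock L U) (hD : DiamondFree L) (ht : t.Injective)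
    (hs : ∀ i, IsSpike G L U (t i) (f i) (g i)) (hf : Pairwise fun i j ↦ ¬ L.Adj (f i) (f j))
    {i j : ι} (hij : i ≠ j) (hi : g i ∈ U ∪ Set.range g) {e : ↥(U ∪ Set.range g)}
    (he : NearOrBranching (G.induce (U ∪ Set.range g)) ⟨g i, hi⟩ e) :
    closedNbhd G (e : V) ⊆ U ∪ closedNbhd L (f i) := by
  rcases he with (rfl | he) | ⟨u, v, heu, hev, huv, hnuv, hu, hv⟩
  · exact ((hs i).closedNbhd_subset hGL).trans Set.subset_union_right
  · rw [spike_eq_of_adj hU hD hGL ht hs hf e.2 he]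
    exact Set.Subset.trans (fun w hw ↦ hw.imp_right (hGL ·))
      ((hs i).closedNbhd_base_subset hU hL (hs j).mem (ht.ne hij))
  · have hmem {u : ↥(U ∪ Set.range g)}
        (hu : ¬ ((G.induce (U ∪ Set.range g)).neighborSet u).Subsingleton) : (u : V) ∈ U := by
      obtain ⟨u, hu' | ⟨k, rfl⟩⟩ := u
      · exact hu'
      · exact absurd (subsingleton_neighborSet_spike hU hD hGL ht hs hf k _) hu
    have he : (e : V) ∈ U := hmem fun h ↦ huv (h heu hev)
    exact (hU.closedNbhd_subset hG hGL he (hmem hu) (hmem hv) heu hev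
      (Subtype.val_injective.ne huv) hnuv).trans Set.subset_union_left

theorem ncard_add_ncard_add_ncard_le [Finite V] (A B C : Set V) : A.ncard + B.ncard + C.ncard ≤
    (A ∪ B ∪ C).ncard + (A ∩ B).ncard + (A ∩ C).ncard + (B ∩ C).ncard := by
  have hAB := Set.ncard_union_add_ncard_inter A B
  have hABC := Set.ncard_union_add_ncard_inter (A ∪ B) C
  rw [Set.union_inter_distrib_right] at hABC
  have := Set.ncard_union_le (A ∩ C) (B ∩ C)
  omega

theorem closedNbhd_inter_subset {U' A B : Set V} {e e' : U'} (hU' : U ⊆ U')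
    (he : closedNbhd G (e : V) ⊆ U ∪ A) (he' : closedNbhd G (e' : V) ⊆ U ∪ B)
    (hdisj : Disjoint (closedNbhd (G.induce U') e) (closedNbhd (G.induce U') e')) :
    closedNbhd G (e : V) ∩ closedNbhd G (e' : V) ⊆ A ∩ B := by
  rintro w ⟨hw, hw'⟩
  have hwU : w ∉ U := fun hwU ↦ hdisj.notMem_of_mem_left (a := (⟨w, hU' hwU⟩ : U'))
    (hw.imp_left Subtype.ext) (hw'.imp_left Subtype.ext)
  exact ⟨(he hw).resolve_left hwU, (he' hw').resolve_left hwU⟩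

theorem card_lt_of_three_adj_block [Fintype V] (hG : ClawFree G) (hGL : G ≤ L) (hL : ClawFree L)
    (hD : DiamondFree L) (hC : EdgesInConnectedCliques G L) (hU : IsBlock L U)
    (hN : NetEndsSatisfy G fun v ↦ Fintype.card V + 1 ≤ 3 * (closedNbhd G v).ncard)
    {t f : Fin 3 → V} (htU : ∀ i, t i ∈ U) (ht : t.Injective) (htf : ∀ i, L.Adj (t i) (f i))
    (hfU : ∀ i, f i ∉ U) (hf : Pairwise fun i j ↦ ¬ L.Adj (f i) (f j)) :
    Fintype.card V < (U ∪ ⋃ i, closedNbhd L (f i)).ncard +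
      (closedNbhd L (f 0) ∩ closedNbhd L (f 1)).ncard +
      (closedNbhd L (f 0) ∩ closedNbhd L (f 2)).ncard +
      (closedNbhd L (f 1) ∩ closedNbhd L (f 2)).ncard := by
  choose g hs using fun i ↦ exists_isSpike hG hGL hD hC (htU i) (hfU i) (htf i)
  have hg (i) : g i ∈ U ∪ Set.range g := .inr ⟨i, rfl⟩
  have hpend (i) := subsingleton_neighborSet_spike hU hD hGL ht hs hf i (hg i)
  have hne {i j : Fin 3} (hij : i ≠ j) :
      (⟨g i, hg i⟩ : ↥(U ∪ Set.range g)) ≠ ⟨g j, hg j⟩ :=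
    fun h ↦ hij (spike_injective hU hD ht hs (congrArg Subtype.val h))
  have hnadj {i j : Fin 3} (hij : i ≠ j) : ¬ G.Adj (g i) (g j) :=
    (hs i).not_adj (hs j) hU hD hGL (ht.ne hij) (hf hij)
  obtain ⟨e₀, e₁, e₂, hQ₀, hQ₁, hQ₂, h₀, h₁, h₂, h₀₁, h₀₂, h₁₂⟩ := exists_spread_netEnds
    (induce_union_range_spike_connected hU hC ⟨_, htU 0⟩ hs) (hG.induce _)
    (hpend 0) (hpend 1) (hpend 2) (hne (by decide)) (hne (by decide)) (hne (by decide))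
    (hnadj (by decide)) (hnadj (by decide)) (hN.induce _)
  have hcov {i j : Fin 3} (hij : i ≠ j) {e : ↥(U ∪ Set.range g)} :=
    closedNbhd_subset_of_nearOrBranching hG hGL hL hU hD ht hs hf hij (hg i) (e := e)
  replace h₀ := hcov (j := 1) (by decide) h₀
  replace h₁ := hcov (j := 0) (by decide) h₁
  replace h₂ := hcov (j := 0) (by decide) h₂
  have hsub (i : Fin 3) : U ∪ closedNbhd L (f i) ⊆ U ∪ ⋃ i, closedNbhd L (f i) :=
    Set.union_subset_union_right U (Set.subset_iUnion_of_subset i subset_rfl)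
  have := Set.ncard_le_ncard (closedNbhd_inter_subset Set.subset_union_left h₀ h₁ h₀₁)
  have := Set.ncard_le_ncard (closedNbhd_inter_subset Set.subset_union_left h₀ h₂ h₀₂)
  have := Set.ncard_le_ncard (closedNbhd_inter_subset Set.subset_union_left h₁ h₂ h₁₂)
  have := Set.ncard_le_ncard (Set.union_subset (Set.union_subset (h₀.trans (hsub 0))
    (h₁.trans (hsub 1))) (h₂.trans (hsub 2)))
  have := ncard_add_ncard_add_ncard_le (closedNbhd G (e₀ : V)) (closedNbhd G e₁) (closedNbhd G e₂)
  omega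

end SpikedBlocks

section BlockPairs

variable {V : Type*} {L : SimpleGraph V} {A B X : Set V} {u v w : V} {e : V → Sym2 (Set V)}

theorem IsBlock.singleton (L : SimpleGraph V) (v : V) : IsBlock L {v} where
  isClique := Set.pairwise_singleton _ _
  mem := fun _ hc _ hd hcd ↦ absurd (hc.trans hd.symm) hcd

theorem IsBlock.eq_of_mem (hA : IsBlock L A) (hB : IsBlock L B) (huv : u ≠ v) (huA : u ∈ A)
    (hvA : v ∈ A) (huB : u ∈ B) (hvB : v ∈ B) : A = B :=
  (hB.subset_of_isClique huB hvB huv huA hvA hA.isClique).antisymm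
    (hA.subset_of_isClique huA hvA huv huB hvB hB.isClique)

theorem ClawFree.exists_two_blocks (hL : ClawFree L) (hD : DiamondFree L) (hv : ∃ b, L.Adj v b) :
    ∃ A B, A ≠ B ∧ (IsBlock L A ∧ v ∈ A) ∧ (IsBlock L B ∧ v ∈ B) ∧ closedNbhd L v = A ∪ B := by
  obtain ⟨b, hb⟩ := hv
  have hA : IsBlock L (edgeBlock L v b) ∧ v ∈ edgeBlock L v b :=
    ⟨hD.isBlock_edgeBlock hb, left_mem_edgeBlock hb⟩
  by_cases hsub : closedNbhd L v ⊆ edgeBlock L v b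
  · refine ⟨_, {v}, fun h ↦ hb.ne' ?_, hA, ⟨.singleton L v, rfl⟩, ?_⟩
    · exact Set.mem_singleton_iff.1 (h ▸ right_mem_edgeBlock hb)
    · rw [Set.union_eq_left.2 (Set.singleton_subset_iff.2 hA.2)]
      exact hsub.antisymm Set.inter_subset_left
  obtain ⟨c, hc, hcA⟩ := Set.not_subset.1 hsub
  have hvc : L.Adj v c := hc.resolve_left fun h ↦ hcA (h ▸ hA.2)
  refine ⟨edgeBlock L v b, edgeBlock L v c, fun h ↦ hcA (h ▸ right_mem_edgeBlock hvc), hA,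
    ⟨hD.isBlock_edgeBlock hvc, left_mem_edgeBlock hvc⟩, ?_⟩
  refine Set.Subset.antisymm (fun w hw ↦ ?_)
    (Set.union_subset Set.inter_subset_left Set.inter_subset_left)
  rcases hw with rfl | hw
  · exact .inl hA.2
  by_contra hcon
  have hwb : w ∉ closedNbhd L b := fun h ↦ hcon (.inl ⟨.inr hw, h⟩)
  have hwc : w ∉ closedNbhd L c := fun h ↦ hcon (.inr ⟨.inr hw, h⟩)
  have hcb : c ∉ closedNbhd L b := fun h ↦ hcA ⟨hc, h⟩
  rcases hL.adj_or_adj_or_adj hb hvc hw (fun h ↦ hcb (.inl h.symm)) (fun h ↦ hwb (.inl h.symm))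
    (fun h ↦ hwc (.inl h.symm)) with h | h | h
  exacts [hcb (.inr h), hwb (.inr h), hwc (.inr h)]

/-- `e` assigns to each vertex an unordered pair of distinct blocks through it which cover its
closed neighbourhood. Read as edges on the set of blocks, these pairs form a root graph of `L`. -/
structure IsBlockPairing (L : SimpleGraph V) (e : V → Sym2 (Set V)) : Prop where
  not_isDiag : ∀ v, ¬ (e v).IsDiag
  isBlock : ∀ ⦃v X⦄, X ∈ e v → IsBlock L X
  self_mem : ∀ ⦃v X⦄, X ∈ e v → v ∈ X
  exists_mem : ∀ ⦃v w⦄, L.Adj v w → ∃ X ∈ e v, w ∈ X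

theorem ClawFree.exists_isBlockPairing (hL : ClawFree L) (hD : DiamondFree L)
    (hnbr : ∀ v, ∃ b, L.Adj v b) : ∃ e, IsBlockPairing L e := by
  choose A B hAB hA hB hcover using fun v ↦ hL.exists_two_blocks hD (hnbr v)
  refine ⟨fun v ↦ s(A v, B v), hAB, fun v X hX ↦ ?_, fun v X hX ↦ ?_, fun v w hvw ↦ ?_⟩
  · rcases Sym2.mem_iff.1 hX with rfl | rfl
    exacts [(hA v).1, (hB v).1]
  · rcases Sym2.mem_iff.1 hX with rfl | rfl
    exacts [(hA v).2, (hB v).2]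
  · have hw : w ∈ A v ∪ B v := hcover v ▸ .inr hvw
    exact hw.elim (fun h ↦ ⟨_, Sym2.mem_mk_left _ _, h⟩) fun h ↦ ⟨_, Sym2.mem_mk_right _ _, h⟩

namespace IsBlockPairing

theorem mem_of_mem (he : IsBlockPairing L e) (hX : X ∈ e v) (hw : w ∈ X) : X ∈ e w := by
  by_cases hvw : v = w
  · exact hvw ▸ hX
  obtain ⟨Y, hY, hvY⟩ := he.exists_mem
    ((he.isBlock hX).isClique hw (he.self_mem hX) (Ne.symm hvw))
  rwa [(he.isBlock hX).eq_of_mem (he.isBlock hY) hvw (he.self_mem hX) hw hvY (he.self_mem hY)]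

theorem injective (he : IsBlockPairing L e) : e.Injective := fun u v huv ↦ by
  by_contra hne
  obtain ⟨⟨A, B⟩, hAB⟩ := (e u).exists_rep
  have hA : A ∈ e u := hAB ▸ Sym2.mem_mk_left A B
  have hB : B ∈ e u := hAB ▸ Sym2.mem_mk_right A B
  have hABeq := (he.isBlock hA).eq_of_mem (he.isBlock hB) hne (he.self_mem hA)
    (he.self_mem (huv ▸ hA)) (he.self_mem hB) (he.self_mem (huv ▸ hB))
  exact he.not_isDiag u (hAB ▸ hABeq)

theorem adj_iff (he : IsBlockPairing L e) : L.Adj u v ↔ u ≠ v ∧ ∃ X, X ∈ e u ∧ X ∈ e v := by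
  refine ⟨fun h ↦ ⟨h.ne, ?_⟩, fun ⟨hne, X, hu, hv⟩ ↦
    (he.isBlock hu).isClique (he.self_mem hu) (he.self_mem hv) hne⟩
  obtain ⟨X, hX, hvX⟩ := he.exists_mem h
  exact ⟨X, hX, he.mem_of_mem hX hvX⟩

theorem edgeSet_fromEdgeSet_range (he : IsBlockPairing L e) :
    (fromEdgeSet (Set.range e)).edgeSet = Set.range e := by
  rw [edgeSet_fromEdgeSet, sdiff_eq_left, Set.disjoint_left]
  rintro _ ⟨v, rfl⟩
  exact he.not_isDiag v

theorem cliqueFree_three (he : IsBlockPairing L e) :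
    (fromEdgeSet (Set.range e)).CliqueFree 3 := by
  intro s hs
  obtain ⟨X, Y, Z, hXY, hXZ, hYZ, rfl⟩ := is3Clique_iff.1 hs
  obtain ⟨⟨a, ha⟩, hXY⟩ := (fromEdgeSet_adj _).1 hXY
  obtain ⟨⟨c, hc⟩, hXZ⟩ := (fromEdgeSet_adj _).1 hXZ
  obtain ⟨⟨b, hb⟩, hYZ⟩ := (fromEdgeSet_adj _).1 hYZ
  have hne {u v : V} {P : Set V} (hu : P ∈ e u) (hv : P ∉ e v) : u ≠ v := by rintro rfl; exact hv hu
  have hXb : X ∉ e b := by simp [hb, hXY, hXZ]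
  have hYc : Y ∉ e c := by simp [hc, hXY.symm, hYZ]
  have hXa : X ∈ e a := by simp [ha]
  have hYa : Y ∈ e a := by simp [ha]
  have hYb : Y ∈ e b := by simp [hb]
  have hZb : Z ∈ e b := by simp [hb]
  have hXc : X ∈ e c := by simp [hc]
  have hZc : Z ∈ e c := by simp [hc]
  -- `c` is a common neighbour of `a` and `b`, hence lies in the block `Y` through both.
  have hcY : c ∈ Y := (he.isBlock hYa).mem (he.self_mem hYa) (he.self_mem hYb) (hne hXa hXb)
    (.inr (he.adj_iff.2 ⟨hne hYa hYc, X, hXa, hXc⟩))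
    (.inr (he.adj_iff.2 ⟨hne hYb hYc, Z, hZb, hZc⟩))
  exact hYc (he.mem_of_mem hYa hcY)

/-- The isomorphism from `L` onto the line graph of its root graph. -/
noncomputable def lineGraphIso (he : IsBlockPairing L e) :
    L ≃g (fromEdgeSet (Set.range e)).lineGraph where
  toEquiv := (Equiv.ofInjective e he.injective).trans
    (Equiv.setCongr he.edgeSet_fromEdgeSet_range.symm)
  map_rel_iff' := by
    intro u v
    rw [lineGraph_adj_iff_exists, he.adj_iff, (Equiv.injective _).ne_iff]
    rfl

end IsBlockPairing

theorem ClawFree.exists_lineGraph_iso (hL : ClawFree L) (hD : DiamondFree L)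
    (hnbr : ∀ v, ∃ b, L.Adj v b) :
    ∃ H : SimpleGraph (Set V), H.CliqueFree 3 ∧ Nonempty (L ≃g H.lineGraph) :=
  have ⟨_, he⟩ := hL.exists_isBlockPairing hD hnbr
  ⟨_, he.cliqueFree_three, ⟨he.lineGraphIso⟩⟩

end BlockPairs

section Spiders

variable {V W : Type*} {G L : SimpleGraph V} {H : SimpleGraph W} {u x y : W}
  {p q : Fin 3 → W}

/-- The edges of `H` with an end in `T`. -/
def edgesAt (H : SimpleGraph W) (T : Set W) : Set H.edgeSet := {ε | ∃ x ∈ T, x ∈ (ε : Sym2 W)}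

theorem edgesAt_mono {S T : Set W} (hST : S ⊆ T) : edgesAt H S ⊆ edgesAt H T :=
  fun _ ⟨x, hx, hxε⟩ ↦ ⟨x, hST hx, hxε⟩

theorem exists_adj_of_mem_edgesAt_inter {S T : Set W} (hST : Disjoint S T) {ε : H.edgeSet}
    (hε : ε ∈ edgesAt H S ∩ edgesAt H T) :
    ∃ x ∈ S, ∃ y ∈ T, H.Adj x y ∧ (ε : Sym2 W) = s(x, y) := by
  obtain ⟨⟨x, hx, hxε⟩, y, hy, hyε⟩ := hε
  have hεxy := (Sym2.mem_and_mem_iff (hST.ne_of_mem hx hy)).1 ⟨hxε, hyε⟩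
  exact ⟨x, hx, y, hy, (H.mem_edgeSet).1 (hεxy ▸ ε.2), hεxy⟩

theorem edgesAt_union (H : SimpleGraph W) (S T : Set W) :
    edgesAt H (S ∪ T) = edgesAt H S ∪ edgesAt H T := by
  ext; simp [edgesAt, or_and_right, exists_or]

theorem edgesAt_iUnion {ι : Type*} (H : SimpleGraph W) (T : ι → Set W) :
    edgesAt H (⋃ i, T i) = ⋃ i, edgesAt H (T i) := by
  ext; simp only [edgesAt, Set.mem_iUnion, Set.mem_ofPred_eq]; tauto

/-- Three legs `u - p i - q i` of length two from `u` with no further coincidences; the subgraph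
need not be induced. -/
structure IsSpider (H : SimpleGraph W) (u : W) (p q : Fin 3 → W) : Prop where
  adj_center : ∀ i, H.Adj u (p i)
  adj : ∀ i, H.Adj (p i) (q i)
  injective_p : p.Injective
  injective_q : q.Injective
  center_ne : ∀ i, u ≠ q i
  ne : ∀ i j, p i ≠ q j

/-- The edges meeting two legs of a spider outside its centre, counted over the pairs of legs,
outnumber the edges that miss the spider. -/
def SpiderBound (H : SimpleGraph W) : Prop :=
  ∀ ⦃u p q⦄, IsSpider H u p q → (edgesAt H ({u} ∪ ⋃ i, {p i, q i}))ᶜ.ncard <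
    (edgesAt H {p 0, q 0} ∩ edgesAt H {p 1, q 1}).ncard +
      (edgesAt H {p 0, q 0} ∩ edgesAt H {p 2, q 2}).ncard +
      (edgesAt H {p 1, q 1} ∩ edgesAt H {p 2, q 2}).ncard

theorem closedNbhd_lineGraph (h : H.Adj x y) :
    closedNbhd H.lineGraph ⟨s(x, y), h⟩ = edgesAt H {x, y} := by
  ext ε
  simp only [closedNbhd, lineGraph_adj_iff_exists, edgesAt, Set.mem_ofPred_eq, Set.mem_insert_iff,
    Set.mem_singleton_iff, exists_eq_left, Sym2.mem_iff, or_and_right, exists_or]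
  refine ⟨?_, fun h ↦ or_iff_not_imp_left.2 fun hne ↦ ⟨Ne.symm hne, h⟩⟩
  rintro (rfl | h)
  exacts [.inl (Sym2.mem_mk_left _ _), h.2]

theorem isBlock_edgesAt_singleton (hH : H.CliqueFree 3) (u : W) :
    IsBlock H.lineGraph (edgesAt H {u}) where
  isClique := by
    rintro ε ⟨_, rfl, hε⟩ δ ⟨_, rfl, hδ⟩ hne
    exact lineGraph_adj_iff_exists.2 ⟨hne, _, hε, hδ⟩
  mem := by
    classical
    rintro ⟨ε, hε⟩ ⟨u, rfl, huε⟩ ⟨δ, hδ⟩ ⟨_, rfl, huδ⟩ hne ζ hζε hζδ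
    obtain ⟨x, rfl⟩ := Sym2.mem_iff_exists.1 huε
    obtain ⟨y, rfl⟩ := Sym2.mem_iff_exists.1 huδ
    rw [closedNbhd_lineGraph hε] at hζε
    rw [closedNbhd_lineGraph hδ] at hζδ
    obtain ⟨a, rfl | rfl, ha⟩ := hζε
    · exact ⟨_, rfl, ha⟩
    obtain ⟨b, rfl | rfl, hb⟩ := hζδ
    · exact ⟨_, rfl, hb⟩
    have hab : a ≠ b := by rintro rfl; exact hne rfl
    have hζ : s(a, b) ∈ H.edgeSet := (Sym2.mem_and_mem_iff hab).1 ⟨ha, hb⟩ ▸ ζ.2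
    exact (hH _ (is3Clique_triple_iff.2 ⟨hε, hδ, hζ⟩)).elim

theorem IsBlock.preimage {V' : Type*} {L' : SimpleGraph V'} {U : Set V'} (hU : IsBlock L' U)
    (φ : L ≃g L') : IsBlock L (φ ⁻¹' U) where
  isClique := fun _ ha _ hb hab ↦ φ.map_adj_iff.1 (hU.isClique ha hb (φ.injective.ne hab))
  mem := fun _ ha _ hb hab _ hva hvb ↦ hU.mem ha hb (φ.injective.ne hab)
    (hva.imp (congrArg φ) φ.map_adj_iff.2) (hvb.imp (congrArg φ) φ.map_adj_iff.2)

theorem closedNbhd_iso_symm {V' : Type*} {L' : SimpleGraph V'} (φ : L ≃g L') (v : V') :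
    closedNbhd L (φ.symm v) = φ ⁻¹' closedNbhd L' v := by
  ext w
  refine or_congr φ.toEquiv.eq_symm_apply ?_
  rw [← φ.map_adj_iff, φ.apply_symm_apply]

theorem IsSpider.not_lineGraph_adj (hs : IsSpider H u p q) {i j : Fin 3} (hij : i ≠ j) :
    ¬ H.lineGraph.Adj ⟨s(p i, q i), hs.adj i⟩ ⟨s(p j, q j), hs.adj j⟩ := by
  rw [lineGraph_adj_iff_exists]
  rintro ⟨-, x, hxi, hxj⟩
  rcases Sym2.mem_iff.1 hxi with rfl | rfl <;> rcases Sym2.mem_iff.1 hxj with h | h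
  exacts [hij (hs.injective_p h), hs.ne i j h, hs.ne j i h.symm, hij (hs.injective_q h)]

theorem IsSpider.notMem_edgesAt_center (hs : IsSpider H u p q) (i : Fin 3) :
    (⟨s(p i, q i), hs.adj i⟩ : H.edgeSet) ∉ edgesAt H {u} := by
  rintro ⟨_, rfl, hu⟩
  exact (Sym2.mem_iff.1 hu).elim (hs.adj_center i).ne (hs.center_ne i)

theorem spiderBound_of_lineGraph_iso [Fintype V] (hG : ClawFree G) (hGL : G ≤ L)
    (hL : ClawFree L) (hD : DiamondFree L) (hC : EdgesInConnectedCliques G L)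
    (hN : NetEndsSatisfy G fun v ↦ Fintype.card V + 1 ≤ 3 * (closedNbhd G v).ncard)
    (hH : H.CliqueFree 3) (φ : L ≃g H.lineGraph) : SpiderBound H := by
  intro u p q hs
  have hinner (i) : (⟨s(u, p i), hs.adj_center i⟩ : H.edgeSet) ∈ edgesAt H {u} :=
    ⟨u, rfl, Sym2.mem_mk_left _ _⟩
  have hncard (T : Set H.edgeSet) : (φ ⁻¹' T).ncard = T.ncard :=
    Set.ncard_preimage_of_injective_subset_range φ.injective (by simp [φ.surjective.range_eq])
  have key := card_lt_of_three_adj_block (t := fun i ↦ φ.symm ⟨s(u, p i), hs.adj_center i⟩)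
    (f := fun i ↦ φ.symm ⟨s(p i, q i), hs.adj i⟩) hG hGL hL hD hC
    ((isBlock_edgesAt_singleton hH u).preimage φ) hN
    (fun i ↦ by simpa using hinner i)
    (fun i j hij ↦ hs.injective_p
      (Sym2.congr_right.1 (congrArg Subtype.val (φ.symm.injective hij))))
    (fun i ↦ φ.symm.map_adj_iff.2 (lineGraph_adj_iff_exists.2
      ⟨fun h ↦ hs.notMem_edgesAt_center i (h ▸ hinner i), p i, by simp, by simp⟩))
    (fun i ↦ by simpa using hs.notMem_edgesAt_center i)
    (fun i j hij ↦ φ.symm.map_adj_iff.not.2 (hs.not_lineGraph_adj hij))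
  simp only [closedNbhd_iso_symm, closedNbhd_lineGraph, ← Set.preimage_iUnion, ← Set.preimage_union,
    ← Set.preimage_inter, hncard, ← edgesAt_iUnion, ← edgesAt_union] at key
  have hcompl := Set.ncard_add_ncard_compl (φ ⁻¹' edgesAt H ({u} ∪ ⋃ i, {p i, q i}))
  rw [← Set.preimage_compl, hncard, hncard, Nat.card_eq_fintype_card] at hcompl
  omega

end Spiders

section EssentialEdgeConnectivity

variable {V W : Type*} {G L : SimpleGraph V} {H : SimpleGraph W} {J : Set W}

theorem TwoConnected.mono [Fintype V] (hG : TwoConnected G) (hGL : G ≤ L) : TwoConnected L :=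
  ⟨hG.1, fun v ↦ (hG.2 v).mono (comap_monotone _ hGL)⟩

theorem TwoConnected.connected [Fintype V] (hG : TwoConnected G) : G.Connected := by
  have : Nonempty V := Fintype.card_pos_iff.1 (by have := hG.1; omega)
  refine ⟨fun a b ↦ ?_⟩
  obtain ⟨c, hca, hcb⟩ := ENat.exists_ne_ne_of_three_le (α := V)
    (by rw [ENat.card_eq_coe_fintype_card]; exact_mod_cast hG.1) a b
  exact ((hG.2 c).preconnected ⟨a, hca.symm⟩ ⟨b, hcb.symm⟩).map (Embedding.induce _).toHom

/-- If two edges of `H` lie on different sides of a vertex cut, the cut has at least two edges. -/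
def EssentiallyTwoEdgeConnected (H : SimpleGraph W) : Prop :=
  ∀ ⦃J : Set W⦄, (edgesAt H J)ᶜ.Nonempty → (edgesAt H Jᶜ)ᶜ.Nonempty →
    (edgesAt H J ∩ edgesAt H Jᶜ).Nontrivial

theorem exists_mem_cut_of_preconnected {K : SimpleGraph V} (hK : K.Preconnected)
    (ψ : K →g H.lineGraph) {a b : V} (ha : ψ a ∉ edgesAt H J) (hb : ψ b ∉ edgesAt H Jᶜ) :
    ∃ c, ψ c ∈ edgesAt H J ∩ edgesAt H Jᶜ := by
  obtain ⟨p⟩ := hK b a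
  have haJ : ψ a ∈ edgesAt H Jᶜ :=
    ⟨_, fun h ↦ ha ⟨_, h, Sym2.out_fst_mem _⟩, Sym2.out_fst_mem (ψ a : Sym2 W)⟩
  obtain ⟨d, -, hfst, hsnd⟩ :=
    p.exists_boundary_dart {c | ψ c ∉ edgesAt H Jᶜ} hb (fun h ↦ h haJ)
  obtain ⟨-, x, hx₁, hx₂⟩ := lineGraph_adj_iff_exists.1 (ψ.map_adj d.adj)
  exact ⟨d.snd, ⟨x, not_not.1 fun hx ↦ hfst ⟨x, hx, hx₁⟩, hx₂⟩, not_not.1 hsnd⟩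

theorem TwoConnected.essentiallyTwoEdgeConnected [Fintype V] (hL : TwoConnected L)
    (φ : L ≃g H.lineGraph) : EssentiallyTwoEdgeConnected H := by
  rintro J ⟨ε, hε⟩ ⟨δ, hδ⟩
  rw [Set.mem_compl_iff, ← φ.apply_symm_apply ε] at hε
  rw [Set.mem_compl_iff, ← φ.apply_symm_apply δ] at hδ
  obtain ⟨c, hc⟩ := exists_mem_cut_of_preconnected hL.connected.preconnected φ.toHom hε hδ
  have hεc : φ.symm ε ≠ c := by rintro rfl; exact hε hc.1
  have hδc : φ.symm δ ≠ c := by rintro rfl; exact hδ hc.2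
  obtain ⟨c', hc'⟩ := exists_mem_cut_of_preconnected (hL.2 c).preconnected
    (φ.toHom.comp (Embedding.induce _).toHom) (a := ⟨_, hεc⟩) (b := ⟨_, hδc⟩) hε hδ
  exact ⟨_, hc, _, hc', fun h ↦ c'.2 (φ.injective h).symm⟩

end EssentialEdgeConnectivity

section DominatingCycles

variable {W : Type*} {H : SimpleGraph W} {S J : Set W} {Z : Finset W} {m : Multiset W}
  {a b u v p x y : W}

theorem WalkOn.eq_or_exists_cons (h : WalkOn H a b m) :
    (a = b ∧ m = {a}) ∨ ∃ c m', H.Adj a c ∧ WalkOn H c b m' ∧ m = {a} + m' := by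
  obtain ⟨p | ⟨hac, p⟩, rfl⟩ := h
  · exact .inl ⟨rfl, rfl⟩
  · exact .inr ⟨_, _, hac, ⟨p, rfl⟩, rfl⟩

theorem WalkOn.eq_left_or_eq_right_of_card_le_two (h : WalkOn H a b m) (hm : m.card ≤ 2)
    (hv : v ∈ m) : v = a ∨ v = b := by
  by_contra! hne
  obtain ⟨m₁, m₂, p, q, rfl, hp, -, -, hq⟩ := h.exists_split_of_ne hv hne.1 hne.2
  have := Multiset.card_pos_iff_exists_mem.2 ⟨_, hp.left_mem⟩
  have := Multiset.card_pos_iff_exists_mem.2 ⟨_, hq.left_mem⟩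
  simp only [Multiset.card_add, Multiset.card_singleton] at hm
  omega

theorem WalkOn.eq_left_of_card_le_one (h : WalkOn H a b m) (hm : m.card ≤ 1) (hv : v ∈ m) :
    v = a := by
  obtain ⟨x, rfl⟩ := Multiset.card_eq_one.1
    (hm.antisymm (Multiset.card_pos_iff_exists_mem.2 ⟨v, hv⟩))
  exact (Multiset.mem_singleton.1 hv).trans (Multiset.mem_singleton.1 h.left_mem).symm

theorem exists_walkOn_of_induce_preconnected (hJ : (H.induce J).Preconnected) (hx : x ∈ J)
    (hy : y ∈ J) : ∃ m, WalkOn H x y m ∧ m.Nodup ∧ ∀ z ∈ m, z ∈ J := by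
  obtain ⟨p, hp⟩ := (hJ ⟨x, hx⟩ ⟨y, hy⟩).exists_isPath
  refine ⟨_, ⟨p.map (Embedding.induce J).toHom, rfl⟩, ?_, fun z hz ↦ ?_⟩
  · exact (hp.map Subtype.val_injective).support_nodup
  · obtain ⟨z, -, rfl⟩ := List.mem_map.1 (Walk.support_map _ p ▸ Multiset.mem_coe.1 hz)
    exact z.2

theorem WalkOn.card_le_ncard_add_one [Finite W] (h : WalkOn H a b m) (hm : m.Nodup) :
    m.card ≤ (edgesAt H {x | x ∉ m})ᶜ.ncard + 1 := by
  classical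
  obtain ⟨p, rfl⟩ := h
  have hp : p.IsPath := .mk' hm
  have hsub : (p.edges.toFinset : Set (Sym2 W)) ⊆
      Subtype.val '' (edgesAt H {x | x ∉ (p.support : Multiset W)})ᶜ := by
    intro ε hε
    have hε := List.mem_toFinset.1 hε
    refine ⟨⟨ε, p.edges_subset_edgeSet hε⟩, ?_, rfl⟩
    rintro ⟨x, hx, hxε⟩
    exact hx (p.mem_support_of_mem_edges hε hxε)
  have := Set.ncard_le_ncard hsub
  rw [Set.ncard_coe_finset, List.toFinset_card_of_nodup hp.edges_nodup, p.length_edges,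
    Set.ncard_image_of_injective _ Subtype.val_injective] at this
  rw [Multiset.coe_card, p.length_support]
  omega

/-- The vertex set `Z` is spanned by a cycle of `H`. -/
def IsCyc (H : SimpleGraph W) (Z : Finset W) : Prop :=
  3 ≤ Z.card ∧ ∃ a b, H.Adj b a ∧ WalkOn H a b Z.val

theorem IsCyc.exists_rotate (h : IsCyc H Z) (hu : u ∈ Z) : ∃ b, H.Adj b u ∧ WalkOn H u b Z.val := by
  obtain ⟨-, a, b, hba, h⟩ := h
  obtain ⟨m₁, m₂, hm, ⟨rfl, rfl⟩ | ⟨p, hp, hpu⟩, hr⟩ := h.exists_split hu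
  · exact ⟨b, hba, h⟩
  refine ⟨p, hpu, ?_⟩
  obtain ⟨rfl, rfl⟩ | ⟨q, huq, hq⟩ := hr
  · rw [hm, add_zero, add_comm]
    exact hp.cons hba
  · rw [hm, add_assoc, add_comm]
    exact (hq.cons huq).append hba hp

theorem IsCyc.exists_split (hZ : IsCyc H Z) (hH : H.CliqueFree 3) (hu : u ∈ Z) :
    ∃ p₁ p₂ z₁ z₂ I, Z.val = {u} + {p₁} + {p₂} + I ∧ H.Adj u p₁ ∧ H.Adj u p₂ ∧ H.Adj p₁ z₁ ∧
      H.Adj p₂ z₂ ∧ WalkOn H z₁ z₂ I := by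
  classical
  obtain ⟨p₂, hp₂u, h⟩ := hZ.exists_rotate hu
  have hcard : 3 ≤ Z.val.card := hZ.1
  obtain ⟨-, hZu⟩ | ⟨p₁, m, hup₁, h, hm⟩ := h.eq_or_exists_cons
  · simp [hZu] at hcard
  obtain ⟨-, rfl⟩ | ⟨z₂, m, hp₂z₂, h', rfl⟩ := h.reverse.eq_or_exists_cons
  · simp [hm] at hcard
  obtain ⟨rfl, -⟩ | ⟨z₁, I, hp₁z₁, hI, rfl⟩ := h'.reverse.eq_or_exists_cons
  · exact (hH _ (is3Clique_triple_iff.2 ⟨hup₁, hp₂u.symm, hp₂z₂.symm⟩)).elim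
  exact ⟨p₁, p₂, z₁, z₂, I, by rw [hm]; abel, hup₁, hp₂u.symm, hp₁z₁, hp₂z₂, hI⟩

/-- The vertices of `S` with a neighbour outside `S`. -/
def vertexBoundary (H : SimpleGraph W) (S : Set W) : Set W := {x ∈ S | ∃ y ∉ S, H.Adj x y}

theorem mem_of_adj_of_adj (hS : (vertexBoundary H S).Subsingleton) (hx : x ∈ S) (hy : y ∈ S)
    (hxy : x ≠ y) (hxv : H.Adj x v) (hyv : H.Adj y v) : v ∈ S := by
  by_contra hv
  exact hxy (hS ⟨hx, v, hv, hxv⟩ ⟨hy, v, hv, hyv⟩)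

/-- The vertex set `Z` of a cycle within `S` through all vertices that link `S` to the rest. -/
structure IsCycIn (H : SimpleGraph W) (S : Set W) (Z : Finset W) : Prop where
  isCyc : IsCyc H Z
  subset : (Z : Set W) ⊆ S
  vertexBoundary_subset : vertexBoundary H S ⊆ Z

/-- A cycle within `S` which meets as many edges of `H` as possible. -/
structure IsMaxCyc (H : SimpleGraph W) (S : Set W) (Z : Finset W) : Prop extends
    IsCycIn H S Z where
  ncard_le : ∀ ⦃Z'⦄, IsCycIn H S Z' → (edgesAt H Z').ncard ≤ (edgesAt H Z).ncard

/-- `J` is the vertex set of a component of `H - Z` inside `S`, with at least two vertices. -/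
structure IsComp (H : SimpleGraph W) (S : Set W) (Z : Finset W) (J : Set W) : Prop where
  subset : J ⊆ S \ Z
  mem_of_adj : ∀ ⦃x⦄, x ∈ J → ∀ ⦃y⦄, y ∉ Z → H.Adj x y → y ∈ J
  preconnected : (H.induce J).Preconnected
  nontrivial : J.Nontrivial

theorem IsComp.exists_adj (hJ : IsComp H S Z J) (hx : x ∈ J) : ∃ y ∈ J, H.Adj x y :=
  have := hJ.nontrivial.coe_sort
  have ⟨y, hxy⟩ := hJ.preconnected.exists_adj_of_nontrivial ⟨x, hx⟩
  ⟨y, y.2, hxy⟩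

/-- `x` has a neighbour in `J`. -/
def IsAttached (H : SimpleGraph W) (J : Set W) (x : W) : Prop := ∃ j ∈ J, H.Adj x j

theorem IsComp.exists_isCyc (hJ : IsComp H S Z J) (h : WalkOn H a b m) (hm : m.Nodup)
    (hmJ : ∀ x ∈ m, x ∉ J) (h2 : 2 ≤ m.card) (ha : IsAttached H J a) (hb : IsAttached H J b) :
    ∃ Z', IsCyc H Z' ∧ (∀ x ∈ m, x ∈ Z') ∧ (∀ x ∈ Z', x ∈ m ∨ x ∈ J) ∧ ∃ j ∈ J, j ∈ Z' := by
  obtain ⟨ja, hja, haj⟩ := ha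
  obtain ⟨jb, hjb, hbj⟩ := hb
  obtain ⟨q, hq, hqn, hqJ⟩ := exists_walkOn_of_induce_preconnected hJ.preconnected hjb hja
  have hnodup : (m + q).Nodup := Multiset.nodup_add.2
    ⟨hm, hqn, Multiset.disjoint_left.2 fun hx hx' ↦ hmJ _ hx (hqJ _ hx')⟩
  refine ⟨⟨m + q, hnodup⟩, ⟨?_, a, ja, haj.symm, h.append hbj hq⟩,
    fun x hx ↦ Multiset.mem_add.2 (.inl hx), fun x hx ↦ (Multiset.mem_add.1 hx).imp_right (hqJ x),
    jb, hjb, Multiset.mem_add.2 (.inr hq.left_mem)⟩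
  have := Multiset.card_pos_iff_exists_mem.2 ⟨_, hq.left_mem⟩
  simp only [Finset.card_mk, Multiset.card_add]
  omega

/-- Closing the walk through `J` gives a cycle that also meets an edge inside `J`, so by maximality
it has to miss an edge that `Z` meets. -/
theorem IsMaxCyc.exists_adj_notMem [Finite W] (hZ : IsMaxCyc H S Z) (hJ : IsComp H S Z J)
    (h : WalkOn H a b m) (hm : m.Nodup) (h2 : 2 ≤ m.card) (hmS : ∀ x ∈ m, x ∈ S \ J)
    (hS : ∀ x ∈ vertexBoundary H S, x ∈ m) (ha : IsAttached H J a) (hb : IsAttached H J b) :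
    ∃ x ∈ Z, x ∉ m ∧ ∃ y ∉ m, H.Adj x y := by
  obtain ⟨Z', hcyc, hmZ', hZ'm, j, hj, hjZ'⟩ :=
    hJ.exists_isCyc h hm (fun x hx ↦ (hmS x hx).2) h2 ha hb
  have hZ' : IsCycIn H S Z' := ⟨hcyc, fun x hx ↦ (hZ'm x hx).elim (fun h ↦ (hmS x h).1)
    fun h ↦ (hJ.subset h).1, fun x hx ↦ hmZ' x (hS x hx)⟩
  obtain ⟨j', hj', hjj'⟩ := hJ.exists_adj hj
  have hjj'Z : (⟨s(j, j'), hjj'⟩ : H.edgeSet) ∉ edgesAt H Z := by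
    rintro ⟨x, hxZ, hx⟩
    rcases Sym2.mem_iff.1 hx with rfl | rfl
    exacts [(hJ.subset hj).2 hxZ, (hJ.subset hj').2 hxZ]
  have hnot : ¬ edgesAt H Z ⊆ edgesAt H Z' := fun hsub ↦ (hZ.ncard_le hZ').not_gt <|
    Set.ncard_lt_ncard <| hsub.ssubset_of_mem_notMem ⟨j, hjZ', Sym2.mem_mk_left _ _⟩ hjj'Z
  obtain ⟨⟨ε, hε⟩, ⟨x, hxZ, hx⟩, hεZ'⟩ := Set.not_subset.1 hnot
  obtain ⟨y, rfl⟩ := Sym2.mem_iff_exists.1 hx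
  exact ⟨x, hxZ, fun hxm ↦ hεZ' ⟨x, hmZ' x hxm, hx⟩, y,
    fun hym ↦ hεZ' ⟨y, hmZ' y hym, Sym2.mem_mk_right _ _⟩, hε⟩

theorem IsMaxCyc.not_walkOn_add [Finite W] (hZ : IsMaxCyc H S Z) (hJ : IsComp H S Z J)
    {X : Multiset W} (h : WalkOn H a b (Z.val + X)) (hX : X.Nodup)
    (hXS : ∀ x ∈ X, x ∉ Z ∧ x ∈ S ∧ x ∉ J) (ha : IsAttached H J a) : ¬ IsAttached H J b := by
  intro hb
  have hZm {x : W} (hx : x ∈ Z) : x ∈ Z.val + X := Multiset.mem_add.2 (.inl hx)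
  obtain ⟨x, hxZ, hxm, -⟩ := hZ.exists_adj_notMem hJ h
    (Multiset.nodup_add.2 ⟨Z.nodup, hX, Multiset.disjoint_left.2 fun hx hx' ↦ (hXS _ hx').1 hx⟩)
    (by have : 3 ≤ Z.val.card := hZ.isCyc.1; rw [Multiset.card_add]; omega)
    (fun x hx ↦ (Multiset.mem_add.1 hx).elim (fun hx ↦ ⟨hZ.subset hx, fun h ↦ (hJ.subset h).2 hx⟩)
      fun hx ↦ (hXS x hx).2)
    (fun x hx ↦ hZm (hZ.vertexBoundary_subset hx)) ha hb
  exact hxm (hZm hxZ)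

theorem IsMaxCyc.exists_adj_of_walkOn [Finite W] (hZ : IsMaxCyc H S Z) (hJ : IsComp H S Z J)
    (h : WalkOn H a b m) (hm : Z.val = {p} + m) (ha : IsAttached H J a) (hb : IsAttached H J b) :
    ∃ q ∉ Z, H.Adj p q := by
  by_contra! hp
  have hmem {x : W} : x ∈ Z ↔ x = p ∨ x ∈ m := by
    rw [← Finset.mem_val, hm, Multiset.mem_add, Multiset.mem_singleton]
  have hnodup : m.Nodup := (Multiset.nodup_add.1 (hm ▸ Z.nodup)).2.1
  have hcard : 3 ≤ Z.val.card := hZ.isCyc.1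
  rw [hm, Multiset.card_add, Multiset.card_singleton] at hcard
  have hpS : p ∉ vertexBoundary H S := fun ⟨_, y, hyS, hpy⟩ ↦ hp y (fun hy ↦ hyS (hZ.subset hy)) hpy
  obtain ⟨x, hxZ, hxm, y, hym, hxy⟩ := hZ.exists_adj_notMem hJ h hnodup (by omega)
    (fun x hx ↦ ⟨hZ.subset (hmem.2 (.inr hx)), fun h ↦ (hJ.subset h).2 (hmem.2 (.inr hx))⟩)
    (fun x hx ↦ (hmem.1 (hZ.vertexBoundary_subset hx)).resolve_left fun h ↦ hpS (h ▸ hx)) ha hb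
  obtain rfl := (hmem.1 hxZ).resolve_right hxm
  exact hp y (fun hy ↦ (hmem.1 hy).elim hxy.ne' hym) hxy

end DominatingCycles

section Forks

variable {W : Type*} {H : SimpleGraph W} {S J : Set W} {Z : Finset W} {u a v : W}

/-- An edge `u - p` of the cycle `Z` together with a further neighbour `q` of `p`, chosen so that
`p - q` can serve as a leg of a spider centred at `u`. Here `q` is either the next vertex of the
cycle, or off the cycle; `on` and `off` record which, as multisets `{q}` and `0`. The cycle goes on
at the vertex `exit`, which in the second case has a neighbour in `J`. -/
structure Arm (H : SimpleGraph W) (Z : Finset W) (J : Set W) (u : W) where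
  (p q exit : W)
  (on off : Multiset W)
  adj_root : H.Adj u p
  adj : H.Adj p q
  exit_adj : on = {q} ∧ off = 0 ∧ H.Adj q exit ∨
    on = 0 ∧ off = {q} ∧ q ∉ Z ∧ H.Adj p exit ∧ IsAttached H J exit
  not_isAttached_p : ¬ IsAttached H J p
  not_isAttached_q : ¬ IsAttached H J q

namespace Arm

variable {A B : Arm H Z J u}

theorem on_add_off (A : Arm H Z J u) : A.on + A.off = {A.q} := by
  rcases A.exit_adj with ⟨hon, hoff, -⟩ | ⟨hon, hoff, -⟩ <;> simp [hon, hoff]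

theorem eq_of_mem_off (hv : v ∈ A.off) : v = A.q :=
  Multiset.mem_singleton.1 (A.on_add_off ▸ Multiset.mem_add.2 (.inr hv))

theorem notMem_of_mem_off (hv : v ∈ A.off) : v ∉ Z := by
  rcases A.exit_adj with ⟨-, hoff, -⟩ | ⟨-, hoff, hq, -⟩ <;> rw [hoff] at hv
  · exact absurd hv (Multiset.notMem_zero v)
  · exact Multiset.mem_singleton.1 hv ▸ hq

theorem q_notMem (A : Arm H Z J u) : A.q ∉ J := fun h ↦ A.not_isAttached_p ⟨A.q, h, A.adj⟩

theorem nodup_off (hq : A.q ≠ B.q) : (A.off + B.off).Nodup := by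
  rcases A.exit_adj with ⟨-, hA, -⟩ | ⟨-, hA, -⟩ <;>
    rcases B.exit_adj with ⟨-, hB, -⟩ | ⟨-, hB, -⟩ <;> simp [hA, hB, hq]

end Arm

theorem WalkOn.concat_arm {A : Arm H Z J u} {M : Multiset W}
    (h : WalkOn H a A.exit M) : WalkOn H a A.p (M + A.on + {A.p}) := by
  rcases A.exit_adj with ⟨hon, -, hexit⟩ | ⟨hon, -, -, hexit, -⟩
  · exact hon ▸ (h.concat hexit.symm).concat A.adj.symm
  · exact hon ▸ (add_zero M).symm ▸ h.concat hexit.symm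

theorem IsComp.edgesAt_inter_eq_empty (hJ : IsComp H S Z J) (A : Arm H Z J u) (hA : A.p ∈ Z)
    {T : Set W} (hT : T ⊆ J) : edgesAt H {A.p, A.q} ∩ edgesAt H T = ∅ := by
  have hdisj : Disjoint {A.p, A.q} T := by
    refine Set.disjoint_left.2 ?_
    rintro x (rfl | rfl) hx
    exacts [(hJ.subset (hT hx)).2 hA, A.q_notMem (hT hx)]
  refine Set.eq_empty_iff_forall_notMem.2 fun ε hε ↦ ?_
  obtain ⟨x, rfl | rfl, y, hy, hxy, -⟩ := exists_adj_of_mem_edgesAt_inter hdisj hε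
  exacts [A.not_isAttached_p ⟨y, hT hy, hxy⟩, A.not_isAttached_q ⟨y, hT hy, hxy⟩]

/-- The cycle `Z` consists of `u`, the two arms `A` and `B` and a path with vertices `M` joining
their exits. -/
structure IsFork (A B : Arm H Z J u) (M : Multiset W) : Prop where
  walk : WalkOn H A.exit B.exit M
  val_eq : Z.val = {u} + {A.p} + {B.p} + (A.on + B.on + M)

namespace IsFork

variable {A B : Arm H Z J u} {M : Multiset W}

theorem symm (h : IsFork A B M) : IsFork B A M where
  walk := h.walk.reverse
  val_eq := h.val_eq.trans (by abel)

theorem p_mem (h : IsFork A B M) : A.p ∈ Z := by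
  rw [← Finset.mem_val, h.val_eq]; simp

theorem p_ne (h : IsFork A B M) : A.p ≠ B.p := by
  have hnd : ({A.p} + {B.p} + ({u} + A.on + B.on + M)).Nodup := by
    convert Z.nodup using 1; rw [h.val_eq]; abel
  simpa using (Multiset.nodup_add.1 hnd).1

theorem q_mem (hZ : IsMaxCyc H S Z) (hS : (vertexBoundary H S).Subsingleton)
    (h : IsFork A B M) (hadj : H.Adj A.p B.q) : B.q ∈ S :=
  mem_of_adj_of_adj hS (hZ.subset h.p_mem) (hZ.subset h.symm.p_mem) h.p_ne hadj B.adj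

theorem nodup (h : IsFork A B M) (hq : A.q ≠ B.q) :
    ({u} + {A.p} + {B.p} + {A.q} + {B.q} + M).Nodup := by
  have heq : {u} + {A.p} + {B.p} + {A.q} + {B.q} + M = Z.val + (A.off + B.off) := by
    rw [h.val_eq, ← A.on_add_off, ← B.on_add_off]
    abel
  rw [heq, Multiset.nodup_add, Multiset.disjoint_left]
  exact ⟨Z.nodup, Arm.nodup_off hq,
    fun hx hx' ↦ (Multiset.mem_add.1 hx').elim Arm.notMem_of_mem_off Arm.notMem_of_mem_off hx⟩

theorem isSpider (h : IsFork A B M) (hJ : IsComp H S Z J) (hq : A.q ≠ B.q) {j j' : W}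
    (hj : j ∈ J) (hj' : j' ∈ J) (huj : H.Adj u j) (hjj' : H.Adj j j') :
    IsSpider H u ![A.p, B.p, j] ![A.q, B.q, j'] := by
  have hjZ : ∀ x ∈ ({j, j'} : Set W), x ∉ Z ∧ x ≠ A.q ∧ x ≠ B.q := by
    rintro x (rfl | rfl)
    exacts [⟨(hJ.subset hj).2, fun h ↦ A.q_notMem (h ▸ hj), fun h ↦ B.q_notMem (h ▸ hj)⟩,
      ⟨(hJ.subset hj').2, fun h ↦ A.q_notMem (h ▸ hj'), fun h ↦ B.q_notMem (h ▸ hj')⟩]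
  have huZ : u ∈ Z := by rw [← Finset.mem_val, h.val_eq]; simp
  have hnd := (Multiset.nodup_add.1 (h.nodup hq)).1
  simp only [Multiset.nodup_add, Multiset.nodup_singleton, Multiset.disjoint_singleton,
    Multiset.mem_add, Multiset.mem_singleton, not_or, true_and] at hnd
  have hA := h.p_mem
  have hB := h.symm.p_mem
  have hne := hjj'.ne
  refine ⟨?_, ?_, ?_, ?_, ?_, ?_⟩
  · simp [Fin.forall_fin_succ, A.adj_root, B.adj_root, huj]
  · simp [Fin.forall_fin_succ, A.adj, B.adj, hjj']
  all_goals
    simp only [Function.Injective, Fin.forall_fin_succ, Matrix.cons_val_zero,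
      Matrix.cons_val_succ, Matrix.cons_val_fin_one, forall_const]
    grind

variable [Finite W]

theorem q_ne (h : IsFork A B M) (hZ : IsMaxCyc H S Z) (hJ : IsComp H S Z J)
    (hS : (vertexBoundary H S).Subsingleton) (hu : IsAttached H J u) : A.q ≠ B.q := by
  intro hq
  have hnd := h.val_eq ▸ Z.nodup
  have hmem {x : W} (hx : x ∈ A.on + B.on) : x ∈ Z := by
    rw [← Finset.mem_val, h.val_eq]
    exact Multiset.mem_add.2 (.inr (Multiset.mem_add.2 (.inl hx)))
  rcases A.exit_adj with ⟨hA, -⟩ | ⟨hA, -, hAZ, -, hatt⟩ <;>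
    rcases B.exit_adj with ⟨hB, -⟩ | ⟨hB, -, hBZ, hexit, -⟩
  · simp [hA, hB, hq] at hnd
  · exact hBZ (hq ▸ hmem (by simp [hA]))
  · exact hAZ (hmem (by simp [hB, hq]))
  · have hw : WalkOn H u A.exit (Z.val + {B.q}) := by
      convert (((h.walk.reverse.cons hexit).cons B.adj.symm).cons (hq ▸ A.adj)).cons A.adj_root
        using 1
      rw [h.val_eq, hA, hB]
      abel
    refine hZ.not_walkOn_add hJ hw (Multiset.nodup_singleton _) (fun x hx ↦ ?_) hu hatt
    rw [Multiset.mem_singleton.1 hx]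
    exact ⟨hBZ, q_mem hZ hS h (hq ▸ A.adj), B.q_notMem⟩

theorem not_isAttached_of_walkOn (hZ : IsMaxCyc H S Z) (hJ : IsComp H S Z J)
    (hu : IsAttached H J u) (hq : A.q ≠ B.q) (hw : WalkOn H a u (Z.val + X))
    (hX : X ≤ A.off + B.off) (hXS : ∀ x ∈ X, x ∈ S) : ¬ IsAttached H J a := by
  refine fun ha ↦ hZ.not_walkOn_add hJ hw (Multiset.nodup_of_le hX (Arm.nodup_off hq))
    (fun x hx ↦ ?_) ha hu
  rcases Multiset.mem_add.1 (Multiset.mem_of_le hX hx) with h | h <;>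
    refine ⟨Arm.notMem_of_mem_off h, hXS x hx, Arm.eq_of_mem_off h ▸ Arm.q_notMem _⟩

theorem not_isAttached_exit_of_adj_p_q (h : IsFork A B M) (hZ : IsMaxCyc H S Z)
    (hJ : IsComp H S Z J) (hS : (vertexBoundary H S).Subsingleton) (hu : IsAttached H J u)
    (hq : A.q ≠ B.q) (hadj : H.Adj A.p B.q) : ¬ IsAttached H J B.exit := by
  have hw : WalkOn H B.exit u (Z.val + B.off) := by
    convert ((h.walk.reverse.concat_arm.concat hadj).concat B.adj.symm).concat B.adj_root.symm
      using 1
    rw [h.val_eq, ← B.on_add_off]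
    abel
  exact not_isAttached_of_walkOn hZ hJ hu hq hw (Multiset.le_add_left _ _)
    fun x hx ↦ Arm.eq_of_mem_off hx ▸ q_mem hZ hS h hadj

theorem not_isAttached_exit_of_adj_q_q (h : IsFork A B M) (hZ : IsMaxCyc H S Z)
    (hJ : IsComp H S Z J) (hS : (vertexBoundary H S).Subsingleton) (hu : IsAttached H J u)
    (hq : A.q ≠ B.q) (hadj : H.Adj A.q B.q) (hA : H.Adj A.p A.exit) : ¬ IsAttached H J B.exit := by
  have hw : WalkOn H B.exit u (Z.val + (A.off + B.off)) := by
    convert ((((h.walk.reverse.concat hA.symm).concat A.adj).concat hadj).concat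
      B.adj.symm).concat B.adj_root.symm using 1
    rw [h.val_eq, ← A.on_add_off, ← B.on_add_off]
    abel
  have hnd := h.nodup hq
  have hpA := hZ.subset h.p_mem
  have hpB := hZ.subset h.symm.p_mem
  have hqS : A.q ∈ S ∧ B.q ∈ S := by
    by_cases hAS : A.q ∈ S
    · refine ⟨hAS, mem_of_adj_of_adj hS hAS hpB ?_ hadj B.adj⟩
      rintro heq
      simp [heq] at hnd
    · have hBS : B.q ∈ S := by
        by_contra hBS
        exact h.p_ne (hS ⟨hpA, _, hAS, A.adj⟩ ⟨hpB, _, hBS, B.adj⟩)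
      refine ⟨mem_of_adj_of_adj hS hpA hBS ?_ A.adj hadj.symm, hBS⟩
      rintro heq
      simp [heq] at hnd
  refine not_isAttached_of_walkOn hZ hJ hu hq hw le_rfl fun x hx ↦ ?_
  rcases Multiset.mem_add.1 hx with hx | hx
  exacts [Arm.eq_of_mem_off hx ▸ hqS.1, Arm.eq_of_mem_off hx ▸ hqS.2]

theorem not_isAttached_exit_of_adj_of_adj (h : IsFork A B M) (hZ : IsMaxCyc H S Z)
    (hJ : IsComp H S Z J) (hS : (vertexBoundary H S).Subsingleton) (hu : IsAttached H J u)
    (hq : A.q ≠ B.q) (hAB : H.Adj A.p B.q) (hBA : H.Adj B.p A.q) : ¬ IsAttached H J A.exit := by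
  have hw : WalkOn H A.exit u (Z.val + A.off) := by
    rcases B.exit_adj with ⟨hon, -, hexit⟩ | ⟨hon, -, -, hexit, -⟩
    · convert ((((h.walk.concat hexit.symm).concat hAB.symm).concat A.adj).concat
        hBA.symm).concat B.adj_root.symm using 1
      rw [h.val_eq, hon, ← A.on_add_off]
      abel
    · convert (((h.walk.concat hexit.symm).concat hBA).concat A.adj.symm).concat
        A.adj_root.symm using 1
      rw [h.val_eq, hon, ← A.on_add_off]
      abel
  exact not_isAttached_of_walkOn hZ hJ hu hq hw (Multiset.le_add_right _ _)
    fun x hx ↦ Arm.eq_of_mem_off hx ▸ q_mem hZ hS h.symm hBA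

theorem card_le_ncard (h : IsFork A B M) (hbd : SpiderBound H) (hJ : IsComp H S Z J)
    (hu : IsAttached H J u) (hq : A.q ≠ B.q) :
    M.card ≤ (edgesAt H {A.p, A.q} ∩ edgesAt H {B.p, B.q}).ncard := by
  obtain ⟨j, hj, huj⟩ := hu
  obtain ⟨j', hj', hjj'⟩ := hJ.exists_adj hj
  have hM : {u} ∪ ⋃ i, {![A.p, B.p, j] i, ![A.q, B.q, j'] i} ⊆ {x | x ∉ M} := by
    have hMZ {x : W} (hx : x ∈ M) : x ∈ Z := by
      rw [← Finset.mem_val, h.val_eq]; simp [hx]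
    have hdisj {x : W} : x ∈ {u} + {A.p} + {B.p} + {A.q} + {B.q} → x ∉ M :=
      Multiset.disjoint_left.1 (Multiset.nodup_add.1 (h.nodup hq)).2.2
    rintro x (rfl | hx) hxM
    · exact hdisj (by simp) hxM
    simp only [Set.mem_iUnion, Fin.exists_fin_succ, Matrix.cons_val_zero, Matrix.cons_val_succ,
      Set.mem_insert_iff, Set.mem_singleton_iff, IsEmpty.exists_iff, or_false] at hx
    obtain (rfl | rfl) | (rfl | rfl) | rfl | rfl := hx
    exacts [hdisj (by simp) hxM, hdisj (by simp) hxM, hdisj (by simp) hxM, hdisj (by simp) hxM,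
      (hJ.subset hj).2 (hMZ hxM), (hJ.subset hj').2 (hMZ hxM)]
  have hJ' : {j, j'} ⊆ J := Set.pair_subset hj hj'
  have hcount := hbd (h.isSpider hJ hq hj hj' huj hjj')
  simp only [Matrix.cons_val_zero, Matrix.cons_val_one, Matrix.cons_val,
    hJ.edgesAt_inter_eq_empty A h.p_mem hJ', hJ.edgesAt_inter_eq_empty B h.symm.p_mem hJ',
    Set.ncard_empty] at hcount
  have hMcard := h.walk.card_le_ncard_add_one (Multiset.nodup_add.1 (h.nodup hq)).2.1
  have hlt := (Set.ncard_le_ncard (Set.compl_subset_compl.2 (edgesAt_mono hM))).trans_lt hcount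
  omega

theorem card_le_card (h : IsFork A B M) (hH : H.CliqueFree 3) (hbd : SpiderBound H)
    (hJ : IsComp H S Z J) (hu : IsAttached H J u) (hq : A.q ≠ B.q) (T : Finset (Sym2 W))
    (hAB : H.Adj A.p B.q → s(A.p, B.q) ∈ T) (hBA : H.Adj B.p A.q → s(B.p, A.q) ∈ T)
    (hqq : H.Adj A.q B.q → s(A.q, B.q) ∈ T) : M.card ≤ T.card := by
  classical
  have hnd := h.nodup hq
  have hdisj : Disjoint {A.p, A.q} ({B.p, B.q} : Set W) := by
    simp only [Multiset.nodup_add, Multiset.disjoint_singleton, Multiset.mem_add,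
      Multiset.mem_singleton, not_or] at hnd
    simp only [Set.disjoint_insert_left, Set.disjoint_singleton_left, Set.mem_insert_iff,
      Set.mem_singleton_iff, not_or]
    grind
  have hsub : Subtype.val '' (edgesAt H {A.p, A.q} ∩ edgesAt H {B.p, B.q}) ⊆
      (T : Set (Sym2 W)) := by
    rintro _ ⟨ε, hε, rfl⟩
    obtain ⟨x, rfl | rfl, y, rfl | rfl, hxy, hεxy⟩ := exists_adj_of_mem_edgesAt_inter hdisj hε <;>
      rw [hεxy]
    · exact (hH _ (is3Clique_triple_iff.2 ⟨A.adj_root, B.adj_root, hxy⟩)).elim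
    · exact hAB hxy
    · exact Sym2.eq_swap ▸ hBA hxy.symm
    · exact hqq hxy
  have := Set.ncard_le_ncard hsub
  rw [Set.ncard_image_of_injective _ Subtype.val_injective, Set.ncard_coe_finset] at this
  exact (h.card_le_ncard hbd hJ hu hq).trans this

theorem not_isAttached_of_mem (h : IsFork A B M) (hH : H.CliqueFree 3) (hbd : SpiderBound H)
    (hZ : IsMaxCyc H S Z) (hJ : IsComp H S Z J) (hS : (vertexBoundary H S).Subsingleton)
    (hu : IsAttached H J u) (hvM : v ∈ M) : ¬ IsAttached H J v := by
  classical
  have hq := h.q_ne hZ hJ hS hu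
  have hcard := h.card_le_card hH hbd hJ hu hq
  intro hv
  by_cases hqq : H.Adj A.q B.q
  · have hM : M.card ≤ 1 := hcard {s(A.q, B.q)}
      (fun hAB ↦ (hH _ (is3Clique_triple_iff.2 ⟨A.adj, hAB, hqq⟩)).elim)
      (fun hBA ↦ (hH _ (is3Clique_triple_iff.2 ⟨B.adj, hBA, hqq.symm⟩)).elim) (by simp)
    have hvA := h.walk.eq_left_of_card_le_one hM hvM
    have hvB := h.symm.walk.eq_left_of_card_le_one hM hvM
    rcases A.exit_adj with ⟨-, -, hA⟩ | ⟨-, -, -, hA, -⟩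
    · rcases B.exit_adj with ⟨-, -, hB⟩ | ⟨-, -, -, hB, -⟩
      · exact hH _ (is3Clique_triple_iff.2 ⟨hqq, hvA ▸ hA, hvB ▸ hB⟩)
      · exact h.symm.not_isAttached_exit_of_adj_q_q hZ hJ hS hu hq.symm hqq.symm hB (hvA ▸ hv)
    · exact h.not_isAttached_exit_of_adj_q_q hZ hJ hS hu hq hqq hA (hvB ▸ hv)
  by_cases hAB : H.Adj A.p B.q <;> by_cases hBA : H.Adj B.p A.q
  · have hM : M.card ≤ 2 := (hcard {s(A.p, B.q), s(B.p, A.q)} (by simp) (by simp)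
      fun h ↦ absurd h hqq).trans Finset.card_le_two
    obtain rfl | rfl := h.walk.eq_left_or_eq_right_of_card_le_two hM hvM
    · exact h.not_isAttached_exit_of_adj_of_adj hZ hJ hS hu hq hAB hBA hv
    · exact h.symm.not_isAttached_exit_of_adj_of_adj hZ hJ hS hu hq.symm hBA hAB hv
  · have hM : M.card ≤ 1 := hcard {s(A.p, B.q)} (by simp) (fun h ↦ absurd h hBA)
      fun h ↦ absurd h hqq
    exact h.not_isAttached_exit_of_adj_p_q hZ hJ hS hu hq hAB
      (h.symm.walk.eq_left_of_card_le_one hM hvM ▸ hv)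
  · have hM : M.card ≤ 1 := hcard {s(B.p, A.q)} (fun h ↦ absurd h hAB) (by simp)
      fun h ↦ absurd h hqq
    exact h.symm.not_isAttached_exit_of_adj_p_q hZ hJ hS hu hq.symm hBA
      (h.walk.eq_left_of_card_le_one hM hvM ▸ hv)
  · have hM : M.card ≤ 0 := hcard ∅ (fun h ↦ absurd h hAB) (fun h ↦ absurd h hBA)
      fun h ↦ absurd h hqq
    exact Multiset.notMem_zero v (Multiset.card_eq_zero.1 (Nat.le_zero.1 hM) ▸ hvM)

end IsFork

theorem IsComp.exists_arm (hJ : IsComp H S Z J) {p z z' : W} {I : Multiset W}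
    (h : WalkOn H z z' I) (hup : H.Adj u p) (hpz : H.Adj p z) (hp : ¬ IsAttached H J p)
    (hq : IsAttached H J z → ∃ q ∉ Z, H.Adj p q) (hvI : v ∈ I) (hv : IsAttached H J v) :
    ∃ (A : Arm H Z J u) (M : Multiset W), A.p = p ∧ I = A.on + M ∧ WalkOn H A.exit z' M ∧
      v ∈ M := by
  by_cases hz : IsAttached H J z
  · obtain ⟨q, hqZ, hpq⟩ := hq hz
    refine ⟨⟨p, q, z, 0, {q}, hup, hpq, .inr ⟨rfl, rfl, hqZ, hpz, hz⟩, hp, ?_⟩, I, rfl,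
      (zero_add I).symm, h, hvI⟩
    rintro ⟨j, hj, hqj⟩
    exact hp ⟨q, hJ.mem_of_adj hj hqZ hqj.symm, hpq⟩
  · have hvz : v ≠ z := by rintro rfl; exact hz hv
    obtain ⟨-, rfl⟩ | ⟨c, M, hzc, hM, rfl⟩ := h.eq_or_exists_cons
    · exact absurd (Multiset.mem_singleton.1 hvI) hvz
    · exact ⟨⟨p, z, c, {z}, 0, hup, hpz, .inl ⟨rfl, rfl, hzc⟩, hp, hz⟩, M, rfl, rfl, hM,
        (Multiset.mem_add.1 hvI).resolve_left fun h ↦ hvz (Multiset.mem_singleton.1 h)⟩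

theorem IsMaxCyc.eq_of_isAttached [Finite W] (hH : H.CliqueFree 3) (hbd : SpiderBound H)
    (hZ : IsMaxCyc H S Z) (hJ : IsComp H S Z J) (hS : (vertexBoundary H S).Subsingleton)
    (huZ : u ∈ Z) (hvZ : v ∈ Z) (hu : IsAttached H J u) (hv : IsAttached H J v) : u = v := by
  have next {p₁ p₂ z₁ z₂ : W} {I : Multiset W} (hval : Z.val = {u} + {p₁} + {p₂} + I)
      (hup₂ : H.Adj u p₂) (hpz₁ : H.Adj p₁ z₁) (hpz₂ : H.Adj p₂ z₂) (hI : WalkOn H z₁ z₂ I) :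
      ¬ IsAttached H J p₁ ∧ (IsAttached H J z₁ → ∃ q ∉ Z, H.Adj p₁ q) := by
    have hw := (hI.concat hpz₂.symm).concat hup₂.symm
    refine ⟨fun hp ↦ ?_, fun hz ↦ hZ.exists_adj_of_walkOn hJ hw (by rw [hval]; abel) hz hu⟩
    have hw' : WalkOn H p₁ u (Z.val + 0) := by
      convert hw.cons hpz₁ using 1
      rw [hval]
      abel
    exact hZ.not_walkOn_add hJ hw' Multiset.nodup_zero (by simp) hp hu
  obtain ⟨p₁, p₂, z₁, z₂, I, hval, hup₁, hup₂, hpz₁, hpz₂, hI⟩ := hZ.isCyc.exists_split hH huZ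
  obtain ⟨hp₁, hq₁⟩ := next hval hup₂ hpz₁ hpz₂ hI
  obtain ⟨hp₂, hq₂⟩ := next (hval.trans (by abel)) hup₁ hpz₂ hpz₁ hI.reverse
  by_contra huv
  have hvI : v ∈ I := by
    have hvI : v ∈ Z.val := hvZ
    simp only [hval, Multiset.mem_add, Multiset.mem_singleton] at hvI
    obtain ((rfl | rfl) | rfl) | hvI := hvI
    exacts [absurd rfl huv, absurd hv hp₁, absurd hv hp₂, hvI]
  obtain ⟨A, M₁, rfl, rfl, hM₁, hvM₁⟩ := hJ.exists_arm hI hup₁ hpz₁ hp₁ hq₁ hvI hv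
  obtain ⟨B, M, rfl, rfl, hM, hvM⟩ := hJ.exists_arm hM₁.reverse hup₂ hpz₂ hp₂ hq₂ hvM₁ hv
  have hfork : IsFork A B M := ⟨hM.reverse, hval.trans (by abel)⟩
  exact hfork.not_isAttached_of_mem hH hbd hZ hJ hS hu hvM hv

end Forks

section Chains

variable {W : Type*} {H : SimpleGraph W} {X Y : Set H.edgeSet} {a b c z : W} {ε : H.edgeSet}

/-- The edges in `Y` can be arranged in a sequence that starts with an edge at `a`, ends with an
edge at `b`, and in which consecutive edges share an endpoint; for empty `Y` this means `a = b`. -/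
def Chained (H : SimpleGraph W) (a b : W) (Y : Set H.edgeSet) : Prop :=
  (Y = ∅ ∧ a = b) ∨ ∃ (ε δ : H.edgeSet) (m : Multiset H.edgeSet), WalkOn H.lineGraph ε δ m ∧
    m.Nodup ∧ {ζ | ζ ∈ m} = Y ∧ a ∈ (ε : Sym2 W) ∧ b ∈ (δ : Sym2 W)

namespace Chained

theorem empty (a : W) : Chained H a a ∅ := .inl ⟨rfl, rfl⟩

theorem singleton (ha : a ∈ (ε : Sym2 W)) (hb : b ∈ (ε : Sym2 W)) : Chained H a b {ε} :=
  .inr ⟨ε, ε, {ε}, .nil ε, Multiset.nodup_singleton ε, by ext; simp, ha, hb⟩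

theorem union (h : Chained H a b X) (h' : Chained H b c Y) (hXY : Disjoint X Y) :
    Chained H a c (X ∪ Y) := by
  obtain ⟨rfl, rfl⟩ | ⟨ε, δ, m, hw, hm, rfl, ha, hb⟩ := h
  · rwa [Set.empty_union]
  obtain ⟨rfl, rfl⟩ | ⟨ε', δ', m', hw', hm', rfl, hb', hc⟩ := h'
  · rw [Set.union_empty]
    exact .inr ⟨ε, δ, m, hw, hm, rfl, ha, hb⟩
  have hne : δ ≠ ε' := fun h ↦ Set.disjoint_left.1 hXY hw.right_mem (h ▸ hw'.left_mem)
  refine .inr ⟨ε, δ', m + m', hw.append (lineGraph_adj_iff_exists.2 ⟨hne, b, hb, hb'⟩) hw', ?_, ?_,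
    ha, hc⟩
  · exact Multiset.nodup_add.2 ⟨hm, hm', Multiset.disjoint_left.2 fun h ↦ Set.disjoint_left.1 hXY h⟩
  · ext; simp

theorem sUnion [Finite W] {𝒳 : Set (Set H.edgeSet)} (hd : 𝒳.PairwiseDisjoint id)
    (h : ∀ X ∈ 𝒳, Chained H z z X) : Chained H z z (⋃₀ 𝒳) := by
  induction 𝒳, 𝒳.toFinite using Set.Finite.induction_on with
  | empty => simpa using empty z
  | @insert X 𝒳 hX _ ih =>
    rw [Set.sUnion_insert]
    refine (h X (.inl rfl)).union (ih (hd.subset (Set.subset_insert X 𝒳)) fun Y hY ↦ h Y (.inr hY))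
      (Set.disjoint_sUnion_right.2 fun Y hY ↦ hd (.inl rfl) (.inr hY) ?_)
    rintro rfl
    exact hX hY

theorem star [Finite W] (h : ∀ ε ∈ Y, z ∈ (ε : Sym2 W)) : Chained H z z Y := by
  rw [← Set.biUnion_of_singleton Y, ← Set.sUnion_image]
  refine sUnion (Set.pairwiseDisjoint_range_singleton.subset (Set.image_subset_range _ Y)) ?_
  rintro _ ⟨ε, hε, rfl⟩
  exact singleton (h ε hε) (h ε hε)

/-- A path is turned into a chain by inserting, at each vertex `z` it passes, a chain of the
remaining edges assigned to `z`. -/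
theorem of_isPath {p : H.Walk a b} (hp : p.IsPath) {φ : H.edgeSet → W}
    (h : ∀ z ∈ p.support, Chained H z z {ε | ε ∈ Y ∧ ↑ε ∉ p.edges ∧ φ ε = z}) :
    Chained H a b {ε | ↑ε ∈ p.edges ∨ ε ∈ Y ∧ φ ε ∈ p.support} := by
  induction p generalizing Y with
  | nil => simpa using h
  | @cons a c b hac p ih =>
    obtain ⟨hp, hap⟩ := (Walk.cons_isPath_iff hac p).1 hp
    let ε₀ : H.edgeSet := ⟨s(a, c), hac⟩
    have hε₀ : (ε₀ : Sym2 W) ∉ p.edges := fun h ↦ hap (p.fst_mem_support_of_mem_edges h)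
    have hmem (ε : H.edgeSet) : ↑ε ∈ (Walk.cons hac p).edges ↔ ε = ε₀ ∨ ↑ε ∈ p.edges := by
      rw [Walk.edges_cons, List.mem_cons, Subtype.ext_iff]
    simp only [hmem, Walk.support_cons, List.mem_cons, forall_eq_or_imp, not_or] at h ⊢
    have hrest := ih hp (Y := Y \ {ε₀}) fun z hz ↦ by
      simpa only [Set.mem_sdiff, Set.mem_singleton_iff, and_assoc] using h.2 z hz
    have hε₀' : Chained H a c {ε₀} := singleton (Sym2.mem_mk_left a c) (Sym2.mem_mk_right a c)
    convert (h.1.union hε₀' ?_).union hrest ?_ using 1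
    · ext ε
      simp only [Set.mem_ofPred_eq, Set.mem_union, Set.mem_singleton_iff, Set.mem_sdiff]
      tauto
    · exact Set.disjoint_singleton_right.2 fun h ↦ h.2.1.1 rfl
    · rw [Set.disjoint_left]
      rintro ε (⟨-, ⟨-, hε⟩, rfl⟩ | rfl) (hε' | ⟨⟨-, hne⟩, hε'⟩)
      exacts [hε hε', hap hε', hε₀ hε', hne rfl]

end Chained

theorem IsCyc.chained {Z : Finset W} (hZ : IsCyc H Z) (hz : z ∈ Z) {φ : H.edgeSet → W}
    (hY : ∀ ε : H.edgeSet, (∀ x ∈ (ε : Sym2 W), x ∈ Z) → ε ∈ Y) (hφ : ∀ ε ∈ Y, φ ε ∈ Z)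
    (h : ∀ E : Set H.edgeSet, (∀ ε ∈ E, ∀ x ∈ (ε : Sym2 W), x ∈ Z) →
      ∀ z ∈ Z, Chained H z z {ε | ε ∈ Y ∧ ε ∉ E ∧ φ ε = z}) : Chained H z z Y := by
  obtain ⟨b, hbz, p, hpZ⟩ := hZ.exists_rotate hz
  have hp : p.IsPath := .mk' (Multiset.coe_nodup.1 (hpZ ▸ Z.nodup))
  have hmem {x : W} : x ∈ p.support ↔ x ∈ Z := by
    rw [← Finset.mem_val, ← hpZ, Multiset.mem_coe]
  let ε₁ : H.edgeSet := ⟨s(z, b), hbz.symm⟩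
  have hε₁ : (ε₁ : Sym2 W) ∉ p.edges := fun h ↦ by
    have hlen := hp.length_eq_one_of_mem_edges h
    have hcard : 3 ≤ Z.val.card := hZ.1
    rw [← hpZ, Multiset.coe_card, p.length_support] at hcard
    omega
  have hε₁Z : ∀ x ∈ (ε₁ : Sym2 W), x ∈ Z := fun x hx ↦ by
    obtain rfl | rfl := Sym2.mem_iff.1 hx
    exacts [hz, hmem.1 p.end_mem_support]
  have hpE (ε : H.edgeSet) (hε : ↑ε ∈ p.edges) : ∀ x ∈ (ε : Sym2 W), x ∈ Z := fun x hx ↦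
    hmem.1 (p.mem_support_of_mem_edges hε hx)
  have hpath := Chained.of_isPath hp (φ := φ) (Y := Y \ {ε₁}) fun z hz ↦ by
    convert h {ε | ε = ε₁ ∨ ↑ε ∈ p.edges} ?_ z (hmem.1 hz) using 1
    · ext ε
      simp only [Set.mem_ofPred_eq, Set.mem_sdiff, Set.mem_singleton_iff, not_or, and_assoc]
    · rintro ε (rfl | hε)
      exacts [hε₁Z, hpE ε hε]
  have hclose : Chained H b z {ε₁} := .singleton (Sym2.mem_mk_right z b) (Sym2.mem_mk_left z b)
  convert hpath.union hclose ?_ using 1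
  · ext ε
    simp only [Set.mem_ofPred_eq, Set.mem_union, Set.mem_singleton_iff, Set.mem_sdiff]
    refine ⟨fun hε ↦ ?_, ?_⟩
    · have := hmem.2 (hφ ε hε)
      tauto
    · rintro ((hε | hε) | rfl)
      exacts [hY ε (hpE ε hε), hε.1.1, hY ε₁ hε₁Z]
  · exact Set.disjoint_singleton_right.2 (not_or.2 ⟨hε₁, fun h ↦ h.1.2 rfl⟩)

end Chains

section Branches

variable {W : Type*} {H : SimpleGraph W} {S J J' : Set W} {Z : Finset W} {r x y z : W}
  {ε : H.edgeSet}

theorem exists_adj_eq_of_mem (hx : x ∈ (ε : Sym2 W)) : ∃ y, H.Adj x y ∧ (ε : Sym2 W) = s(x, y) := by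
  obtain ⟨y, hy⟩ := Sym2.mem_iff_exists.1 hx
  exact ⟨y, mem_edgeSet H |>.1 (hy ▸ ε.2), hy⟩

theorem exists_isComp (hZ : vertexBoundary H S ⊆ Z) (hxS : x ∈ S) (hx : x ∉ Z) (hy : y ∉ Z)
    (hxy : H.Adj x y) : ∃ J, IsComp H S Z J ∧ x ∈ J := by
  let K : SimpleGraph W := (H.induce (Z : Set W)ᶜ).spanningCoe
  have hK {v w : W} : K.Adj v w ↔ H.Adj v w ∧ v ∉ Z ∧ w ∉ Z := by simp [K]
  have hmem : ∀ v, K.Reachable x v → v ∈ S \ Z := by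
    rintro v ⟨p⟩
    by_contra hv
    obtain ⟨d, -, ⟨hS, hfst⟩, hd⟩ := p.exists_boundary_dart (S \ Z) ⟨hxS, hx⟩ hv
    obtain ⟨hadj, -, hsnd⟩ := hK.1 d.adj
    exact hfst (hZ ⟨hS, _, fun h ↦ hd ⟨h, hsnd⟩, hadj⟩)
  refine ⟨{v | K.Reachable x v}, ⟨hmem, fun v hv w hw hvw ↦ ?_, ?_, ?_⟩, .refl x⟩
  · exact hv.trans (hK.2 ⟨hvw, (hmem v hv).2, hw⟩).reachable
  · have hC := (K.connectedComponentMk x).connected_toSimpleGraph.preconnected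
    have hsupp : (K.connectedComponentMk x).supp = {v | K.Reachable x v} := by
      ext v
      exact ConnectedComponent.eq.trans ⟨.symm, .symm⟩
    rw [← hsupp]
    exact hC.mono (comap_monotone _ fun v w hvw ↦ (hK.1 hvw).1)
  · exact ⟨x, .refl x, y, (hK.2 ⟨hxy, hx, hy⟩).reachable, hxy.ne⟩

theorem IsComp.subset_of_mem (hJ : IsComp H S Z J) (hJ' : IsComp H S Z J') (hx : x ∈ J)
    (hx' : x ∈ J') : J ⊆ J' := by
  intro y hy
  by_contra hy'
  obtain ⟨p⟩ := hJ.preconnected ⟨x, hx⟩ ⟨y, hy⟩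
  obtain ⟨d, -, hfst, hsnd⟩ := p.exists_boundary_dart (Subtype.val ⁻¹' J') hx' hy'
  exact hsnd (hJ'.mem_of_adj hfst (hJ.subset d.snd.2).2 d.adj)

theorem IsComp.eq_of_mem_edgesAt (hJ : IsComp H S Z J) (hJ' : IsComp H S Z J')
    (hε : ε ∈ edgesAt H J) (hε' : ε ∈ edgesAt H J') : J = J' := by
  by_contra hne
  have hdisj : Disjoint J J' := Set.disjoint_left.2 fun x hx hx' ↦
    hne ((hJ.subset_of_mem hJ' hx hx').antisymm (hJ'.subset_of_mem hJ hx' hx))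
  obtain ⟨x, hx, y, hy, hxy, -⟩ := exists_adj_of_mem_edgesAt_inter hdisj ⟨hε, hε'⟩
  exact Set.disjoint_left.1 hdisj (hJ.mem_of_adj hx (hJ'.subset hy).2 hxy) hy

theorem compl_edgesAt_compl_nonempty (hx : x ∈ J) (hy : y ∈ J) (hxy : H.Adj x y) :
    (edgesAt H Jᶜ)ᶜ.Nonempty := by
  refine ⟨⟨s(x, y), hxy⟩, ?_⟩
  rintro ⟨v, hv, hvε⟩
  obtain rfl | rfl := Sym2.mem_iff.1 hvε
  exacts [hv hx, hv hy]

theorem IsComp.exists_isAttached (hJ : IsComp H S Z J) (hZ : IsCyc H Z)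
    (hH : EssentiallyTwoEdgeConnected H) : ∃ z ∈ Z, IsAttached H J z := by
  obtain ⟨-, a, b, hba, h⟩ := hZ
  obtain ⟨x, hx⟩ := hJ.nontrivial.nonempty
  obtain ⟨x', hx', hxx'⟩ := hJ.exists_adj hx
  have hout : (edgesAt H Jᶜᶜ)ᶜ.Nonempty := compl_edgesAt_compl_nonempty
    (fun hbJ ↦ (hJ.subset hbJ).2 h.right_mem) (fun haJ ↦ (hJ.subset haJ).2 h.left_mem) hba
  obtain ⟨ε, hε⟩ := (hH (compl_compl J ▸ hout) (compl_edgesAt_compl_nonempty hx hx' hxx')).nonempty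
  obtain ⟨y, hy, z, hz, hyz, -⟩ := exists_adj_of_mem_edgesAt_inter disjoint_compl_right hε
  exact ⟨z, by_contra fun hzZ ↦ hz (hJ.mem_of_adj hy hzZ hyz), y, hy, hyz.symm⟩

theorem IsComp.edgesAt_subset (hJ : IsComp H S Z J) (hZS : (Z : Set W) ⊆ S) :
    edgesAt H J ⊆ (edgesAt H Sᶜ)ᶜ := by
  rintro ε ⟨x, hx, hxε⟩ ⟨v, hv, hvε⟩
  obtain ⟨y, hxy, hε⟩ := exists_adj_eq_of_mem hxε
  obtain rfl | rfl := Sym2.mem_iff.1 (hε ▸ hvε)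
  · exact hv (hJ.subset hx).1
  · exact hv (by_contra fun hvS ↦ hvS (hJ.subset (hJ.mem_of_adj hx (fun h ↦ hvS (hZS h)) hxy)).1)

theorem IsCycIn.exists_mem_isAttached_or_mem (hZ : IsCycIn H S Z)
    (hH : EssentiallyTwoEdgeConnected H) (hε : ε ∉ edgesAt H Sᶜ) :
    ∃ z ∈ Z, (∀ J, IsComp H S Z J → ε ∈ edgesAt H J → IsAttached H J z) ∧
      ((∀ J, IsComp H S Z J → ε ∉ edgesAt H J) → z ∈ (ε : Sym2 W)) := by
  by_cases! h : ∃ J, IsComp H S Z J ∧ ε ∈ edgesAt H J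
  · obtain ⟨J, hJ, hεJ⟩ := h
    obtain ⟨z, hz, hJz⟩ := hJ.exists_isAttached hZ.isCyc hH
    exact ⟨z, hz, fun J' hJ' hε' ↦ hJ.eq_of_mem_edgesAt hJ' hεJ hε' ▸ hJz,
      fun h ↦ absurd hεJ (h J hJ)⟩
  obtain ⟨x, hx⟩ : ∃ x, x ∈ (ε : Sym2 W) := ⟨_, Sym2.out_fst_mem _⟩
  obtain ⟨y, hxy, hxyε⟩ := exists_adj_eq_of_mem hx
  suffices hZε : x ∈ Z ∨ y ∈ Z by
    rcases hZε with hz | hz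
    exacts [⟨x, hz, fun J hJ hε ↦ absurd hε (h J hJ), fun _ ↦ hx⟩,
      ⟨y, hz, fun J hJ hε ↦ absurd hε (h J hJ), fun _ ↦ hxyε ▸ Sym2.mem_mk_right x y⟩]
  by_contra! hno
  obtain ⟨J, hJ, hxJ⟩ := exists_isComp hZ.vertexBoundary_subset
    (not_not.1 fun hxS ↦ hε ⟨x, hxS, hx⟩) hno.1 hno.2 hxy
  exact h J hJ ⟨x, hxJ, hx⟩

theorem IsMaxCyc.chained [Finite W] (hH : H.CliqueFree 3) (hbd : SpiderBound H)
    (hE : EssentiallyTwoEdgeConnected H) (hZ : IsMaxCyc H S Z)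
    (hS : (vertexBoundary H S).Subsingleton) (hbr : ∀ J z, IsComp H S Z J → z ∈ Z →
      IsAttached H J z → Chained H z z (edgesAt H J)) (hz : z ∈ Z) :
    Chained H z z (edgesAt H Sᶜ)ᶜ := by
  have : Nonempty W := ⟨z⟩
  choose! φ hφZ hφJ hφmem using fun ε (hε : ε ∈ (edgesAt H Sᶜ)ᶜ) ↦
    hZ.exists_mem_isAttached_or_mem hE hε
  refine hZ.isCyc.chained hz (fun ε hε ⟨x, hxS, hx⟩ ↦ hxS (hZ.subset (hε x hx))) hφZ
    fun E hEZ z hz ↦ ?_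
  let 𝒥 : Set (Set W) := {J | IsComp H S Z J ∧ IsAttached H J z}
  have hbranches : Chained H z z (⋃₀ (edgesAt H '' 𝒥)) := by
    refine .sUnion ?_ ?_
    · rintro _ ⟨J, hJ, rfl⟩ _ ⟨J', hJ', rfl⟩ hne
      exact Set.disjoint_left.2 fun ε hε hε' ↦ hne (hJ.1.eq_of_mem_edgesAt hJ'.1 hε hε' ▸ rfl)
    · rintro _ ⟨J, hJ, rfl⟩
      exact hbr J z hJ.1 hz hJ.2
  have hstar : Chained H z z {ε | (ε ∈ (edgesAt H Sᶜ)ᶜ ∧ ε ∉ E ∧ φ ε = z) ∧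
      ∀ J, IsComp H S Z J → ε ∉ edgesAt H J} :=
    .star fun ε ⟨⟨hε, _, hεz⟩, h⟩ ↦ hεz ▸ hφmem ε hε h
  convert hbranches.union hstar ?_ using 1
  · ext ε
    refine ⟨fun hε ↦ ?_, ?_⟩
    · by_cases! h : ∃ J, IsComp H S Z J ∧ ε ∈ edgesAt H J
      · obtain ⟨J, hJ, hεJ⟩ := h
        exact .inl ⟨_, ⟨J, ⟨hJ, hε.2.2 ▸ hφJ ε hε.1 J hJ hεJ⟩, rfl⟩, hεJ⟩
      · exact .inr ⟨hε, h⟩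
    · rintro (⟨_, ⟨J, ⟨hJ, hJz⟩, rfl⟩, hεJ⟩ | hε)
      · have hεS := hJ.edgesAt_subset hZ.subset hεJ
        obtain ⟨x, hx, hxε⟩ := hεJ
        exact ⟨hεS, fun hεE ↦ (hJ.subset hx).2 (hEZ ε hεE x hxε),
          hZ.eq_of_isAttached hH hbd hJ hS (hφZ ε hεS) hz (hφJ ε hεS J hJ ⟨x, hx, hxε⟩) hJz⟩
      · exact hε.1
  · rw [Set.disjoint_left]
    rintro ε ⟨_, ⟨J, hJ, rfl⟩, hεJ⟩ hε
    exact hε.2 J hJ.1 hεJ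

theorem IsCycIn.exists_isMaxCyc [Finite W] (hZ : IsCycIn H S Z) : ∃ Z', IsMaxCyc H S Z' := by
  obtain ⟨Z', hZ', hmax⟩ := Set.exists_max_image {Z | IsCycIn H S Z}
    (fun Z ↦ (edgesAt H Z).ncard) (Set.toFinite _) ⟨Z, hZ⟩
  exact ⟨Z', hZ', fun Z'' h ↦ hmax Z'' h⟩

/-- `J` is the vertex set of a connected part of `H` that hangs on the rest of `H` at the vertex `r`
only. -/
structure IsBranch (H : SimpleGraph W) (r : W) (J : Set W) : Prop where
  notMem : r ∉ J
  preconnected : (H.induce J).Preconnected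
  eq_of_adj : ∀ ⦃x⦄, x ∈ J → ∀ ⦃y⦄, y ∉ J → H.Adj x y → y = r
  exists_adj : ∃ b ∉ J, H.Adj r b

theorem IsComp.isBranch [Finite W] (hH : H.CliqueFree 3) (hbd : SpiderBound H)
    (hZ : IsMaxCyc H S Z) (hS : (vertexBoundary H S).Subsingleton) (hJ : IsComp H S Z J)
    (hz : z ∈ Z) (hJz : IsAttached H J z) : IsBranch H z J where
  notMem hzJ := (hJ.subset hzJ).2 hz
  preconnected := hJ.preconnected
  eq_of_adj x hx _ hy hxy := hZ.eq_of_isAttached hH hbd hJ hS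
    (by_contra fun hyZ ↦ hy (hJ.mem_of_adj hx hyZ hxy)) hz ⟨x, hx, hxy.symm⟩ hJz
  exists_adj :=
    have ⟨b, hbz, h⟩ := hZ.isCyc.exists_rotate hz
    ⟨b, fun hb ↦ (hJ.subset hb).2 h.right_mem, hbz.symm⟩

namespace IsBranch

theorem vertexBoundary_insert (hJ : IsBranch H r J) : vertexBoundary H (insert r J) = {r} := by
  ext x
  refine ⟨fun ⟨hx, y, hy, hxy⟩ ↦ hx.resolve_right fun hxJ ↦ ?_, ?_⟩
  · rw [Set.mem_insert_iff, not_or] at hy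
    exact hy.1 (hJ.eq_of_adj hxJ hy.2 hxy)
  · rintro rfl
    obtain ⟨b, hb, hrb⟩ := hJ.exists_adj
    exact ⟨.inl rfl, b, not_or.2 ⟨hrb.ne', hb⟩, hrb⟩

theorem edgesAt_eq (hJ : IsBranch H r J) : edgesAt H J = (edgesAt H (insert r J)ᶜ)ᶜ := by
  ext ε
  constructor
  · rintro ⟨x, hx, hxε⟩ ⟨v, hv, hvε⟩
    obtain ⟨y, hxy, hε⟩ := exists_adj_eq_of_mem hxε
    obtain rfl | rfl := Sym2.mem_iff.1 (hε ▸ hvε)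
    · exact hv (.inr hx)
    · exact hv (or_iff_not_imp_right.2 fun hy ↦ hJ.eq_of_adj hx hy hxy)
  · intro hε
    have hmem : ∀ v ∈ (ε : Sym2 W), v = r ∨ v ∈ J := fun v hv ↦
      not_not.1 fun h ↦ hε ⟨v, h, hv⟩
    obtain ⟨x, hx⟩ : ∃ x, x ∈ (ε : Sym2 W) := ⟨_, Sym2.out_fst_mem _⟩
    obtain ⟨y, hxy, hxyε⟩ := exists_adj_eq_of_mem hx
    have hy : y ∈ (ε : Sym2 W) := hxyε ▸ Sym2.mem_mk_right x y
    obtain rfl | hxJ := hmem x hx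
    · exact ⟨y, (hmem y hy).resolve_left hxy.ne', hy⟩
    · exact ⟨x, hxJ, hx⟩

theorem exists_adj_adj (hJ : IsBranch H r J) (hE : EssentiallyTwoEdgeConnected H) (hx : x ∈ J)
    (hy : y ∈ J) (hxy : H.Adj x y) : ∃ j ∈ J, ∃ j' ∈ J, j ≠ j' ∧ H.Adj r j ∧ H.Adj r j' := by
  obtain ⟨b, hb, hrb⟩ := hJ.exists_adj
  have hout : (edgesAt H Jᶜᶜ)ᶜ.Nonempty := compl_edgesAt_compl_nonempty hJ.notMem hb hrb
  rw [compl_compl] at hout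
  have hcut {δ : H.edgeSet} (hδ : δ ∈ edgesAt H J ∩ edgesAt H Jᶜ) :
      ∃ j ∈ J, H.Adj r j ∧ (δ : Sym2 W) = s(j, r) := by
    obtain ⟨j, hj, t, ht, hjt, hδ⟩ := exists_adj_of_mem_edgesAt_inter disjoint_compl_right hδ
    obtain rfl := hJ.eq_of_adj hj ht hjt
    exact ⟨j, hj, hjt.symm, hδ⟩
  obtain ⟨δ, hδ, δ', hδ', hne⟩ := hE hout (compl_edgesAt_compl_nonempty hx hy hxy)
  obtain ⟨j, hj, hrj, hδj⟩ := hcut hδ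
  obtain ⟨j', hj', hrj', hδj'⟩ := hcut hδ'
  exact ⟨j, hj, j', hj', fun h ↦ hne (Subtype.ext (by rw [hδj, hδj', h])), hrj, hrj'⟩

theorem exists_isCycIn (hJ : IsBranch H r J) (hE : EssentiallyTwoEdgeConnected H) (hx : x ∈ J)
    (hy : y ∈ J) (hxy : H.Adj x y) : ∃ Z, IsCycIn H (insert r J) Z := by
  obtain ⟨j, hj, j', hj', hne, hrj, hrj'⟩ := hJ.exists_adj_adj hE hx hy hxy
  obtain ⟨m, h, hm, hmJ⟩ := exists_walkOn_of_induce_preconnected hJ.preconnected hj hj'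
  have hcard : 2 ≤ m.card := by
    by_contra! hlt
    exact hne (h.eq_left_of_card_le_one (Nat.lt_succ_iff.1 hlt) h.right_mem).symm
  have hnodup : ({r} + m).Nodup := Multiset.nodup_cons.2 ⟨fun hr ↦ hJ.notMem (hmJ r hr), hm⟩
  refine ⟨⟨{r} + m, hnodup⟩, ⟨?_, r, j', hrj'.symm, h.cons hrj⟩, fun z hz ↦ ?_, ?_⟩
  · rw [Finset.card_mk, Multiset.card_add, Multiset.card_singleton]
    omega
  · exact (Multiset.mem_cons.1 hz).imp_right (hmJ z)
  · rw [hJ.vertexBoundary_insert, Set.singleton_subset_iff]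
    exact Multiset.mem_cons_self r m

/-- By induction on the branch: the components left by a maximal cycle through `r` are smaller
branches. -/
theorem chained [Finite W] (hH : H.CliqueFree 3) (hbd : SpiderBound H)
    (hE : EssentiallyTwoEdgeConnected H) (hJ : IsBranch H r J) : Chained H r r (edgesAt H J) := by
  induction hn : J.ncard using Nat.strong_induction_on generalizing r J with | _ n ih
  subst hn
  by_cases! hedge : ∃ x ∈ J, ∃ y ∈ J, H.Adj x y
  swap
  · refine .star fun ε ⟨x, hx, hxε⟩ ↦ ?_
    obtain ⟨y, hxy, hε⟩ := exists_adj_eq_of_mem hxε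
    rw [hε, ← hJ.eq_of_adj hx (fun hy ↦ hedge x hx y hy hxy) hxy]
    exact Sym2.mem_mk_right x y
  obtain ⟨x, hx, y, hy, hxy⟩ := hedge
  obtain ⟨Z₀, hZ₀⟩ := hJ.exists_isCycIn hE hx hy hxy
  obtain ⟨Z, hZ⟩ := hZ₀.exists_isMaxCyc
  have hS : (vertexBoundary H (insert r J)).Subsingleton := by
    rw [hJ.vertexBoundary_insert]
    exact Set.subsingleton_singleton
  have hr : r ∈ Z := hZ.vertexBoundary_subset (hJ.vertexBoundary_insert ▸ Set.mem_singleton r)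
  rw [hJ.edgesAt_eq]
  refine hZ.chained hH hbd hE hS (fun J' z hJ' hz hJz ↦ ?_) hr
  refine ih _ (Set.ncard_lt_ncard ?_) (hJ'.isBranch hH hbd hZ hS hz hJz) rfl
  obtain ⟨t, ht, htr⟩ := Finset.exists_mem_ne (Nat.lt_of_succ_lt hZ.isCyc.1) r
  refine Set.ssubset_iff_exists.2 ⟨fun v hv ↦ ?_, t, (hZ.subset ht).resolve_left htr,
    fun h ↦ (hJ'.subset h).2 ht⟩
  exact (hJ'.subset hv).1.resolve_left fun h ↦ (hJ'.subset hv).2 (h ▸ hr)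

end IsBranch

end Branches

section Hamiltonicity

variable {V W : Type*} {L : SimpleGraph V} {L' H : SimpleGraph W} {a x z : W}

theorem exists_isCyc_of_not_isAcyclic (hH : ¬ H.IsAcyclic) : ∃ Z, IsCyc H Z := by
  simp only [IsAcyclic, not_forall, not_not] at hH
  obtain ⟨v, c, hc⟩ := hH
  refine ⟨⟨c.tail.support, Multiset.coe_nodup.2 hc.isPath_tail.support_nodup⟩, ?_, _, v,
    c.adj_snd hc.not_nil, c.tail, rfl⟩
  rw [Finset.card_mk, Multiset.coe_card, Walk.length_support, c.length_tail_add_one hc.not_nil]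
  exact hc.three_le_length

namespace EssentiallyTwoEdgeConnected

theorem mem_of_forall_adj (hE : EssentiallyTwoEdgeConnected H)
    (ha : ∀ x, H.Adj a x → ∀ y, H.Adj x y → y = a) (hax : H.Adj a x) (ε : H.edgeSet) :
    a ∈ (ε : Sym2 W) := by
  let J : Set W := {v | v = a ∨ H.Adj a v}
  have hJ : ∀ v ∈ J, ∀ w, H.Adj v w → w ∈ J := by
    rintro v (rfl | hv) w hvw
    exacts [.inr hvw, .inl (ha v hv w hvw)]
  by_contra hε
  have hεJ : ε ∉ edgesAt H J := by
    rintro ⟨v, rfl | hv, hvε⟩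
    · exact hε hvε
    · obtain ⟨w, hvw, hvwε⟩ := exists_adj_eq_of_mem hvε
      exact hε (hvwε ▸ ha v hv w hvw ▸ Sym2.mem_mk_right v w)
  obtain ⟨δ, hδ⟩ := (hE ⟨ε, hεJ⟩ (compl_edgesAt_compl_nonempty (.inl rfl) (.inr hax) hax)).nonempty
  obtain ⟨v, hv, w, hw, hvw, -⟩ := exists_adj_of_mem_edgesAt_inter disjoint_compl_right hδ
  exact hw (hJ v hv w hvw)

theorem eq_or_eq_of_isBridge (hE : EssentiallyTwoEdgeConnected H) (hax : H.IsBridge s(a, x)) {y : W}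
    (haz : H.Adj a z) (hxy : H.Adj x y) : z = x ∨ y = a := by
  rw [isBridge_iff] at hax
  by_contra! hne
  let J : Set W := {v | (H.deleteEdges {s(a, x)}).Reachable a v}
  have hJ {v w : W} (hv : v ∈ J) (hvw : H.Adj v w) (hne : s(v, w) ≠ s(a, x)) : w ∈ J :=
    hv.trans (deleteEdges_adj.2 ⟨hvw, hne⟩).reachable
  have hzJ : z ∈ J := hJ (.refl a) haz fun h ↦ hne.1 (Sym2.congr_right.1 h)
  have hyJ : y ∉ J := fun hy ↦ hax <| hJ hy hxy.symm fun h ↦ hne.2 (Sym2.congr_left.1 h)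
  have hout : (edgesAt H Jᶜᶜ)ᶜ.Nonempty := compl_edgesAt_compl_nonempty hax hyJ hxy
  rw [compl_compl] at hout
  have hcut {δ : H.edgeSet} (hδ : δ ∈ edgesAt H J ∩ edgesAt H Jᶜ) : (δ : Sym2 W) = s(a, x) := by
    obtain ⟨v, hv, w, hw, hvw, hδ⟩ := exists_adj_of_mem_edgesAt_inter disjoint_compl_right hδ
    exact hδ.trans (not_not.1 fun hne ↦ hw (hJ hv hvw hne))
  obtain ⟨δ, hδ, δ', hδ', hδne⟩ := hE hout (compl_edgesAt_compl_nonempty (.refl a) hzJ haz)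
  exact hδne (Subtype.ext ((hcut hδ).trans (hcut hδ').symm))

theorem exists_forall_mem_of_isAcyclic (hE : EssentiallyTwoEdgeConnected H) (hH : H.IsAcyclic)
    (hax : H.Adj a x) : ∃ v, ∀ ε : H.edgeSet, v ∈ (ε : Sym2 W) := by
  rw [isAcyclic_iff_forall_adj_isBridge] at hH
  by_cases! hx : ∀ y, H.Adj x y → y = a
  · refine ⟨a, hE.mem_of_forall_adj (fun v hav w hvw ↦ ?_) hax⟩
    by_contra hwa
    obtain rfl := (hE.eq_or_eq_of_isBridge (hH hav) hax hvw).resolve_right hwa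
    exact hwa (hx w hvw)
  · obtain ⟨y, hxy, hya⟩ := hx
    refine ⟨x, hE.mem_of_forall_adj (fun v hxv w hvw ↦ ?_) hxy⟩
    by_contra hwx
    obtain rfl := (hE.eq_or_eq_of_isBridge (hH hxv) hax.symm hvw).resolve_right hwx
    exact hwx ((hE.eq_or_eq_of_isBridge (hH hax) hvw hxy).resolve_right hya)

theorem exists_chained_univ [Finite W] (hE : EssentiallyTwoEdgeConnected H) (hH : H.CliqueFree 3)
    (hbd : SpiderBound H) (hax : H.Adj a x) : ∃ z, Chained H z z Set.univ := by
  by_cases hac : H.IsAcyclic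
  · obtain ⟨z, hz⟩ := hE.exists_forall_mem_of_isAcyclic hac hax
    exact ⟨z, .star fun ε _ ↦ hz ε⟩
  obtain ⟨Z₀, hZ₀⟩ := exists_isCyc_of_not_isAcyclic hac
  have hbdry : vertexBoundary H Set.univ = ∅ := by simp [vertexBoundary]
  have hS : (vertexBoundary H Set.univ).Subsingleton := hbdry ▸ Set.subsingleton_empty
  have hZ₀ : IsCycIn H Set.univ Z₀ := ⟨hZ₀, Set.subset_univ _, hbdry ▸ Set.empty_subset _⟩
  obtain ⟨Z, hZ⟩ := hZ₀.exists_isMaxCyc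
  obtain ⟨z, hz⟩ := Finset.card_pos.1 (Nat.zero_lt_of_lt hZ.isCyc.1)
  have key := hZ.chained hH hbd hE hS
    (fun J z hJ hz hJz ↦ (hJ.isBranch hH hbd hZ hS hz hJz).chained hH hbd hE) hz
  simp only [Set.compl_univ, edgesAt, Set.mem_empty_iff_false, false_and, exists_false] at key
  exact ⟨z, by simpa using key⟩

end EssentiallyTwoEdgeConnected

theorem Chained.hasSpanningCycle [Fintype H.edgeSet] (h3 : 3 ≤ Fintype.card H.edgeSet)
    (h : Chained H z z Set.univ) : HasSpanningCycle H.lineGraph := by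
  obtain ⟨hempty, -⟩ | ⟨ε, δ, m, hw, hm, huniv, hε, hδ⟩ := h
  · have : IsEmpty H.edgeSet := Set.univ_eq_empty_iff.1 hempty
    simp at h3
  have hmuniv : m = Finset.univ.val := (Multiset.Nodup.ext hm Finset.univ.nodup).2 fun ζ ↦
    ⟨fun _ ↦ Finset.mem_univ ζ, fun _ ↦ huniv.ge (Set.mem_univ ζ)⟩
  refine hw.hasSpanningCycle hmuniv (lineGraph_adj_iff_exists.2 ⟨?_, z, hδ, hε⟩)
  rintro rfl
  rw [← Finset.card_univ, ← Finset.card_val, ← hmuniv] at h3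
  obtain ⟨-, rfl⟩ | ⟨c, m', -, hw', rfl⟩ := hw.eq_or_exists_cons
  · simp at h3
  · exact (Multiset.nodup_cons.1 hm).1 hw'.right_mem

theorem WalkOn.map (φ : L →g L') {a b : V} {m : Multiset V} (h : WalkOn L a b m) :
    WalkOn L' (φ a) (φ b) (m.map φ) := by
  obtain ⟨p, rfl⟩ := h
  exact ⟨p.map φ, by simp⟩

theorem HasSpanningCycle.of_iso [Fintype V] [Fintype W] (φ : L ≃g L') (h : HasSpanningCycle L) :
    HasSpanningCycle L' := by
  obtain ⟨a, b, hab, h⟩ := h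
  refine ⟨φ a, φ b, φ.map_adj_iff.2 hab, ?_⟩
  rw [← Multiset.map_univ_val_equiv φ.toEquiv]
  exact h.map φ.toHom

end Hamiltonicity

theorem netEndsSatisfy_of_le_ncard_neighborSet {V : Type*} [Fintype V] {G : SimpleGraph V}
    (hnet : ∀ f : Fin 6 → V, IsInducedCopy netGraph G f → ∀ i : Fin 6, 3 ≤ (i : ℕ) →
      ((Fintype.card V : ℝ) - 2) / 3 ≤ ((G.neighborSet (f i)).ncard : ℝ)) :
    NetEndsSatisfy G fun v ↦ Fintype.card V + 1 ≤ 3 * (closedNbhd G v).ncard := by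
  refine netEndsSatisfy_of_isInducedCopy fun f hf i hi ↦ ?_
  have hcard : (closedNbhd G (f i)).ncard = (G.neighborSet (f i)).ncard + 1 :=
    Set.ncard_insert_of_notMem G.notMem_neighborSet_self (Set.toFinite _)
  have hdeg := hnet f hf i hi
  rw [div_le_iff₀ three_pos, sub_le_iff_le_add] at hdeg
  have hdeg : Fintype.card V ≤ (G.neighborSet (f i)).ncard * 3 + 2 := by exact_mod_cast hdeg
  omega

theorem TwoConnected.hasSpanningCycle_of_iso_lineGraph {V W : Type*} [Fintype V] [Finite W]
    {L : SimpleGraph V} {H : SimpleGraph W} (hL : TwoConnected L) (hH : H.CliqueFree 3)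
    (hbd : SpiderBound H) (φ : L ≃g H.lineGraph) : HasSpanningCycle L := by
  obtain ⟨v⟩ := hL.connected.nonempty
  obtain ⟨x, hax, -⟩ := exists_adj_eq_of_mem (Sym2.out_fst_mem (φ v : Sym2 W))
  obtain ⟨z, hz⟩ := (hL.essentiallyTwoEdgeConnected φ).exists_chained_univ hH hbd hax
  let _ : Fintype H.edgeSet := .ofEquiv V φ.toEquiv
  have hcard : Fintype.card V = Fintype.card H.edgeSet := Fintype.card_congr φ.toEquiv
  exact (hz.hasSpanningCycle (hcard ▸ hL.1)).of_iso φ.symm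

/-- Broersma's conjecture: a 2-connected claw-free graph in which every endvertex of
each induced net has degree at least `(n-2)/3` is hamiltonian. -/
theorem broersma_conjecture {V : Type*} [Fintype V] [DecidableEq V] (G : SimpleGraph V)
    (h2conn : TwoConnected G) (hclaw : ClawFree G)
    (hnet : ∀ f : Fin 6 → V, IsInducedCopy netGraph G f →
      ∀ i : Fin 6, 3 ≤ (i : ℕ) →
        ((Fintype.card V : ℝ) - 2) / 3 ≤ (G.neighborSet (f i)).ncard) :
    G.IsHamiltonian := by
  by_contra hno
  obtain ⟨L, hGL, hL, hLno, hC, hD⟩ :=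
    exists_diamondFree_closure h2conn.1 hclaw fun h ↦ hno (h.isHamiltonian h2conn.1)
  have hL2 : TwoConnected L := h2conn.mono hGL
  have : Nontrivial V := Fintype.one_lt_card_iff_nontrivial.1 (by have := h2conn.1; omega)
  obtain ⟨H, hH, ⟨φ⟩⟩ :=
    hL.exists_lineGraph_iso hD hL2.connected.preconnected.exists_adj_of_nontrivial
  have hbd : SpiderBound H := spiderBound_of_lineGraph_iso hclaw hGL hL hD hC
    (netEndsSatisfy_of_le_ncard_neighborSet hnet) hH φ
  exact hLno (hL2.hasSpanningCycle_of_iso_lineGraph hH hbd φ)
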